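/- arXiv:1710.07131 — 4 statements merged into one kernel-verified Lean document; each statement's English description precedes it below -/
import Mathlib

section
/- Let m ≥ 2, ρ ∈ (0,1), a_1,…,a_m ∈ ℝ and let p = (p_1,…,p_m) be a probability vector with every p_j > 0. Let μ_ρ be the homogeneous self-similar measure of the IFS {f_j(x) = ρx + a_j}_{j=1}^m, and assume the IFS satisfies the strong separation condition. Then for every φ ∈ C²(ℝ) with φ''(t) > 0 for all t, and every g ∈ C¹(ℝ), there exist constants γ > 0 and C > 0 such that |∫ exp(2πiξφ(t)) g(t) dμ_ρ(t)| ≤ C|ξ|^{−γ} for all ξ with |ξ| ≥ 1. -/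
open MeasureTheory Real

lemma aux_supp (m : ℕ) (ρ : ℝ) (hρ0 : 0 < ρ) (hρ1 : ρ < 1)
    (a : Fin m → ℝ) (p : Fin m → ℝ) (hp : ∀ j, 0 < p j) (hp1 : ∑ j, p j = 1)
    (μ : Measure ℝ) [IsProbabilityMeasure μ]
    (hμ : μ = ∑ j : Fin m, ENNReal.ofReal (p j) • Measure.map (fun x => ρ * x + a j) μ)
    (K : Set ℝ) (hKc : IsCompact K) (hKne : K.Nonempty)
    (hKattr : K = ⋃ j : Fin m, (fun x => ρ * x + a j) '' K) : μ Kᶜ = 0 := by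
  have hmem : ∀ j, ∀ x ∈ K, ρ * x + a j ∈ K := by
    intro j x hx
    rw [hKattr]
    exact Set.mem_iUnion.2 ⟨j, x, hx, rfl⟩
  have hdist : ∀ j x, Metric.infDist (ρ * x + a j) K ≤ ρ * Metric.infDist x K := by
    intro j x
    obtain ⟨y, hy, hxy⟩ := hKc.exists_infDist_eq_dist hKne x
    rw [hxy]
    refine (Metric.infDist_le_dist_of_mem (hmem j y hy)).trans ?_
    rw [Real.dist_eq, Real.dist_eq, ← abs_of_pos hρ0, ← abs_mul, abs_of_pos hρ0]
    apply le_of_eq; congr 1; ring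
  have hmeas : ∀ r : ℝ, MeasurableSet {x | r < Metric.infDist x K} := fun r =>
    measurableSet_lt measurable_const (Metric.continuous_infDist_pt K).measurable
  have hsum : ∑ j, ENNReal.ofReal (p j) = 1 := by
    rw [← ENNReal.ofReal_sum_of_nonneg (fun j _ => (hp j).le), hp1, ENNReal.ofReal_one]
  have step : ∀ r : ℝ, μ {x | r < Metric.infDist x K} ≤ μ {x | r / ρ < Metric.infDist x K} := by
    intro r
    conv_lhs => rw [hμ]
    rw [Measure.finsetSum_apply]
    calc _ ≤ ∑ j, ENNReal.ofReal (p j) * μ {x | r / ρ < Metric.infDist x K} := by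
          refine Finset.sum_le_sum fun j _ => ?_
          rw [Measure.smul_apply, smul_eq_mul, Measure.map_apply (by fun_prop) (hmeas r)]
          gcongr
          intro x hx
          simp only [Set.mem_preimage, Set.mem_ofPred_eq] at hx ⊢
          rw [div_lt_iff₀ hρ0]
          linarith [hdist j x]
      _ = _ := by rw [← Finset.sum_mul, hsum, one_mul]
  have iter : ∀ (n : ℕ) (r : ℝ), μ {x | r < Metric.infDist x K} ≤ μ {x | r / ρ ^ n < Metric.infDist x K} := by
    intro n
    induction n with
    | zero => intro r; simp
    | succ n ih =>
      intro r
      refine (ih r).trans ((step _).trans (le_of_eq ?_))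
      rw [div_div, pow_succ]
  have zero : ∀ r : ℝ, 0 < r → μ {x | r < Metric.infDist x K} = 0 := by
    intro r hr
    have ht : Filter.Tendsto (fun n : ℕ => μ {x | (n:ℝ) < Metric.infDist x K}) Filter.atTop (nhds (μ (⋂ n : ℕ, {x | (n:ℝ) < Metric.infDist x K}))) := by
      apply tendsto_measure_iInter_atTop
      · exact fun n => (hmeas _).nullMeasurableSet
      · intro i j hij x hx
        simp only [Set.mem_ofPred_eq] at hx ⊢
        have : (i:ℝ) ≤ j := by exact_mod_cast hij
        linarith
      · exact ⟨0, measure_ne_top _ _⟩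
    have he : (⋂ n : ℕ, {x | (n:ℝ) < Metric.infDist x K}) = ∅ := by
      ext x
      simp only [Set.mem_iInter, Set.mem_ofPred_eq, Set.mem_empty_iff_false, iff_false, not_forall, not_lt]
      exact exists_nat_ge _
    rw [he, measure_empty] at ht
    refine le_antisymm (ge_of_tendsto' ht fun n => ?_) zero_le
    obtain ⟨k, hk⟩ := pow_unbounded_of_one_lt (n / r) (one_lt_inv₀ hρ0 |>.2 hρ1)
    refine (iter k r).trans (measure_mono ?_)
    intro x hx
    simp only [Set.mem_ofPred_eq] at hx ⊢
    refine lt_trans ?_ hx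
    rw [div_lt_iff₀ hr, inv_pow] at hk
    rw [div_eq_mul_inv]; linarith
  have hc : Kᶜ ⊆ ⋃ n : ℕ, {x | 1 / ((n:ℝ) + 1) < Metric.infDist x K} := by
    intro x hx
    have : 0 < Metric.infDist x K := (hKc.isClosed.notMem_iff_infDist_pos hKne).1 hx
    obtain ⟨n, hn⟩ := exists_nat_one_div_lt this
    exact Set.mem_iUnion.2 ⟨n, hn⟩
  refine measure_mono_null hc (measure_iUnion_null fun n => zero _ (by positivity))

lemma aux_integrable (μ : Measure ℝ) [IsProbabilityMeasure μ] (K : Set ℝ) (hKc : IsCompact K)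
    (h0 : μ Kᶜ = 0) (F : ℝ → ℂ) (hF : Continuous F) : Integrable F μ := by
  have h1 : μ.restrict K = μ := Measure.restrict_eq_self_of_ae_mem (by
    rw [ae_iff]; exact h0)
  rw [← h1]
  exact hF.continuousOn.integrableOn_compact hKc

lemma aux_selfsim (m : ℕ) (ρ : ℝ) 
    (a : Fin m → ℝ) (p : Fin m → ℝ) (hp : ∀ j, 0 < p j)
    (μ : Measure ℝ) [IsProbabilityMeasure μ]
    (hμ : μ = ∑ j : Fin m, ENNReal.ofReal (p j) • Measure.map (fun x => ρ * x + a j) μ)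
    (K : Set ℝ) (hKc : IsCompact K) (h0 : μ Kᶜ = 0) (F : ℝ → ℂ) (hF : Continuous F) :
    ∫ t, F t ∂μ = ∑ j, (p j : ℂ) * ∫ t, F (ρ * t + a j) ∂μ := by
  conv_lhs => rw [hμ]
  rw [integral_finsetSum_measure]
  · refine Finset.sum_congr rfl fun j _ => ?_
    rw [integral_smul_measure, integral_map (by fun_prop) hF.aestronglyMeasurable, ENNReal.toReal_ofReal (hp j).le]
    simp
  · intro j _
    apply Integrable.smul_measure _ ENNReal.ofReal_ne_top
    rw [integrable_map_measure hF.aestronglyMeasurable (by fun_prop)]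
    exact aux_integrable μ K hKc h0 _ (hF.comp (by fun_prop))

lemma aux_gap (m : ℕ) (ρ : ℝ) (a : Fin m → ℝ) (K : Set ℝ) (hKc : IsCompact K) 
    (hsep : ∀ j j' : Fin m, j ≠ j' →
      Disjoint ((fun x => ρ * x + a j) '' K) ((fun x => ρ * x + a j') '' K)) :
    ∃ δ > (0:ℝ), ∀ j j' : Fin m, j ≠ j' → ∀ x ∈ K, ∀ y ∈ K,
      δ < |(ρ * x + a j) - (ρ * y + a j')| := by
  have h : ∀ q : Fin m × Fin m, ∃ δ > (0:ℝ), q.1 ≠ q.2 → ∀ x ∈ K, ∀ y ∈ K,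
      δ < |(ρ * x + a q.1) - (ρ * y + a q.2)| := by
    intro q
    by_cases hq : q.1 = q.2
    · exact ⟨1, one_pos, fun h => absurd hq h⟩
    · obtain ⟨r, hr, h⟩ := Metric.exists_pos_forall_lt_edist
        (hKc.image (f := fun x => ρ * x + a q.1) (by fun_prop))
        (hKc.image (f := fun x => ρ * x + a q.2) (by fun_prop)).isClosed (hsep _ _ hq)
      refine ⟨r, hr, fun _ x hx y hy => ?_⟩
      have := h _ ⟨x, hx, rfl⟩ _ ⟨y, hy, rfl⟩
      rw [edist_dist, Real.dist_eq] at this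
      rw [← ENNReal.ofReal_coe_nnreal] at this
      replace this := (ENNReal.ofReal_lt_ofReal_iff_of_nonneg r.2).1 this
      exact this
  choose δ hδ h using h
  by_cases hne : (Finset.univ : Finset (Fin m × Fin m)).Nonempty
  · obtain ⟨q, _, hq⟩ := Finset.exists_min_image Finset.univ δ hne
    exact ⟨δ q, hδ q, fun j j' hj x hx y hy => (hq (j, j') (Finset.mem_univ _)).trans_lt
      (h (j, j') hj x hx y hy)⟩
  · exact ⟨1, one_pos, fun j j' => absurd ⟨(j, j'), Finset.mem_univ _⟩ hne⟩

lemma aux_discrete (m : ℕ) (ρ : ℝ) (hρ0 : 0 < ρ) (hρ1 : ρ < 1)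
    (a : Fin m → ℝ) (p : Fin m → ℝ) (hp : ∀ j, 0 < p j) (hp1 : ∑ j, p j = 1)
    (μ : Measure ℝ) [IsProbabilityMeasure μ]
    (hμ : μ = ∑ j : Fin m, ENNReal.ofReal (p j) • Measure.map (fun x => ρ * x + a j) μ)
    (K : Set ℝ) (hKc : IsCompact K) (h0 : μ Kᶜ = 0)
    (hmem : ∀ j, ∀ x ∈ K, ρ * x + a j ∈ K) (x0 : ℝ) (hx0 : x0 ∈ K)
    (δ : ℝ) (hδ : 0 < δ) (hgap : ∀ j j' : Fin m, j ≠ j' → ∀ x ∈ K, ∀ y ∈ K,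
      δ < |(ρ * x + a j) - (ρ * y + a j')|)
    (β : ℝ) (hβ0 : 0 < β) (hβ : ∀ j, p j ≤ β) (n : ℕ) :
    ∃ (ι : Type) (_ : Fintype ι) (q y : ι → ℝ), (∀ i, 0 ≤ q i) ∧ ∑ i, q i = 1 ∧ (∀ i, y i ∈ K) ∧
      (∀ k ≤ n, ∀ u : ℝ, ∑ i, (if y i ∈ Set.Icc u (u + δ * ρ ^ k) then q i else 0) ≤ β ^ k) ∧
      (∀ F : ℝ → ℂ, Continuous F →
        ∫ t, F t ∂μ = ∑ i, (q i : ℂ) * ∫ x, F (y i + ρ ^ n * (x - x0)) ∂μ) := by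
  induction n with
  | zero =>
    refine ⟨Unit, inferInstance, fun _ => 1, fun _ => x0, by simp, by simp, by simpa using hx0, ?_, ?_⟩
    · intro k hk u
      obtain rfl : k = 0 := by omega
      simp only [Finset.univ_unique, Finset.sum_singleton, pow_zero]
      split_ifs <;> norm_num
    · intro F hF
      simp
  | succ n ih =>
    obtain ⟨ι, _, q, y, hq0, hq1, hyK, hfr, hint⟩ := ih
    refine ⟨Fin m × ι, inferInstance, fun z => p z.1 * q z.2, fun z => ρ * y z.2 + a z.1, ?_, ?_, ?_, ?_, ?_⟩
    · exact fun z => mul_nonneg (hp _).le (hq0 _)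
    · rw [Fintype.sum_prod_type]
      simp only [← Finset.mul_sum, hq1, mul_one, hp1]
    · exact fun z => hmem _ _ (hyK _)
    · intro k hk u
      rw [Fintype.sum_prod_type]
      rcases k with _ | k
      · calc _ ≤ ∑ j, ∑ i, p j * q i := by
              refine Finset.sum_le_sum fun j _ => Finset.sum_le_sum fun i _ => ?_
              have := mul_nonneg (hp j).le (hq0 i)
              split_ifs <;> simp [this]
          _ = 1 := by simp only [← Finset.mul_sum, hq1, mul_one, hp1]
          _ = _ := by simp
      · by_cases hex : ∃ j0 i0, ρ * y i0 + a j0 ∈ Set.Icc u (u + δ * ρ ^ (k+1))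
        · obtain ⟨j0, i0, h00⟩ := hex
          have hpow : ρ ^ (k+1) ≤ 1 := pow_le_one₀ hρ0.le hρ1.le
          have hne : ∀ j, j ≠ j0 → ∀ i, ρ * y i + a j ∉ Set.Icc u (u + δ * ρ ^ (k+1)) := by
            intro j hj i hi
            have := hgap j j0 hj _ (hyK i) _ (hyK i0)
            have h2 : |(ρ * y i + a j) - (ρ * y i0 + a j0)| ≤ δ * ρ ^ (k+1) := by
              rw [abs_le]; constructor <;> linarith [hi.1, hi.2, h00.1, h00.2]
            nlinarith
          rw [Finset.sum_eq_single j0]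
          · have := hfr k (by omega) ((u - a j0) / ρ)
            calc _ = p j0 * ∑ i, (if y i ∈ Set.Icc ((u - a j0) / ρ) ((u - a j0) / ρ + δ * ρ ^ k) then q i else 0) := by
                  rw [Finset.mul_sum]
                  refine Finset.sum_congr rfl fun i _ => ?_
                  have : (ρ * y i + a j0 ∈ Set.Icc u (u + δ * ρ ^ (k+1))) ↔ y i ∈ Set.Icc ((u - a j0) / ρ) ((u - a j0) / ρ + δ * ρ ^ k) := by
                    have e : (u - a j0) / ρ + δ * ρ ^ k = (u - a j0 + δ * ρ ^ (k+1)) / ρ := by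
                      field_simp; ring
                    rw [Set.mem_Icc, Set.mem_Icc, e, div_le_iff₀ hρ0, le_div_iff₀ hρ0]
                    constructor <;> rintro ⟨h1, h2⟩ <;> constructor <;> linarith
                  simp only [this, mul_ite, mul_zero]
              _ ≤ β * β ^ k := by
                  apply mul_le_mul (hβ _) this _ hβ0.le
                  exact Finset.sum_nonneg fun i _ => by split_ifs <;> simp [hq0]
              _ = _ := by ring
          · intro j _ hj
            exact Finset.sum_eq_zero fun i _ => by rw [if_neg (hne j hj i)]
          · simp
        · push Not at hex
          rw [Finset.sum_eq_zero fun j _ => Finset.sum_eq_zero fun i _ => by rw [if_neg (hex j i)]]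
          positivity
    · intro F hF
      rw [aux_selfsim m ρ a p hp μ hμ K hKc h0 F hF, Fintype.sum_prod_type]
      refine Finset.sum_congr rfl fun j _ => ?_
      rw [hint (fun t => F (ρ * t + a j)) (hF.comp (by fun_prop)), Finset.mul_sum]
      refine Finset.sum_congr rfl fun i _ => ?_
      push_cast
      rw [mul_assoc]
      congr 3
      ext x
      congr 1
      ring

lemma aux_P (m : ℕ) (a : Fin m → ℝ) (p : Fin m → ℝ) (hp : ∀ j, 0 < p j) (hp1 : ∑ j, p j = 1)
    (j0 j1 : Fin m) (hj : j0 ≠ j1) (τ : ℝ) (hτ : 0 < τ) :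
    ∃ κ : ℝ, 0 ≤ κ ∧ κ < 1 ∧ ∀ η : ℝ,
      τ ≤ |(a j1 - a j0) * η - round ((a j1 - a j0) * η)| →
      ‖∑ j, (p j : ℂ) * Complex.exp (2 * π * Complex.I * η * a j)‖ ≤ κ := by
  by_cases hτ2 : 1 / 2 < τ
  · refine ⟨0, le_rfl, one_pos, fun η h => ?_⟩
    have := abs_sub_round ((a j1 - a j0) * η)
    linarith
  push Not at hτ2
  set s := min (p j0) (p j1) with hs
  have hs0 : 0 < s := lt_min (hp _) (hp _)
  have hcos : Real.cos (π * τ) < 1 := by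
    rw [← Real.cos_zero]
    apply Real.cos_lt_cos_of_nonneg_of_le_pi le_rfl
    · nlinarith [Real.pi_pos]
    · have := Real.pi_pos; positivity
  refine ⟨max 0 (1 - 2 * s + s * (2 * Real.cos (π * τ))), le_max_left _ _, ?_, fun η h => ?_⟩
  · apply max_lt one_pos; nlinarith
  apply le_max_of_le_right
  set θ := (a j1 - a j0) * η with hθ
  set e : Fin m → ℂ := fun j => Complex.exp (2 * π * Complex.I * η * a j) with he
  have hen : ∀ j, ‖e j‖ = 1 := by
    intro j
    have : e j = Complex.exp (((2 * π * η * a j : ℝ) : ℂ) * Complex.I) := by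
      simp only [he]; congr 1; push_cast; ring
    rw [this, Complex.norm_exp_ofReal_mul_I]
  set c : Fin m → ℝ := fun j => (if j = j0 then s else 0) + (if j = j1 then s else 0) with hc
  have hcp : ∀ j, 0 ≤ p j - c j := by
    intro j
    simp only [hc]
    have h0 : s ≤ p j0 := min_le_left _ _
    have h1 : s ≤ p j1 := min_le_right _ _
    by_cases h2 : j = j0
    · subst h2; simp [hj, h0]
    · by_cases h3 : j = j1
      · subst h3; simp [h2, h1]
      · simp [h2, h3, (hp j).le]
  have hcs : ∑ j, c j = 2 * s := by
    simp only [hc, Finset.sum_add_distrib, Finset.sum_ite_eq', Finset.mem_univ, if_true]; ring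
  have hsplit : ∑ j, (p j : ℂ) * e j = ∑ j, ((p j - c j : ℝ) : ℂ) * e j + s * (e j0 + e j1) := by
    have : ∑ j, (c j : ℂ) * e j = s * (e j0 + e j1) := by
      simp only [hc, Complex.ofReal_add, add_mul, Finset.sum_add_distrib]
      have : ∀ k, ∑ j, ((if j = k then s else 0 : ℝ) : ℂ) * e j = s * e k := by
        intro k
        rw [Finset.sum_eq_single k] <;> simp +contextual
      rw [this, this]; ring
    rw [← this, ← Finset.sum_add_distrib]
    refine Finset.sum_congr rfl fun j _ => ?_
    push_cast; ring
  have hpair : ‖e j0 + e j1‖ ≤ 2 * Real.cos (π * τ) := by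
    have h1 : e j0 + e j1 = Complex.exp (((π * η * (a j0 + a j1) : ℝ) : ℂ) * Complex.I) *
        ((2 * Real.cos (π * θ) : ℝ) : ℂ) := by
      push_cast
      rw [Complex.two_cos, mul_add, ← Complex.exp_add, ← Complex.exp_add, add_comm]
      simp only [he, hθ]
      congr 2 <;> push_cast <;> ring
    rw [h1, norm_mul, Complex.norm_exp_ofReal_mul_I, one_mul, Complex.norm_real, Real.norm_eq_abs,
      abs_mul, abs_two]
    have h2 : |Real.cos (π * θ)| = |Real.cos (π * |θ - round θ|)| := by
      have : Real.cos (π * |θ - round θ|) = Real.cos (π * θ - round θ * π) := by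
        rcases abs_choice (θ - round θ) with h | h <;> rw [h]
        · congr 1; ring
        · rw [← Real.cos_neg]; congr 1; ring
      rw [this, Real.cos_sub_int_mul_pi, abs_mul]
      simp
    have h3 := abs_sub_round θ
    have h4 : 0 ≤ Real.cos (π * |θ - round θ|) := by
      apply Real.cos_nonneg_of_neg_pi_div_two_le_of_le
      · have := Real.pi_pos; have := mul_nonneg this.le (abs_nonneg (θ - round θ)); linarith
      · nlinarith [Real.pi_pos]
    rw [h2, abs_of_nonneg h4]
    have : Real.cos (π * |θ - round θ|) ≤ Real.cos (π * τ) := by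
      apply Real.cos_le_cos_of_nonneg_of_le_pi
      · have := Real.pi_pos; positivity
      · nlinarith [Real.pi_pos]
      · exact mul_le_mul_of_nonneg_left h Real.pi_pos.le
    linarith
  change ‖∑ j, (p j : ℂ) * e j‖ ≤ _
  rw [hsplit]
  refine (norm_add_le _ _).trans (add_le_add ?_ ?_)
  · refine (norm_sum_le _ _).trans ?_
    have : ∀ j ∈ Finset.univ, ‖((p j - c j : ℝ) : ℂ) * e j‖ = p j - c j := by
      intro j _
      rw [norm_mul, hen, mul_one, Complex.norm_real, Real.norm_of_nonneg (hcp j)]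
    rw [Finset.sum_congr rfl this, Finset.sum_sub_distrib, hp1, hcs]
  · rw [norm_mul, Complex.norm_real, Real.norm_of_nonneg hs0.le]
    exact mul_le_mul_of_nonneg_left hpair hs0.le

lemma aux_count (c r : ℝ) (hr : 0 ≤ r) (v : ENNReal) :
    ∑' n : ℤ, (if |(n:ℝ) - c| ≤ r then v else 0) ≤ ENNReal.ofReal (2 * r + 1) * v := by
  rw [tsum_eq_sum (s := Finset.Icc ⌈c - r⌉ ⌊c + r⌋)]
  · refine (Finset.sum_le_card_nsmul _ _ v fun n _ => ?_).trans ?_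
    · split_ifs <;> simp
    · rw [nsmul_eq_mul, Int.card_Icc]
      gcongr
      rw [← ENNReal.ofReal_natCast]
      apply ENNReal.ofReal_le_ofReal
      have : (((⌊c + r⌋ + 1 - ⌈c - r⌉).toNat : ℤ) : ℝ) ≤ 2 * r + 1 := by
        rw [Int.toNat_eq_max]
        push_cast
        apply max_le
        · linarith [Int.floor_le (c + r), Int.le_ceil (c - r)]
        · linarith
      exact_mod_cast this
  · intro n hn
    rw [if_neg]
    intro h
    apply hn
    rw [abs_le] at h
    rw [Finset.mem_Icc, Int.ceil_le, Int.le_floor]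
    constructor <;> linarith [h.1, h.2]

lemma aux_W (ρ : ℝ) (hρ0 : 0 < ρ) (d : ℝ) (κ : ℝ) (hκ0 : 0 ≤ κ)
    (H : ℝ → ℝ) (hH0 : ∀ x, 0 ≤ H x) (hH1 : ∀ x, H x ≤ 1) (hH : ∀ x, H x ≤ H (ρ * x))
    (hHκ : ∀ x, round (d * x) ≠ round (ρ⁻¹ * round (d * (ρ * x))) → H x ≤ κ * H (ρ * x))
    (Q : ℕ) (R0 : ℝ) (hR0 : 0 ≤ R0) :
    ∃ W : ℕ → ℤ → ENNReal,
      (∀ N x, |d * (ρ ^ N * x)| ≤ R0 → ENNReal.ofReal (H x ^ Q) ≤ W N (round (d * x))) ∧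
      (∀ N, ∑' n, W N n ≤ ENNReal.ofReal ((2 * (R0 + 1) + 1) * (1 + (2 * (ρ⁻¹ + 1) + 1) * κ ^ Q) ^ N)) := by
  have hρi : 0 < ρ⁻¹ := inv_pos.2 hρ0
  let Kr : ℤ → ℤ → ENNReal := fun n n' => (if n = round (ρ⁻¹ * n') then 1 else 0) +
    (if |(n:ℝ) - ρ⁻¹ * n'| ≤ ρ⁻¹ + 1 then ENNReal.ofReal (κ ^ Q) else 0)
  have hKr : ∀ n', ∑' n, Kr n n' ≤ ENNReal.ofReal (1 + (2 * (ρ⁻¹ + 1) + 1) * κ ^ Q) := by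
    intro n'
    simp only [Kr]
    rw [ENNReal.tsum_add, tsum_ite_eq, ENNReal.ofReal_add (by positivity) (by positivity),
      ENNReal.ofReal_one, ENNReal.ofReal_mul (by positivity)]
    gcongr
    exact aux_count _ _ (by positivity) _
  let W : ℕ → ℤ → ENNReal := fun N => Nat.rec (fun n => if |(n:ℝ) - 0| ≤ R0 + 1 then 1 else 0)
    (fun _ w n => ∑' n', Kr n n' * w n') N
  have hW0 : ∀ n, W 0 n = if |(n:ℝ) - 0| ≤ R0 + 1 then 1 else 0 := fun n => rfl
  have hWs : ∀ N n, W (N+1) n = ∑' n', Kr n n' * W N n' := fun N n => rfl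
  refine ⟨W, ?_, ?_⟩
  · intro N
    induction N with
    | zero =>
      intro x hx
      rw [hW0, if_pos]
      · rw [← ENNReal.ofReal_one]
        exact ENNReal.ofReal_le_ofReal (pow_le_one₀ (hH0 x) (hH1 x))
      · have := abs_sub_round (d * x)
        rw [pow_zero, one_mul] at hx
        rw [abs_le] at *
        constructor <;> linarith [hx.1, hx.2, this.1, this.2]
    | succ N ih =>
      intro x hx
      have h1 := ih (ρ * x) (by rw [← mul_assoc (ρ ^ N), ← pow_succ]; exact hx)
      rw [hWs]
      refine le_trans ?_ (ENNReal.le_tsum (round (d * (ρ * x))))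
      refine le_trans ?_ (mul_le_mul_right h1 _)
      by_cases hc : round (d * x) = round (ρ⁻¹ * round (d * (ρ * x)))
      · calc _ ≤ 1 * ENNReal.ofReal (H (ρ * x) ^ Q) := by
              rw [one_mul]
              exact ENNReal.ofReal_le_ofReal (pow_le_pow_left₀ (hH0 _) (hH x) _)
          _ ≤ _ := by
              gcongr
              simp only [Kr, if_pos hc]
              exact le_self_add
      · calc _ ≤ ENNReal.ofReal (κ ^ Q) * ENNReal.ofReal (H (ρ * x) ^ Q) := by
              rw [← ENNReal.ofReal_mul (by positivity), ← mul_pow]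
              exact ENNReal.ofReal_le_ofReal (pow_le_pow_left₀ (hH0 _) (hHκ x hc) _)
          _ ≤ _ := by
              gcongr
              simp only [Kr]
              rw [if_neg hc, zero_add, if_pos]
              · have e0 := abs_sub_round (d * x)
                have e1 := abs_sub_round (d * (ρ * x))
                have : (round (d * x) : ℝ) - ρ⁻¹ * round (d * (ρ * x)) =
                    ρ⁻¹ * (d * (ρ * x) - round (d * (ρ * x))) - (d * x - round (d * x)) := by
                  field_simp; ring
                rw [this]
                refine (abs_sub _ _).trans ?_
                rw [abs_mul, abs_of_pos hρi]
                nlinarith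
  · intro N
    induction N with
    | zero =>
      simp only [hW0]
      refine (aux_count 0 (R0 + 1) (by positivity) 1).trans ?_
      simp
    | succ N ih =>
      simp only [hWs]
      rw [ENNReal.tsum_comm]
      simp only [ENNReal.tsum_mul_right]
      calc _ ≤ ∑' n', ENNReal.ofReal (1 + (2 * (ρ⁻¹ + 1) + 1) * κ ^ Q) * W N n' := by
            exact ENNReal.tsum_le_tsum fun n' => mul_le_mul_left (hKr n') _
        _ ≤ _ := by
            rw [ENNReal.tsum_mul_left, pow_succ, ← mul_assoc, mul_comm, ENNReal.ofReal_mul (by positivity)]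
            gcongr

lemma aux_sum (ρ : ℝ) (hρ0 : 0 < ρ) (d : ℝ) (κ : ℝ) (hκ0 : 0 ≤ κ)
    (H : ℝ → ℝ) (hH0 : ∀ x, 0 ≤ H x) (hH1 : ∀ x, H x ≤ 1) (hH : ∀ x, H x ≤ H (ρ * x))
    (hHκ : ∀ x, round (d * x) ≠ round (ρ⁻¹ * round (d * (ρ * x))) → H x ≤ κ * H (ρ * x))
    (Q : ℕ) (R0 : ℝ) (hR0 : 0 ≤ R0) (N : ℕ)
    {ι : Type} [Fintype ι] (q x : ι → ℝ) (hq : ∀ i, 0 ≤ q i) (α : ℝ) (hα : 0 ≤ α)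
    (hqα : ∀ n : ℤ, ∑ i, (if round (d * x i) = n then q i else 0) ≤ α)
    (hx : ∀ i, |d * (ρ ^ N * x i)| ≤ R0) :
    ∑ i, q i * H (x i) ^ Q ≤
      α * ((2 * (R0 + 1) + 1) * (1 + (2 * (ρ⁻¹ + 1) + 1) * κ ^ Q) ^ N) := by
  obtain ⟨W, hW1, hW2⟩ := aux_W ρ hρ0 d κ hκ0 H hH0 hH1 hH hHκ Q R0 hR0
  have hρi : 0 < ρ⁻¹ := inv_pos.2 hρ0
  rw [← ENNReal.ofReal_le_ofReal_iff (by positivity), ENNReal.ofReal_mul hα,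
    ENNReal.ofReal_sum_of_nonneg (fun i _ => mul_nonneg (hq i) (pow_nonneg (hH0 _) _))]
  calc _ ≤ ∑ i, ENNReal.ofReal (q i) * W N (round (d * x i)) := by
        refine Finset.sum_le_sum fun i _ => ?_
        rw [ENNReal.ofReal_mul (hq i)]
        gcongr
        exact hW1 N _ (hx i)
    _ = ∑ i, ∑' n : ℤ, (if round (d * x i) = n then ENNReal.ofReal (q i) else 0) * W N n := by
        refine Finset.sum_congr rfl fun i _ => ?_
        rw [tsum_eq_single (round (d * x i))]
        · simp
        · intro n hn
          simp [hn.symm]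
    _ = ∑' n : ℤ, (∑ i, (if round (d * x i) = n then ENNReal.ofReal (q i) else 0)) * W N n := by
        rw [← Summable.tsum_finsetSum (fun i _ => ENNReal.summable)]
        simp only [Finset.sum_mul]
    _ ≤ ∑' n : ℤ, ENNReal.ofReal α * W N n := by
        refine ENNReal.tsum_le_tsum fun n => ?_
        gcongr
        refine le_trans (le_of_eq ?_) (ENNReal.ofReal_le_ofReal (hqα n))
        rw [ENNReal.ofReal_sum_of_nonneg]
        · refine Finset.sum_congr rfl fun i _ => ?_
          split_ifs <;> simp
        · intro i _
          split_ifs <;> simp [hq]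
    _ ≤ _ := by
        rw [ENNReal.tsum_mul_left]
        gcongr
        exact hW2 N

lemma aux_taylor (φ : ℝ → ℝ) (hφ : ContDiff ℝ 2 φ) (hφ'' : ∀ t, 0 < deriv (deriv φ) t) (R : ℝ) (hR : 0 < R) :
    ∃ M > (0:ℝ), ∃ c0 > (0:ℝ), ∃ L > (0:ℝ), ∀ y ∈ Set.Icc (-R) R, ∀ t ∈ Set.Icc (-R) R,
      |φ t - φ y - deriv φ y * (t - y)| ≤ M * (t - y) ^ 2 ∧
      c0 * |t - y| ≤ |deriv φ t - deriv φ y| ∧ |deriv φ y| ≤ L := by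
  have h1 : ContDiff ℝ 1 (deriv φ) := by
    have : ContDiff ℝ (1 + 1) φ := by simpa [one_add_one_eq_two] using hφ
    exact (contDiff_succ_iff_deriv.1 this).2.2
  have hc2 : Continuous (deriv (deriv φ)) := h1.continuous_deriv le_rfl
  have hd1 : Differentiable ℝ (deriv φ) := h1.differentiable one_ne_zero
  have hd0 : Differentiable ℝ φ := hφ.differentiable two_ne_zero
  have hne : (Set.Icc (-R) R).Nonempty := ⟨0, by constructor <;> linarith⟩
  obtain ⟨u, hu, hum⟩ := isCompact_Icc.exists_isMinOn hne hc2.continuousOn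
  obtain ⟨v, hv, hvm⟩ := isCompact_Icc.exists_isMaxOn hne hc2.continuousOn
  obtain ⟨L, hL⟩ := isCompact_Icc.exists_bound_of_continuousOn (s := Set.Icc (-R) R) h1.continuous.continuousOn
  refine ⟨_, hφ'' v, _, hφ'' u, |L| + 1, by positivity, ?_⟩
  have hlip : ∀ y ∈ Set.Icc (-R) R, ∀ t ∈ Set.Icc (-R) R, |deriv φ t - deriv φ y| ≤ deriv (deriv φ) v * |t - y| := by
    intro y hy t ht
    have := Convex.norm_image_sub_le_of_norm_deriv_le (f := deriv φ) (C := deriv (deriv φ) v) (s := Set.Icc (-R) R)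
      (fun x _ => hd1 x) (fun x hx => by rw [Real.norm_of_nonneg (hφ'' x).le]; exact hvm hx)
      (convex_Icc _ _) hy ht
    simpa using this
  have hlow : ∀ y ∈ Set.Icc (-R) R, ∀ t ∈ Set.Icc (-R) R, y ≤ t → deriv (deriv φ) u * (t - y) ≤ deriv φ t - deriv φ y := by
    intro y hy t ht hyt
    apply Convex.mul_sub_le_image_sub_of_le_deriv (convex_Icc (-R) R) hd1.continuous.continuousOn
      hd1.differentiableOn _ y hy t ht hyt
    intro x hx
    exact hum (interior_subset hx)
  intro y hy t ht
  refine ⟨?_, ?_, ?_⟩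
  · have hsub : Set.uIcc y t ⊆ Set.Icc (-R) R := Set.uIcc_subset_Icc hy ht
    have := Convex.norm_image_sub_le_of_norm_deriv_le (f := fun s => φ s - deriv φ y * s) (C := deriv (deriv φ) v * |t - y|)
      (s := Set.uIcc y t) (x := y) (y := t)
      (fun x _ => by fun_prop) (fun x hx => by
        have : deriv (fun s => φ s - deriv φ y * s) x = deriv φ x - deriv φ y := by
          rw [deriv_fun_sub (hd0 x) (by fun_prop)]
          simp
        rw [this]
        refine (hlip y hy x (hsub hx)).trans ?_
        exact mul_le_mul_of_nonneg_left (Set.abs_sub_left_of_mem_uIcc hx) (hφ'' v).le)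
      (convex_uIcc _ _) Set.left_mem_uIcc Set.right_mem_uIcc
    rw [Real.norm_eq_abs, Real.norm_eq_abs] at this
    calc _ = |φ t - deriv φ y * t - (φ y - deriv φ y * y)| := by congr 1; ring
      _ ≤ _ := this
      _ = _ := by rw [mul_assoc, ← sq, sq_abs]
  · rcases le_total y t with h | h
    · rw [abs_of_nonneg (sub_nonneg.2 h)]
      exact (hlow y hy t ht h).trans (le_abs_self _)
    · rw [abs_sub_comm, abs_sub_comm (deriv φ t), abs_of_nonneg (sub_nonneg.2 h)]
      exact (hlow t ht y hy h).trans (le_abs_self _)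
  · have := hL y hy
    rw [Real.norm_eq_abs] at this
    linarith [le_abs_self L]

lemma aux_amp (g : ℝ → ℝ) (hg : ContDiff ℝ 1 g) (R : ℝ) :
    ∃ G0 > (0:ℝ), ∃ G1 > (0:ℝ), ∀ y ∈ Set.Icc (-R) R, ∀ t ∈ Set.Icc (-R) R,
      |g t| ≤ G0 ∧ |g t - g y| ≤ G1 * |t - y| := by
  obtain ⟨L, hL⟩ := isCompact_Icc.exists_bound_of_continuousOn (s := Set.Icc (-R) R) hg.continuous.continuousOn
  obtain ⟨L1, hL1⟩ := isCompact_Icc.exists_bound_of_continuousOn (s := Set.Icc (-R) R)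
    (hg.continuous_deriv le_rfl).continuousOn
  refine ⟨|L| + 1, by positivity, |L1| + 1, by positivity, fun y hy t ht => ⟨?_, ?_⟩⟩
  · have := hL t ht
    rw [Real.norm_eq_abs] at this
    linarith [le_abs_self L]
  · have := Convex.norm_image_sub_le_of_norm_deriv_le (f := g) (C := |L1| + 1) (s := Set.Icc (-R) R)
      (fun x _ => hg.differentiable one_ne_zero x) (fun x hx => by
        have := hL1 x hx
        linarith [le_abs_self L1])
      (convex_Icc _ _) hy ht
    simpa using this

lemma aux_exp_sub (A B : ℝ) : ‖Complex.exp (A * Complex.I) - Complex.exp (B * Complex.I)‖ ≤ |A - B| := by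
  have : Complex.exp (A * Complex.I) - Complex.exp (B * Complex.I) =
      Complex.exp (B * Complex.I) * (Complex.exp (Complex.I * ((A - B : ℝ) : ℂ)) - 1) := by
    rw [mul_sub, ← Complex.exp_add, mul_one]
    congr 2
    push_cast; ring
  rw [this, norm_mul, Complex.norm_exp_ofReal_mul_I, one_mul]
  exact Real.norm_exp_I_mul_ofReal_sub_one_le

lemma aux_local (μ : Measure ℝ) [IsProbabilityMeasure μ] (K : Set ℝ) (hKc : IsCompact K)
    (h0 : μ Kᶜ = 0) (R : ℝ) (hR : 0 < R) (hKR : K ⊆ Set.Icc (-R) R) (x0 : ℝ) (hx0 : x0 ∈ K)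
    (φ : ℝ → ℝ) (hφ : Continuous φ) (g : ℝ → ℝ) (hg : Continuous g)
    (M G0 G1 : ℝ) (hM0 : 0 ≤ M) (hG00 : 0 ≤ G0) (hG10 : 0 ≤ G1)
    (hM : ∀ y ∈ Set.Icc (-(3 * R)) (3 * R), ∀ t ∈ Set.Icc (-(3 * R)) (3 * R),
      |φ t - φ y - deriv φ y * (t - y)| ≤ M * (t - y) ^ 2)
    (hG : ∀ y ∈ Set.Icc (-(3 * R)) (3 * R), ∀ t ∈ Set.Icc (-(3 * R)) (3 * R),
      |g t| ≤ G0 ∧ |g t - g y| ≤ G1 * |t - y|)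
    (r : ℝ) (hr0 : 0 ≤ r) (hr1 : r ≤ 1) (ξ : ℝ) (y : ℝ) (hy : y ∈ K) :
    ‖∫ x, Complex.exp (2 * π * Complex.I * ξ * φ (y + r * (x - x0))) * (g (y + r * (x - x0)) : ℂ) ∂μ‖
      ≤ 8 * π * |ξ| * M * R ^ 2 * G0 * r ^ 2 + 2 * R * G1 * r +
        G0 * ‖∫ x, Complex.exp (2 * π * Complex.I * ((ξ * r * deriv φ y : ℝ) : ℂ) * x) ∂μ‖ := by
  set F : ℝ → ℂ := fun x => Complex.exp (2 * π * Complex.I * ξ * φ (y + r * (x - x0))) * (g (y + r * (x - x0)) : ℂ) with hF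
  set D : ℝ → ℂ := fun x => (g y * Complex.exp ((2 * π * ξ * (φ y - deriv φ y * r * x0) : ℝ) * Complex.I)) *
    Complex.exp (2 * π * Complex.I * ((ξ * r * deriv φ y : ℝ) : ℂ) * x) with hD
  have hFc : Continuous F := by fun_prop
  have hDc : Continuous D := by fun_prop
  have hFi := aux_integrable μ K hKc h0 F hFc
  have hDi := aux_integrable μ K hKc h0 D hDc
  have hmem3 : ∀ z ∈ K, z ∈ Set.Icc (-(3*R)) (3*R) := fun z hz =>
    ⟨by linarith [(hKR hz).1], by linarith [(hKR hz).2]⟩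
  have hpt : ∀ x ∈ K, ‖F x - D x‖ ≤ 8 * π * |ξ| * M * R ^ 2 * G0 * r ^ 2 + 2 * R * G1 * r := by
    intro x hx
    have hb : |x - x0| ≤ 2 * R := by
      rw [abs_le]
      constructor <;> linarith [(hKR hx).1, (hKR hx).2, (hKR hx0).1, (hKR hx0).2]
    have hb2 : |r * (x - x0)| ≤ r * (2 * R) := by
      rw [abs_mul, abs_of_nonneg hr0]; gcongr
    set t := y + r * (x - x0) with ht
    have hty : t - y = r * (x - x0) := by rw [ht]; ring
    have htJ : t ∈ Set.Icc (-(3*R)) (3*R) := by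
      have h3 : r * (2 * R) ≤ 2 * R := by nlinarith
      have := abs_le.1 (hb2.trans h3)
      constructor <;> linarith [(hKR hy).1, (hKR hy).2]
    have hT := hM y (hmem3 y hy) t htJ
    have hg1 := hG y (hmem3 y hy) t htJ
    have hg2 := hG y (hmem3 y hy) y (hmem3 y hy)
    set A : ℝ := 2 * π * ξ * φ t with hA
    set B : ℝ := 2 * π * ξ * (φ y + deriv φ y * (t - y)) with hB
    have eF : F x = Complex.exp (A * Complex.I) * g t := by
      simp only [hF, ← ht, hA]
      congr 2; push_cast; ring
    have eD : D x = Complex.exp (B * Complex.I) * g y := by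
      simp only [hD, hB, hty]
      rw [mul_assoc, ← Complex.exp_add, mul_comm]
      congr 2; push_cast; ring
    have e1 : F x - D x = (Complex.exp (A * Complex.I) - Complex.exp (B * Complex.I)) * g t +
        Complex.exp (B * Complex.I) * ((g t - g y : ℝ) : ℂ) := by
      rw [eF, eD]; push_cast; ring
    have hsq : (t - y) ^ 2 ≤ (r * (2 * R)) ^ 2 := by
      rw [hty]; exact sq_le_sq' (abs_le.1 hb2).1 (abs_le.1 hb2).2
    rw [e1]
    refine (norm_add_le _ _).trans (add_le_add ?_ ?_)
    · rw [norm_mul, Complex.norm_real, Real.norm_eq_abs]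
      calc _ ≤ |A - B| * G0 := by
            gcongr
            · exact aux_exp_sub A B
            · exact hg1.1
        _ = 2 * π * |ξ| * |φ t - φ y - deriv φ y * (t - y)| * G0 := by
            have : A - B = 2 * π * ξ * (φ t - φ y - deriv φ y * (t - y)) := by rw [hA, hB]; ring
            rw [this, abs_mul, abs_mul, abs_of_pos (by have := Real.pi_pos; positivity : 0 < 2 * π)]
        _ ≤ 2 * π * |ξ| * (M * (r * (2 * R)) ^ 2) * G0 := by
            have := Real.pi_pos
            gcongr
            exact hT.trans (by gcongr)
        _ = _ := by ring
    · rw [norm_mul, Complex.norm_exp_ofReal_mul_I, one_mul, Complex.norm_real, Real.norm_eq_abs]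
      refine hg1.2.trans ?_
      rw [hty]
      calc _ ≤ G1 * (r * (2 * R)) := by gcongr
        _ = _ := by ring
  have hae : ∀ᵐ x ∂μ, ‖F x - D x‖ ≤ 8 * π * |ξ| * M * R ^ 2 * G0 * r ^ 2 + 2 * R * G1 * r := by
    have : ∀ᵐ x ∂μ, x ∈ K := by rw [ae_iff]; exact h0
    filter_upwards [this] with x hx using hpt x hx
  have h1 : ∫ x, F x ∂μ = ∫ x, (F x - D x) ∂μ + ∫ x, D x ∂μ := by
    rw [integral_sub hFi hDi]; ring
  rw [h1]
  refine (norm_add_le _ _).trans (add_le_add ?_ ?_)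
  · have := norm_integral_le_of_norm_le_const hae
    simpa using this
  · rw [hD, integral_const_mul, norm_mul, norm_mul, Complex.norm_exp_ofReal_mul_I, mul_one,
      Complex.norm_real, Real.norm_eq_abs]
    gcongr
    exact (hG y (hmem3 y hy) y (hmem3 y hy)).1

lemma aux_H (m : ℕ) (ρ : ℝ) (hρ0 : 0 < ρ)
    (a : Fin m → ℝ) (p : Fin m → ℝ) (hp : ∀ j, 0 < p j) (hp1 : ∑ j, p j = 1)
    (j0 j1 : Fin m) (hj : j0 ≠ j1)
    (μ : Measure ℝ) [IsProbabilityMeasure μ]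
    (hμ : μ = ∑ j : Fin m, ENNReal.ofReal (p j) • Measure.map (fun x => ρ * x + a j) μ)
    (K : Set ℝ) (hKc : IsCompact K) (h0 : μ Kᶜ = 0)
    (M : ℝ → ℂ) (hM : ∀ η : ℝ, M η = ∫ x, Complex.exp (2 * π * Complex.I * (η : ℂ) * x) ∂μ) :
    ∃ κ : ℝ, 0 ≤ κ ∧ κ < 1 ∧ ∃ H : ℝ → ℝ, (∀ x, 0 ≤ H x) ∧ (∀ x, H x ≤ 1) ∧
      (∀ x, H x ≤ H (ρ * x)) ∧
      (∀ x, round ((a j1 - a j0) * x) ≠ round (ρ⁻¹ * round ((a j1 - a j0) * (ρ * x))) →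
        H x ≤ κ * H (ρ * x)) ∧ ∀ x, ‖M x‖ ^ 2 ≤ H x := by
  have hρi : 0 < ρ⁻¹ := inv_pos.2 hρ0
  set τ : ℝ := 1 / (4 * (1 + ρ⁻¹)) with hτ
  obtain ⟨κ, hκ0, hκ1, hκ⟩ := aux_P m a p hp hp1 j0 j1 hj τ (by positivity)
  set P : ℝ → ℂ := fun η => ∑ j, (p j : ℂ) * Complex.exp (2 * π * Complex.I * η * a j) with hP
  have hnorm : ∀ x : ℝ, ‖Complex.exp (x * Complex.I)‖ = 1 := Complex.norm_exp_ofReal_mul_I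
  have hM1 : ∀ x, ‖M x‖ ≤ 1 := by
    intro x
    rw [hM]
    have := norm_integral_le_of_norm_le_const (μ := μ) (C := 1) (f := fun t : ℝ => Complex.exp (2 * π * Complex.I * (x : ℂ) * t))
      (Filter.Eventually.of_forall fun t => by
        rw [← hnorm (2 * π * x * t)]
        apply le_of_eq; congr 2; push_cast; ring)
    simpa using this
  have hP1 : ∀ x, ‖P x‖ ≤ 1 := by
    intro x
    rw [← hp1]
    refine (norm_sum_le _ _).trans (Finset.sum_le_sum fun j _ => ?_)
    rw [norm_mul, Complex.norm_real, Real.norm_of_nonneg (hp j).le]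
    have : ‖Complex.exp (2 * π * Complex.I * x * a j)‖ = 1 := by
      rw [← hnorm (2 * π * x * a j)]; congr 2; push_cast; ring
    rw [this, mul_one]
  have hMP : ∀ x, M x = P x * M (ρ * x) := by
    intro x
    rw [hM x, aux_selfsim m ρ a p hp μ hμ K hKc h0 _ (by fun_prop), hP, Finset.sum_mul]
    refine Finset.sum_congr rfl fun j _ => ?_
    have key : ∫ t : ℝ, Complex.exp (2 * π * Complex.I * x * ((ρ * t + a j : ℝ) : ℂ)) ∂μ =
        Complex.exp (2 * π * Complex.I * x * a j) * M (ρ * x) := by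
      rw [hM (ρ * x), ← integral_const_mul]
      refine integral_congr_ae (Filter.Eventually.of_forall fun t => ?_)
      beta_reduce
      rw [← Complex.exp_add]
      congr 1; push_cast; ring
    rw [key]; ring
  have hrec : ∀ x, ‖M x‖ * ‖M (ρ * x)‖ = ‖P x‖ * ‖P (ρ * x)‖ * (‖M (ρ * x)‖ * ‖M (ρ * (ρ * x))‖) := by
    intro x
    conv_lhs => rw [hMP x, norm_mul]; arg 2; rw [hMP (ρ * x), norm_mul]
    ring
  refine ⟨κ, hκ0, hκ1, fun x => ‖M x‖ * ‖M (ρ * x)‖, fun x => by positivity,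
    fun x => mul_le_one₀ (hM1 _) (norm_nonneg _) (hM1 _), fun x => ?_, fun x hx => ?_, fun x => ?_⟩
  · simp only []
    rw [hrec x]
    exact mul_le_of_le_one_left (by positivity) (mul_le_one₀ (hP1 _) (norm_nonneg _) (hP1 _))
  · simp only []
    rw [hrec x]
    gcongr
    set d := a j1 - a j0
    by_cases c0 : τ ≤ |d * x - round (d * x)|
    · calc _ ≤ κ * 1 := by
            gcongr
            · exact hκ x c0
            · exact hP1 _
        _ = κ := mul_one _
    by_cases c1 : τ ≤ |d * (ρ * x) - round (d * (ρ * x))|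
    · calc _ ≤ 1 * κ := by
            gcongr
            · exact hP1 _
            · exact hκ _ c1
        _ = κ := one_mul _
    exfalso
    apply hx
    push Not at c0 c1
    have hb : |ρ⁻¹ * round (d * (ρ * x)) - round (d * x)| < 1 / 2 := by
      have : ρ⁻¹ * round (d * (ρ * x)) - (round (d * x) : ℝ) =
          (d * x - round (d * x)) - ρ⁻¹ * (d * (ρ * x) - round (d * (ρ * x))) := by
        field_simp; ring
      rw [this]
      refine (abs_sub _ _).trans_lt ?_
      rw [abs_mul, abs_of_pos hρi]
      have h2 : τ * (1 + ρ⁻¹) = 1 / 4 := by rw [hτ]; field_simp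
      have := mul_le_mul_of_nonneg_left c1.le hρi.le
      linarith
    rw [abs_lt] at hb
    rw [eq_comm, round_eq, Int.floor_eq_iff]
    constructor <;> linarith [hb.1, hb.2]
  · rw [sq]
    refine mul_le_mul_of_nonneg_left ?_ (norm_nonneg _)
    conv_lhs => rw [hMP x, norm_mul]
    exact mul_le_of_le_one_left (by positivity) (hP1 _)

lemma aux_beta (m : ℕ) (hm : 2 ≤ m) (p : Fin m → ℝ) (hp : ∀ j, 0 < p j) (hp1 : ∑ j, p j = 1) :
    ∃ β : ℝ, 0 < β ∧ β < 1 ∧ ∀ j, p j ≤ β := by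
  have hne : (Finset.univ : Finset (Fin m)).Nonempty := ⟨⟨0, by omega⟩, Finset.mem_univ _⟩
  obtain ⟨j0, _, h0⟩ := Finset.exists_max_image Finset.univ p hne
  refine ⟨p j0, hp j0, ?_, fun j => h0 j (Finset.mem_univ _)⟩
  have : ∃ j1 : Fin m, j1 ≠ j0 := by
    have : Nontrivial (Fin m) := Fin.nontrivial_iff_two_le.2 hm
    exact exists_ne j0
  obtain ⟨j1, h1⟩ := this
  rw [← hp1]
  exact Finset.single_lt_sum h1 (Finset.mem_univ _) (Finset.mem_univ _) (hp j1)
    (fun k _ _ => (hp k).le)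

lemma aux_main
    (m : ℕ) (hm : 2 ≤ m) (ρ : ℝ) (hρ0 : 0 < ρ) (hρ1 : ρ < 1)
    (a : Fin m → ℝ) (p : Fin m → ℝ) (hp : ∀ j, 0 < p j) (hp1 : ∑ j, p j = 1)
    (μ : Measure ℝ) [IsProbabilityMeasure μ]
    (hμ : μ = ∑ j : Fin m, ENNReal.ofReal (p j) • Measure.map (fun x => ρ * x + a j) μ)
    (K : Set ℝ) (hKc : IsCompact K) (hKne : K.Nonempty)
    (hKattr : K = ⋃ j : Fin m, (fun x => ρ * x + a j) '' K)
    (hsep : ∀ j j' : Fin m, j ≠ j' →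
      Disjoint ((fun x => ρ * x + a j) '' K) ((fun x => ρ * x + a j') '' K))
    (φ : ℝ → ℝ) (hφ : ContDiff ℝ 2 φ) (hφ'' : ∀ t, 0 < deriv (deriv φ) t)
    (g : ℝ → ℝ) (hg : ContDiff ℝ 1 g) :
    ∃ ω > (0 : ℝ), ω < 1 ∧ ∃ C > (0 : ℝ), ∀ (N : ℕ) (ξ : ℝ), 1 ≤ |ξ| * ρ ^ (3 * N) →
      |ξ| * ρ ^ (3 * N + 3) ≤ 1 →
      ‖∫ t, Complex.exp (2 * Real.pi * Complex.I * ξ * φ t) * (g t : ℂ) ∂μ‖ ≤ C * ω ^ N := by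
  have h0 := aux_supp m ρ hρ0 hρ1 a p hp hp1 μ hμ K hKc hKne hKattr
  have hmem : ∀ j, ∀ x ∈ K, ρ * x + a j ∈ K := by
    intro j x hx
    rw [hKattr]
    exact Set.mem_iUnion.2 ⟨j, x, hx, rfl⟩
  obtain ⟨x0, hx0⟩ := hKne
  obtain ⟨R, hR, hKR⟩ : ∃ R > (0:ℝ), K ⊆ Set.Icc (-R) R := by
    obtain ⟨R, hR⟩ := hKc.isBounded.exists_norm_le
    refine ⟨|R| + 1, by positivity, fun x hx => ?_⟩
    have := (hR x hx).trans (le_abs_self R)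
    rw [Real.norm_eq_abs, abs_le] at this
    constructor <;> linarith [this.1, this.2]
  obtain ⟨δ, hδ, hgap⟩ := aux_gap m ρ a K hKc hsep
  obtain ⟨β, hβ0, hβ1, hβ⟩ := aux_beta m hm p hp hp1
  obtain ⟨M, hM0, c0, hc0, L, hL0, hφb⟩ := aux_taylor φ hφ hφ'' (3 * R) (by positivity)
  obtain ⟨G0, hG0, G1, hG1, hgb⟩ := aux_amp g hg (3 * R)
  set j0 : Fin m := ⟨0, by omega⟩ with hj0
  set j1 : Fin m := ⟨1, by omega⟩ with hj1
  have hj : j0 ≠ j1 := by simp [hj0, hj1]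
  set T : ℝ → ℂ := fun η => ∫ x, Complex.exp (2 * π * Complex.I * (η : ℂ) * x) ∂μ with hT
  obtain ⟨κ, hκ0, hκ1, H, hH0, hH1, hHm, hHκ, hTH⟩ :=
    aux_H m ρ hρ0 a p hp hp1 j0 j1 hj μ hμ K hKc h0 T (fun η => rfl)
  set d := a j1 - a j0 with hd
  have hd0 : d ≠ 0 := by
    intro h
    have := hgap j0 j1 hj x0 hx0 x0 hx0
    have e : ρ * x0 + a j0 - (ρ * x0 + a j1) = -d := by rw [hd]; ring
    rw [e, h] at this
    simp at this
    linarith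
  have hdp : 0 < |d| := abs_pos.2 hd0
  have hρi : 0 < ρ⁻¹ := inv_pos.2 hρ0
  set A : ℝ := 2 * (ρ⁻¹ + 1) + 1 with hA
  have hA0 : 0 < A := by positivity
  obtain ⟨Q, hQ1, hQ⟩ : ∃ Q : ℕ, 1 ≤ Q ∧ β * (1 + A * κ ^ Q) < 1 := by
    obtain ⟨Q, hQ⟩ := exists_pow_lt_of_lt_one (show 0 < (1 - β) / (β * A) by
      apply div_pos (by linarith) (by positivity)) hκ1
    refine ⟨Q + 1, by omega, ?_⟩
    have h1 : κ ^ (Q + 1) ≤ κ ^ Q := pow_le_pow_of_le_one hκ0 hκ1.le (by omega)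
    have h2 := h1.trans_lt hQ
    rw [lt_div_iff₀ (by positivity)] at h2
    linarith
  obtain ⟨k0, hk0⟩ := exists_pow_lt_of_lt_one (show 0 < |d| * c0 * δ / 2 by positivity) hρ1
  set R0 : ℝ := |d| * L * (ρ ^ 3)⁻¹ with hR0
  have hR00 : 0 ≤ R0 := by positivity
  set σ := β * (1 + A * κ ^ Q) with hσ
  have hσ0 : 0 < σ := by positivity
  set C2 : ℝ := (β ^ k0)⁻¹ * (2 * (R0 + 1) + 1) with hC2
  have hC20 : 0 < C2 := by positivity
  set ω1 : ℝ := σ ^ ((((2 * Q : ℕ) : ℝ))⁻¹) with hω1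
  set C3 : ℝ := C2 ^ ((((2 * Q : ℕ) : ℝ))⁻¹) with hC3
  have hω10 : 0 < ω1 := Real.rpow_pos_of_pos hσ0 _
  have hC30 : 0 < C3 := Real.rpow_pos_of_pos hC20 _
  have hQpos : (0:ℝ) < ((2 * Q : ℕ) : ℝ) := by
    have : 0 < 2 * Q := by omega
    exact_mod_cast this
  have hω11 : ω1 < 1 := Real.rpow_lt_one hσ0.le hQ (inv_pos.2 hQpos)
  have hωpow : ω1 ^ (2 * Q) = σ := Real.rpow_inv_natCast_pow hσ0.le (by omega)
  have hCpow : C3 ^ (2 * Q) = C2 := Real.rpow_inv_natCast_pow hC20.le (by omega)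
  set C1 : ℝ := 8 * π * M * R ^ 2 * G0 * (ρ ^ 3)⁻¹ + 2 * R * G1 with hC1
  have hC10 : 0 < C1 := by have := Real.pi_pos; positivity
  refine ⟨max ρ ω1, lt_max_of_lt_left hρ0, max_lt hρ1 hω11, C1 + G0 * C3, by positivity, ?_⟩
  intro N ξ hξ1 hξ2
  obtain ⟨ι, _, q, y, hq0, hq1, hyK, hfr, hint⟩ := aux_discrete m ρ hρ0 hρ1 a p hp hp1 μ hμ K hKc h0
    hmem x0 hx0 δ hδ hgap β hβ0 hβ (2 * N)
  have hy3 : ∀ i, y i ∈ Set.Icc (-(3*R)) (3*R) := fun i =>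
    ⟨by linarith [(hKR (hyK i)).1], by linarith [(hKR (hyK i)).2]⟩
  set η : ι → ℝ := fun i => ξ * ρ ^ (2 * N) * deriv φ (y i) with hη
  have hφc : Continuous φ := hφ.continuous
  have hgc : Continuous g := hg.continuous
  have hξabs : 0 < |ξ| := by
    by_contra hneg
    have : |ξ| = 0 := le_antisymm (not_lt.1 hneg) (abs_nonneg _)
    rw [this] at hξ1; norm_num at hξ1
  have hξ3 : |ξ| * ρ ^ (3 * N) ≤ (ρ ^ 3)⁻¹ := by
    rw [← one_div, le_div_iff₀ (by positivity), mul_assoc, ← pow_add]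
    exact hξ2
  -- local estimate
  have hloc : ∀ i, ‖∫ x, Complex.exp (2 * π * Complex.I * ξ * φ (y i + ρ ^ (2 * N) * (x - x0))) *
      (g (y i + ρ ^ (2 * N) * (x - x0)) : ℂ) ∂μ‖ ≤ C1 * ρ ^ N + G0 * ‖T (η i)‖ := by
    intro i
    refine (aux_local μ K hKc h0 R hR hKR x0 hx0 φ hφc g hgc M G0 G1 hM0.le hG0.le hG1.le
      (fun y hy t ht => (hφb y hy t ht).1) hgb (ρ ^ (2 * N)) (by positivity)
      (pow_le_one₀ hρ0.le hρ1.le) ξ (y i) (hyK i)).trans ?_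
    gcongr
    have e1 : |ξ| * (ρ ^ (2 * N)) ^ 2 ≤ (ρ ^ 3)⁻¹ * ρ ^ N := by
      calc _ = |ξ| * ρ ^ (3 * N) * ρ ^ N := by ring
        _ ≤ _ := by gcongr
    have e2 : ρ ^ (2 * N) ≤ ρ ^ N := pow_le_pow_of_le_one hρ0.le hρ1.le (by omega)
    calc _ = 8 * π * M * R ^ 2 * G0 * (|ξ| * (ρ ^ (2 * N)) ^ 2) + 2 * R * G1 * ρ ^ (2 * N) := by ring
      _ ≤ 8 * π * M * R ^ 2 * G0 * ((ρ ^ 3)⁻¹ * ρ ^ N) + 2 * R * G1 * ρ ^ N := by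
          have := Real.pi_pos
          gcongr
      _ = _ := by rw [hC1]; ring
  have hbound : ‖∫ t, Complex.exp (2 * Real.pi * Complex.I * ξ * φ t) * (g t : ℂ) ∂μ‖ ≤
      C1 * ρ ^ N + G0 * ∑ i, q i * ‖T (η i)‖ := by
    rw [hint (fun t => Complex.exp (2 * Real.pi * Complex.I * ξ * φ t) * (g t : ℂ)) (by fun_prop)]
    refine (norm_sum_le _ _).trans ?_
    calc _ ≤ ∑ i, q i * (C1 * ρ ^ N + G0 * ‖T (η i)‖) := by
          refine Finset.sum_le_sum fun i _ => ?_
          rw [norm_mul, Complex.norm_real, Real.norm_of_nonneg (hq0 i)]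
          exact mul_le_mul_of_nonneg_left (hloc i) (hq0 i)
      _ = _ := by
          simp only [mul_add, Finset.sum_add_distrib, ← Finset.sum_mul, hq1, one_mul]
          congr 1
          rw [Finset.mul_sum]
          exact Finset.sum_congr rfl fun i _ => by ring
  -- frostman for frequencies
  have hα : ∀ n : ℤ, ∑ i, (if round (d * η i) = n then q i else 0) ≤ (β ^ k0)⁻¹ * β ^ N := by
    intro n
    rcases lt_or_ge N k0 with hNk | hNk
    · calc _ ≤ ∑ i, q i := Finset.sum_le_sum fun i _ => by split_ifs <;> simp [hq0]
        _ = 1 := hq1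
        _ ≤ _ := by
          rw [inv_mul_eq_div, one_le_div (by positivity)]
          exact pow_le_pow_of_le_one hβ0.le hβ1.le hNk.le
    · by_cases hex : ∃ i0, round (d * η i0) = n
      · obtain ⟨i0, hi0⟩ := hex
        have hpw : (β ^ k0)⁻¹ * β ^ N = β ^ (N - k0) := by
          rw [inv_mul_eq_div, div_eq_iff (by positivity), ← pow_add, Nat.sub_add_cancel hNk]
        have hpwρ : ρ ^ N = ρ ^ (N - k0) * ρ ^ k0 := by rw [← pow_add, Nat.sub_add_cancel hNk]
        rw [hpw]
        refine le_trans (Finset.sum_le_sum fun i _ => ?_)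
          (hfr (N - k0) (by omega) (y i0 - δ * ρ ^ (N - k0) / 2))
        by_cases hi : round (d * η i) = n
        · rw [if_pos hi, if_pos]
          have r0 := abs_sub_round (d * η i0)
          have r1 := abs_sub_round (d * η i)
          rw [hi0] at r0
          rw [hi] at r1
          have hdiff : |d * η i - d * η i0| ≤ 1 := by
            rw [abs_le] at *
            constructor <;> linarith [r0.1, r0.2, r1.1, r1.2]
          have e1 : |d * η i - d * η i0| = |d| * |ξ| * ρ ^ (2 * N) * |deriv φ (y i) - deriv φ (y i0)| := by
            have : d * η i - d * η i0 = d * ξ * ρ ^ (2 * N) * (deriv φ (y i) - deriv φ (y i0)) := by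
              rw [hη]; ring
            rw [this, abs_mul, abs_mul, abs_mul, abs_of_pos (pow_pos hρ0 (2 * N))]
          have e2 := (hφb (y i0) (hy3 i0) (y i) (hy3 i)).2.1
          have e3 : |d| * c0 * |y i - y i0| ≤ ρ ^ N := by
            calc |d| * c0 * |y i - y i0| = |d| * c0 * |y i - y i0| * 1 := by ring
              _ ≤ |d| * c0 * |y i - y i0| * (|ξ| * ρ ^ (3 * N)) := by gcongr
              _ = |d| * |ξ| * ρ ^ (2 * N) * (c0 * |y i - y i0|) * ρ ^ N := by ring
              _ ≤ |d| * |ξ| * ρ ^ (2 * N) * |deriv φ (y i) - deriv φ (y i0)| * ρ ^ N := by gcongr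
              _ ≤ 1 * ρ ^ N := by
                  rw [← e1]; gcongr
              _ = _ := one_mul _
          have e4 : |y i - y i0| ≤ δ * ρ ^ (N - k0) / 2 := by
            have : |d| * c0 * |y i - y i0| ≤ |d| * c0 * (δ * ρ ^ (N - k0) / 2) := by
              calc _ ≤ ρ ^ (N - k0) * ρ ^ k0 := by rw [← hpwρ]; exact e3
                _ ≤ ρ ^ (N - k0) * (|d| * c0 * δ / 2) := by gcongr
                _ = _ := by ring
            exact le_of_mul_le_mul_left this (by positivity)
          rw [abs_le] at e4
          constructor <;> linarith [e4.1, e4.2]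
        · rw [if_neg hi]
          split_ifs <;> simp [hq0]
      · push Not at hex
        rw [Finset.sum_eq_zero fun i _ => by rw [if_neg (hex i)]]
        positivity
  have hrange : ∀ i, |d * (ρ ^ N * η i)| ≤ R0 := by
    intro i
    have e1 : d * (ρ ^ N * η i) = d * (ξ * ρ ^ (3 * N)) * deriv φ (y i) := by
      rw [hη]; ring
    rw [e1, abs_mul, abs_mul, abs_mul ξ, abs_of_pos (pow_pos hρ0 (3 * N))]
    calc _ ≤ |d| * (ρ ^ 3)⁻¹ * L := by
          gcongr
          exact (hφb (y i) (hy3 i) (y i) (hy3 i)).2.2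
      _ = R0 := by rw [hR0]; ring
  have hsum := aux_sum ρ hρ0 d κ hκ0 H hH0 hH1 hHm hHκ Q R0 hR00 N q η hq0 _ (by positivity) hα hrange
  have hZ : (∑ i, q i * ‖T (η i)‖) ≤ C3 * ω1 ^ N := by
    refine le_of_pow_le_pow_left₀ (n := 2 * Q) (by omega) (by positivity) ?_
    rw [mul_pow, hCpow, ← pow_mul, mul_comm N, pow_mul ω1, hωpow]
    calc _ ≤ ∑ i, q i * ‖T (η i)‖ ^ (2 * Q) :=
          Real.pow_arith_mean_le_arith_mean_pow _ _ _ (fun i _ => hq0 i) hq1 (fun i _ => norm_nonneg _) _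
      _ ≤ ∑ i, q i * H (η i) ^ Q := by
          refine Finset.sum_le_sum fun i _ => mul_le_mul_of_nonneg_left ?_ (hq0 i)
          rw [pow_mul]
          exact pow_le_pow_left₀ (by positivity) (hTH _) _
      _ ≤ _ := hsum
      _ = _ := by rw [hC2, hσ, mul_pow]; ring
  calc _ ≤ C1 * ρ ^ N + G0 * ∑ i, q i * ‖T (η i)‖ := hbound
    _ ≤ C1 * (max ρ ω1) ^ N + G0 * (C3 * (max ρ ω1) ^ N) := by
        gcongr
        · exact le_max_left _ _
        · refine hZ.trans ?_
          gcongr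
          exact le_max_right _ _
    _ = _ := by ring

/-- power Fourier decay of oscillatory integrals against the homogeneous
self-similar measure, for a `C²` phase with positive second derivative and a `C¹` amplitude. -/
theorem stmt0
    (m : ℕ) (hm : 2 ≤ m) (ρ : ℝ) (hρ0 : 0 < ρ) (hρ1 : ρ < 1)
    (a : Fin m → ℝ) (p : Fin m → ℝ) (hp : ∀ j, 0 < p j) (hp1 : ∑ j, p j = 1)
    (μ : Measure ℝ) [IsProbabilityMeasure μ]
    (hμ : μ = ∑ j : Fin m, ENNReal.ofReal (p j) • Measure.map (fun x => ρ * x + a j) μ)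
    (K : Set ℝ) (hKc : IsCompact K) (hKne : K.Nonempty)
    (hKattr : K = ⋃ j : Fin m, (fun x => ρ * x + a j) '' K)
    (hsep : ∀ j j' : Fin m, j ≠ j' →
      Disjoint ((fun x => ρ * x + a j) '' K) ((fun x => ρ * x + a j') '' K))
    (φ : ℝ → ℝ) (hφ : ContDiff ℝ 2 φ) (hφ'' : ∀ t, 0 < deriv (deriv φ) t)
    (g : ℝ → ℝ) (hg : ContDiff ℝ 1 g) :
    ∃ γ > (0 : ℝ), ∃ C > (0 : ℝ), ∀ ξ : ℝ, 1 ≤ |ξ| →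
      ‖∫ t, Complex.exp (2 * Real.pi * Complex.I * ξ * φ t) * (g t : ℂ) ∂μ‖
        ≤ C * |ξ| ^ (-γ) := by
  obtain ⟨ω, hω0, hω1, C, hC, h⟩ := aux_main m hm ρ hρ0 hρ1 a p hp hp1 μ hμ K hKc hKne hKattr hsep
    φ hφ hφ'' g hg
  have hr0 : 0 < ρ ^ 3 := by positivity
  have hr1 : ρ ^ 3 < 1 := pow_lt_one₀ hρ0.le hρ1 (by norm_num)
  set s : ℝ := Real.log ω / Real.log (ρ ^ 3) with hs
  have hs0 : 0 < s := div_pos_of_neg_of_neg (Real.log_neg hω0 hω1) (Real.log_neg hr0 hr1)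
  have hωs : (ρ ^ 3) ^ s = ω := by
    rw [Real.rpow_def_of_pos hr0, hs, mul_div_cancel₀ _ (Real.log_neg hr0 hr1).ne, Real.exp_log hω0]
  refine ⟨s, hs0, C * ω⁻¹, by positivity, fun ξ hξ => ?_⟩
  have hξ0 : 0 < |ξ| := by linarith
  obtain ⟨N, hN1, hN2⟩ := exists_nat_pow_near_of_lt_one (inv_pos.2 hξ0) (inv_le_one_of_one_le₀ hξ)
    hr0 hr1
  refine (h N ξ ?_ ?_).trans ?_
  · rw [pow_mul]
    calc (1:ℝ) = |ξ| * |ξ|⁻¹ := (mul_inv_cancel₀ hξ0.ne').symm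
      _ ≤ _ := by gcongr
  · have : ρ ^ (3 * N + 3) = (ρ ^ 3) ^ (N + 1) := by ring
    rw [this]
    calc _ ≤ |ξ| * |ξ|⁻¹ := by gcongr
      _ = 1 := mul_inv_cancel₀ hξ0.ne'
  · rw [mul_assoc]
    gcongr
    calc ω ^ N = ω⁻¹ * ω ^ (N + 1) := by rw [pow_succ]; field_simp
      _ = ω⁻¹ * ((ρ ^ 3) ^ (N + 1)) ^ s := by
          rw [← Real.rpow_natCast (ρ ^ 3), ← Real.rpow_mul hr0.le, mul_comm _ s, Real.rpow_mul hr0.le,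
            hωs, Real.rpow_natCast]
      _ ≤ ω⁻¹ * (|ξ|⁻¹) ^ s := by
          gcongr
      _ = _ := by rw [Real.inv_rpow hξ0.le, Real.rpow_neg hξ0.le]
end

section
/- Let m ≥ 2, ρ ∈ (0,1), a_1,…,a_m ∈ ℝ and let p = (p_1,…,p_m) be a probability vector with every p_j > 0. Let μ_ρ be the homogeneous self-similar measure of the IFS {f_j(x) = ρx + a_j}_{j=1}^m, and assume the IFS satisfies the strong separation condition. Then for every φ ∈ C²(ℝ) with φ''(t) > 0 for all t, there exist constants γ > 0 and C > 0 such that the pushforward measure φ_*μ_ρ satisfies |(φ_*μ_ρ)^∧(ξ)| ≤ C|ξ|^{−γ} for all ξ with |ξ| ≥ 1. -/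
open MeasureTheory Real

/-- The additive character. -/
noncomputable def ee (x : ℝ) : ℂ := Complex.exp (((2 * π * x : ℝ) : ℂ) * Complex.I)

lemma ee_norm (x : ℝ) : ‖ee x‖ = 1 := Complex.norm_exp_ofReal_mul_I _

lemma ee_add (x y : ℝ) : ee (x + y) = ee x * ee y := by
  unfold ee
  rw [← Complex.exp_add]
  congr 1
  push_cast
  ring

lemma ee_cont : Continuous ee := by
  unfold ee
  fun_prop

lemma ee_sub_one_le (x : ℝ) : ‖ee x - 1‖ ≤ 2 * π * |x| := by
  unfold ee
  rw [mul_comm, Complex.norm_exp_I_mul_ofReal_sub_one, Real.norm_eq_abs, abs_mul]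
  have := Real.abs_sin_le_abs (x := 2 * π * x / 2)
  rw [abs_two]
  have h2 : |2 * π * x / 2| = π * |x| := by
    rw [show 2 * π * x / 2 = π * x by ring, abs_mul, abs_of_pos Real.pi_pos]
  rw [h2] at this
  linarith

lemma ee_sub_le (x y : ℝ) : ‖ee x - ee y‖ ≤ 2 * π * |x - y| := by
  have : ee x - ee y = ee y * (ee (x - y) - 1) := by
    rw [mul_sub, ← ee_add]; simp
  rw [this, norm_mul, ee_norm, one_mul]
  exact ee_sub_one_le _

lemma ee_int (n : ℤ) : ee n = 1 := by
  unfold ee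
  rw [Complex.exp_eq_one_iff]
  exact ⟨n, by push_cast; ring⟩

lemma ee_sub_one_ge (x : ℝ) : 4 * |x - round x| ≤ ‖ee x - 1‖ := by
  have h1 : ‖ee x - 1‖ = ‖ee (x - round x) - 1‖ := by
    have : ee x = ee (x - round x) := by
      conv_lhs => rw [show x = (x - round x) + (round x : ℤ) by ring, ee_add, ee_int, mul_one]
    rw [← this]
  rw [h1]
  set v := x - round x with hv
  have hv2 : |v| ≤ 1 / 2 := abs_sub_round x
  unfold ee
  rw [mul_comm (_ : ℂ) Complex.I, Complex.norm_exp_I_mul_ofReal_sub_one, Real.norm_eq_abs, abs_mul, abs_two,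
    show 2 * π * v / 2 = π * v by ring]
  have h3 : 2 * |v| ≤ |Real.sin (π * v)| := by
    have h4 := Real.mul_le_sin (x := π * |v|) (by positivity) (by nlinarith [Real.pi_pos])
    have h5 : 2 / π * (π * |v|) = 2 * |v| := by field_simp
    rw [h5] at h4
    refine h4.trans ?_
    rcases abs_cases v with ⟨h, _⟩ | ⟨h, _⟩ <;> rw [h]
    · exact le_abs_self _
    · rw [mul_neg, Real.sin_neg]; exact neg_le_abs _
  linarith

/-- Fourier transform. -/
noncomputable def FT (μ : Measure ℝ) (ξ : ℝ) : ℂ := ∫ t, ee (ξ * t) ∂μ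

lemma ee_integrable (μ : Measure ℝ) [IsFiniteMeasure μ] {g : ℝ → ℝ} (hg : Continuous g) :
    Integrable (fun t => ee (g t)) μ := by
  refine Integrable.of_bound ((ee_cont.comp hg).aestronglyMeasurable) 1 ?_
  filter_upwards with t
  exact (ee_norm _).le

lemma FT_cont (μ : Measure ℝ) [IsFiniteMeasure μ] : Continuous (FT μ) := by
  unfold FT
  refine continuous_of_dominated (bound := fun _ => 1) ?_ ?_ (integrable_const _) ?_
  · intro x
    exact (ee_cont.comp (by fun_prop)).aestronglyMeasurable
  · intro x
    filter_upwards with t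
    exact (ee_norm _).le
  · filter_upwards with t
    exact ee_cont.comp (by fun_prop)

lemma FT_le_one (μ : Measure ℝ) [IsProbabilityMeasure μ] (ξ : ℝ) : ‖FT μ ξ‖ ≤ 1 := by
  unfold FT
  have := norm_integral_le_of_norm_le_const (μ := μ) (f := fun t => ee (ξ * t)) (C := 1)
    (by filter_upwards with t; exact (ee_norm _).le)
  simpa using this

section SS
variable {m : ℕ} {ρ : ℝ} {a p : Fin m → ℝ} {μ : Measure ℝ}

lemma ss_meas
    (hμ : μ = ∑ j : Fin m, ENNReal.ofReal (p j) • Measure.map (fun x => ρ * x + a j) μ)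
    {A : Set ℝ} (hA : MeasurableSet A) :
    μ A = ∑ j, ENNReal.ofReal (p j) * μ ((fun x => ρ * x + a j) ⁻¹' A) := by
  conv_lhs => rw [hμ]
  rw [Measure.finsetSum_apply]
  refine Finset.sum_congr rfl fun j _ => ?_
  rw [Measure.smul_apply, Measure.map_apply (by fun_prop) hA, smul_eq_mul]

lemma ss_int {E : Type*} [NormedAddCommGroup E] [NormedSpace ℝ E] [IsProbabilityMeasure μ]
    (hp : ∀ j, 0 < p j)
    (hμ : μ = ∑ j : Fin m, ENNReal.ofReal (p j) • Measure.map (fun x => ρ * x + a j) μ)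
    (g : ℝ → E) (hg : StronglyMeasurable g) (C : ℝ) (hC : ∀ x, ‖g x‖ ≤ C) :
    ∫ x, g x ∂μ = ∑ j, p j • ∫ x, g (ρ * x + a j) ∂μ := by
  conv_lhs => rw [hμ]
  have hpr : ∀ j, IsProbabilityMeasure (Measure.map (fun x => ρ * x + a j) μ) := fun j =>
    Measure.isProbabilityMeasure_map (by fun_prop)
  rw [integral_finsetSum_measure]
  · refine Finset.sum_congr rfl fun j _ => ?_
    rw [integral_smul_measure, integral_map (by fun_prop) hg.aestronglyMeasurable,
      ENNReal.toReal_ofReal (hp j).le]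
  · intro j _
    refine Integrable.smul_measure ?_ ENNReal.ofReal_ne_top
    exact Integrable.of_bound hg.aestronglyMeasurable C (by filter_upwards with x; exact hC x)

/-- symbol -/
noncomputable def Phi (a p : Fin m → ℝ) (ξ : ℝ) : ℂ := ∑ j, (p j : ℂ) * ee (ξ * a j)

lemma Phi_cont : Continuous (Phi a p) := by
  unfold Phi
  refine continuous_finsetSum _ fun j _ => ?_
  exact continuous_const.mul (ee_cont.comp (by fun_prop))

lemma FT_rec [IsProbabilityMeasure μ]
    (hp : ∀ j, 0 < p j)
    (hμ : μ = ∑ j : Fin m, ENNReal.ofReal (p j) • Measure.map (fun x => ρ * x + a j) μ) (ξ : ℝ) :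
    FT μ ξ = Phi a p ξ * FT μ (ρ * ξ) := by
  unfold FT Phi
  rw [ss_int hp hμ (fun t => ee (ξ * t)) (ee_cont.comp (by fun_prop)).stronglyMeasurable 1
    (fun x => (ee_norm _).le), Finset.sum_mul]
  refine Finset.sum_congr rfl fun j _ => ?_
  have : ∀ x, ee (ξ * (ρ * x + a j)) = ee (ξ * a j) * ee (ρ * ξ * x) := by
    intro x; rw [← ee_add]; ring_nf
  simp_rw [this]
  rw [integral_const_mul, Complex.real_smul, mul_assoc]

lemma Phi_le_one (hp : ∀ j, 0 < p j) (hp1 : ∑ j, p j = 1) (ξ : ℝ) : ‖Phi a p ξ‖ ≤ 1 := by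
  unfold Phi
  refine (norm_sum_le _ _).trans ?_
  rw [← hp1]
  refine Finset.sum_le_sum fun j _ => ?_
  rw [norm_mul, ee_norm, mul_one, Complex.norm_real, Real.norm_eq_abs, abs_of_pos (hp j)]

lemma two_term {p q c : ℝ} (hp : 0 < p) (hq : 0 < q) (x : ℝ)
    (h : c ≤ ‖ee x - 1‖) (hc : 0 ≤ c) : ‖(p : ℂ) + q * ee x‖ ≤ √((p + q) ^ 2 - p * q * c ^ 2) := by
  refine Real.le_sqrt_of_sq_le ?_
  have h1 := ee_norm x
  have h2 : ‖ee x‖ ^ 2 = 1 := by rw [h1]; norm_num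
  have h3 : c ^ 2 ≤ ‖ee x - 1‖ ^ 2 := by gcongr
  rw [Complex.sq_norm, Complex.normSq_apply] at *
  simp at *
  have h4 := mul_le_mul_of_nonneg_left h3 (mul_pos hp hq).le
  have h5 : (p * q + q ^ 2) * ((ee x).re * (ee x).re + (ee x).im * (ee x).im) = p * q + q ^ 2 := by
    rw [h2, mul_one]
  nlinarith [h4, h5]

lemma Phi_bad (hp : ∀ j, 0 < p j) (hp1 : ∑ j, p j = 1) {i j : Fin m} (hij : i ≠ j) {c : ℝ}
    (hc : 0 < c) : ∃ l : ℝ, 0 ≤ l ∧ l < 1 ∧ ∀ y : ℝ,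
      c ≤ |(a j - a i) * y - round ((a j - a i) * y)| → ‖Phi a p y‖ ≤ l := by
  have hpi := hp i
  have hpj := hp j
  have hs : ∀ f : Fin m → ℝ, ∑ k, f k = f i + (f j + ∑ k ∈ (Finset.univ.erase i).erase j, f k) := by
    intro f
    rw [Finset.add_sum_erase _ _ (by simp [hij.symm]), Finset.add_sum_erase _ _ (by simp)]
  have hsC : ∀ f : Fin m → ℂ, ∑ k, f k = f i + (f j + ∑ k ∈ (Finset.univ.erase i).erase j, f k) := by
    intro f
    rw [Finset.add_sum_erase _ _ (by simp [hij.symm]), Finset.add_sum_erase _ _ (by simp)]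
  set R := ∑ k ∈ (Finset.univ.erase i).erase j, p k with hR
  have hR0 : 0 ≤ R := Finset.sum_nonneg fun k _ => (hp k).le
  have hsum := hs p
  rw [hp1] at hsum
  refine ⟨√((p i + p j) ^ 2 - p i * p j * (4 * c) ^ 2) + R, by positivity, ?_, ?_⟩
  · have : √((p i + p j) ^ 2 - p i * p j * (4 * c) ^ 2) < p i + p j := by
      rw [Real.sqrt_lt' (by positivity)]
      have : 0 < p i * p j * (4 * c) ^ 2 := by positivity
      linarith
    linarith
  · intro y hy
    unfold Phi
    rw [hsC, ← add_assoc]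
    refine (norm_add_le _ _).trans (add_le_add ?_ ?_)
    · have h1 : (p i : ℂ) * ee (y * a i) + p j * ee (y * a j)
          = ee (y * a i) * (p i + p j * ee ((a j - a i) * y)) := by
        have : ee (y * a j) = ee (y * a i) * ee ((a j - a i) * y) := by
          rw [← ee_add]; ring_nf
        rw [this]; ring
      rw [h1, norm_mul, ee_norm, one_mul]
      refine two_term hpi hpj _ ?_ (by positivity)
      refine le_trans ?_ (ee_sub_one_ge _)
      linarith
    · refine (norm_sum_le _ _).trans ?_
      refine Finset.sum_le_sum fun k _ => ?_
      rw [norm_mul, ee_norm, mul_one, Complex.norm_real, Real.norm_eq_abs, abs_of_pos (hp k)]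

end SS

section SS2
variable {m : ℕ} {ρ : ℝ} {a p : Fin m → ℝ} {μ : Measure ℝ} {K : Set ℝ}

lemma maps_K (hKattr : K = ⋃ j : Fin m, (fun x => ρ * x + a j) '' K) (j : Fin m) {x : ℝ}
    (hx : x ∈ K) : ρ * x + a j ∈ K := by
  rw [hKattr]
  exact Set.mem_iUnion.2 ⟨j, x, hx, rfl⟩

lemma supp_K [IsProbabilityMeasure μ] (hρ0 : 0 < ρ) (hρ1 : ρ < 1)
    (hp : ∀ j, 0 < p j) (hp1 : ∑ j, p j = 1)
    (hμ : μ = ∑ j : Fin m, ENNReal.ofReal (p j) • Measure.map (fun x => ρ * x + a j) μ)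
    (hKc : IsCompact K) (hKne : K.Nonempty)
    (hKattr : K = ⋃ j : Fin m, (fun x => ρ * x + a j) '' K) : ∀ᵐ x ∂μ, x ∈ K := by
  have hinf : ∀ j x, Metric.infDist (ρ * x + a j) K ≤ ρ * Metric.infDist x K := by
    intro j x
    obtain ⟨y, hy, hxy⟩ := hKc.exists_infDist_eq_dist hKne x
    refine (Metric.infDist_le_dist_of_mem (maps_K hKattr j hy)).trans ?_
    rw [hxy, Real.dist_eq, Real.dist_eq, show ρ * x + a j - (ρ * y + a j) = ρ * (x - y) by ring,
      abs_mul, abs_of_pos hρ0]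
  have hmeas : ∀ t : ℝ, MeasurableSet {x | t < Metric.infDist x K} := fun t =>
    (isOpen_lt continuous_const (Metric.continuous_infDist_pt K)).measurableSet
  have hsum : ∑ j, ENNReal.ofReal (p j) = 1 := by
    rw [← ENNReal.ofReal_sum_of_nonneg (fun j _ => (hp j).le), hp1, ENNReal.ofReal_one]
  have step : ∀ t : ℝ, μ {x | t < Metric.infDist x K} ≤ μ {x | t / ρ < Metric.infDist x K} := by
    intro t
    rw [ss_meas hμ (hmeas t)]
    calc _ ≤ ∑ j, ENNReal.ofReal (p j) * μ {x | t / ρ < Metric.infDist x K} := by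
          refine Finset.sum_le_sum fun j _ => ?_
          gcongr
          intro x hx
          simp only [Set.mem_preimage, Set.mem_ofPred_eq] at hx ⊢
          rw [div_lt_iff₀ hρ0]
          have := hinf j x
          linarith
      _ = _ := by rw [← Finset.sum_mul, hsum, one_mul]
  have stepn : ∀ (n : ℕ) (t : ℝ),
      μ {x | t < Metric.infDist x K} ≤ μ {x | t / ρ ^ n < Metric.infDist x K} := by
    intro n
    induction n with
    | zero => intro t; simp
    | succ n ih =>
      intro t
      refine (step t).trans ((ih _).trans (le_of_eq ?_))
      rw [div_div, ← pow_succ']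
  have hzero : ∀ t : ℝ, 0 < t → μ {x | t < Metric.infDist x K} = 0 := by
    intro t ht
    have hlim : Filter.Tendsto (fun n : ℕ => μ {x | t / ρ ^ n < Metric.infDist x K}) Filter.atTop
        (nhds (μ (⋂ n : ℕ, {x | t / ρ ^ n < Metric.infDist x K}))) := by
      refine tendsto_measure_iInter_atTop (fun n => (hmeas _).nullMeasurableSet) ?_
        ⟨0, measure_ne_top _ _⟩
      intro n k hnk x hx
      simp only [Set.mem_ofPred_eq] at hx ⊢
      refine lt_of_le_of_lt ?_ hx
      have : ρ ^ k ≤ ρ ^ n := pow_le_pow_of_le_one hρ0.le hρ1.le hnk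
      gcongr
    have hemp : (⋂ n : ℕ, {x | t / ρ ^ n < Metric.infDist x K}) = ∅ := by
      ext x
      simp only [Set.mem_iInter, Set.mem_ofPred_eq, Set.mem_empty_iff_false, iff_false, not_forall,
        not_lt]
      have h0 : (0 : ℝ) ≤ Metric.infDist x K := Metric.infDist_nonneg
      obtain ⟨n, hn⟩ := exists_pow_lt_of_lt_one (x := t / (Metric.infDist x K + 1))
        (by positivity) hρ1
      refine ⟨n, ?_⟩
      rw [lt_div_iff₀ (by positivity)] at hn
      rw [le_div_iff₀ (by positivity)]
      nlinarith [pow_pos hρ0 n]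
    rw [hemp, measure_empty] at hlim
    exact le_antisymm (ge_of_tendsto' hlim fun n => stepn n t) (zero_le)
  have hcover : {x | x ∉ K} ⊆ ⋃ n : ℕ, {x | 1 / ((n : ℝ) + 1) < Metric.infDist x K} := by
    intro x hx
    have : 0 < Metric.infDist x K := (hKc.isClosed.notMem_iff_infDist_pos hKne).1 hx
    obtain ⟨n, hn⟩ := exists_nat_one_div_lt this
    exact Set.mem_iUnion.2 ⟨n, hn⟩
  rw [ae_iff]
  refine measure_mono_null hcover (measure_iUnion_null fun n => hzero _ (by positivity))

lemma exists_sep (hKc : IsCompact K)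
    (hsep : ∀ j j' : Fin m, j ≠ j' →
      Disjoint ((fun x => ρ * x + a j) '' K) ((fun x => ρ * x + a j') '' K)) :
    ∃ δ : ℝ, 0 < δ ∧ ∀ j j' : Fin m, j ≠ j' → ∀ x ∈ K, ∀ y ∈ K,
      δ ≤ |(ρ * x + a j) - (ρ * y + a j')| := by
  have hc : ∀ j, IsCompact ((fun x => ρ * x + a j) '' K) := fun j => hKc.image (by fun_prop)
  have h : ∀ᶠ δ : ℝ in nhdsWithin 0 (Set.Ioi 0), ∀ j j' : Fin m, j ≠ j' → ∀ x ∈ K, ∀ y ∈ K,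
      δ ≤ |(ρ * x + a j) - (ρ * y + a j')| := by
    rw [Filter.eventually_all]; intro j
    rw [Filter.eventually_all]; intro j'
    by_cases hjj : j = j'
    · filter_upwards with δ h using absurd hjj h
    obtain ⟨r, hr, h⟩ := Metric.exists_pos_forall_lt_edist (hc j) (hc j').isClosed (hsep j j' hjj)
    have : Set.Ioo (0 : ℝ) r ∈ nhdsWithin (0 : ℝ) (Set.Ioi 0) := Ioo_mem_nhdsGT (by exact_mod_cast hr)
    filter_upwards [this] with δ hδ _ x hx y hy
    have h2 := h _ ⟨x, hx, rfl⟩ _ ⟨y, hy, rfl⟩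
    rw [edist_dist, Real.dist_eq, ← ENNReal.ofReal_coe_nnreal] at h2
    have h3 := (ENNReal.ofReal_lt_ofReal_iff_of_nonneg r.2).1 h2
    exact (hδ.2.trans h3).le
  obtain ⟨δ, h1, h2⟩ := (h.and self_mem_nhdsWithin).exists
  exact ⟨δ, h2, h1⟩

lemma exists_P (hm : 2 ≤ m) (hp : ∀ j, 0 < p j) (hp1 : ∑ j, p j = 1) :
    ∃ P : ℝ, 0 < P ∧ P < 1 ∧ ∀ j, p j ≤ P := by
  have : Nontrivial (Fin m) := Fin.nontrivial_iff_two_le.2 hm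
  have hlt : ∀ j, p j < 1 := by
    intro j
    obtain ⟨i, hi⟩ := exists_ne j
    rw [← hp1]
    exact Finset.single_lt_sum hi (Finset.mem_univ j) (Finset.mem_univ i) (hp i)
      (fun k _ _ => (hp k).le)
  have h : ∀ᶠ P : ℝ in nhdsWithin 1 (Set.Iio 1), ∀ j, p j ≤ P := by
    rw [Filter.eventually_all]; intro j
    filter_upwards [Ioo_mem_nhdsLT (hlt j)] with P hP using hP.1.le
  obtain ⟨P, h1, h2⟩ := (h.and self_mem_nhdsWithin).exists
  exact ⟨P, (hp ⟨0, by omega⟩).trans_le (h1 _), h2, h1⟩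

lemma frost0 [IsProbabilityMeasure μ] (hρ0 : 0 < ρ) (hρ1 : ρ < 1)
    (hμ : μ = ∑ j : Fin m, ENNReal.ofReal (p j) • Measure.map (fun x => ρ * x + a j) μ)
    (hK : ∀ᵐ x ∂μ, x ∈ K) {δ : ℝ} (hδ : 0 < δ)
    (hsep : ∀ j j' : Fin m, j ≠ j' → ∀ x ∈ K, ∀ y ∈ K, δ ≤ |(ρ * x + a j) - (ρ * y + a j')|)
    {P : ℝ} (hP0 : 0 < P) (hP : ∀ j, p j ≤ P) (k : ℕ) :
    ∀ x r : ℝ, r < δ * ρ ^ k → μ (Set.Icc x (x + r)) ≤ ENNReal.ofReal (P ^ k) := by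
  induction k with
  | zero => intro x r _; simpa using prob_le_one
  | succ k ih =>
    intro x r hr
    have hpre : ∀ j, (fun y => ρ * y + a j) ⁻¹' Set.Icc x (x + r)
        = Set.Icc ((x - a j) / ρ) ((x - a j) / ρ + r / ρ) := by
      intro j
      ext y
      simp only [Set.mem_preimage, Set.mem_Icc]
      rw [← add_div, div_le_iff₀ hρ0, le_div_iff₀ hρ0]
      constructor <;> rintro ⟨h1, h2⟩ <;> constructor <;> linarith
    have hrδ : r < δ := by
      have : ρ ^ (k + 1) ≤ 1 := pow_le_one₀ hρ0.le hρ1.le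
      nlinarith
    rw [ss_meas hμ measurableSet_Icc]
    have hz : ∀ j, (∀ y ∈ K, ρ * y + a j ∉ Set.Icc x (x + r)) →
        μ ((fun y => ρ * y + a j) ⁻¹' Set.Icc x (x + r)) = 0 := by
      intro j h
      rw [ae_iff] at hK
      refine measure_mono_null ?_ hK
      intro y hy hyK
      exact h y hyK hy
    by_cases hex : ∃ j, ∃ y ∈ K, ρ * y + a j ∈ Set.Icc x (x + r)
    · obtain ⟨j, y, hy, hyI⟩ := hex
      rw [Finset.sum_eq_single j]
      · rw [hpre, pow_succ', ENNReal.ofReal_mul hP0.le]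
        gcongr
        · exact hP j
        · apply ih
          rw [div_lt_iff₀ hρ0, mul_assoc, ← pow_succ]
          exact hr
      · intro i _ hij
        rw [hz i, mul_zero]
        intro z hz hzI
        have := hsep i j hij z hz y hy
        have h2 : |(ρ * z + a i) - (ρ * y + a j)| ≤ r := by
          rw [abs_le]
          constructor <;> linarith [hzI.1, hzI.2, hyI.1, hyI.2]
        linarith
      · simp
    · push Not at hex
      rw [Finset.sum_eq_zero]
      · exact zero_le
      · intro j _
        rw [hz j (hex j), mul_zero]

lemma frost [IsProbabilityMeasure μ] (hρ0 : 0 < ρ) (hρ1 : ρ < 1)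
    (hμ : μ = ∑ j : Fin m, ENNReal.ofReal (p j) • Measure.map (fun x => ρ * x + a j) μ)
    (hK : ∀ᵐ x ∂μ, x ∈ K) {δ : ℝ} (hδ : 0 < δ)
    (hsep : ∀ j j' : Fin m, j ≠ j' → ∀ x ∈ K, ∀ y ∈ K, δ ≤ |(ρ * x + a j) - (ρ * y + a j')|)
    {P : ℝ} (hP0 : 0 < P) (hP1 : P < 1) (hP : ∀ j, p j ≤ P) {A : ℝ} (hA : 0 < A) :
    ∃ C : ℝ, 0 < C ∧ ∀ (k : ℕ) (x : ℝ),
      μ (Set.Icc x (x + A * ρ ^ k)) ≤ ENNReal.ofReal (C * P ^ k) := by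
  obtain ⟨n, hn⟩ := exists_pow_lt_of_lt_one (x := δ / A) (by positivity) hρ1
  rw [lt_div_iff₀ hA] at hn
  refine ⟨(P ^ n)⁻¹, by positivity, ?_⟩
  intro k x
  rcases le_or_gt n k with h | h
  · obtain ⟨l, rfl⟩ := Nat.exists_eq_add_of_le h
    have : (P ^ n)⁻¹ * P ^ (n + l) = P ^ l := by
      rw [pow_add]; field_simp
    rw [this]
    apply frost0 hρ0 hρ1 hμ hK hδ hsep hP0 hP
    rw [pow_add, ← mul_assoc, mul_comm A]
    exact mul_lt_mul_of_pos_right hn (pow_pos hρ0 l)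
  · refine prob_le_one.trans ?_
    rw [← ENNReal.ofReal_one]
    apply ENNReal.ofReal_le_ofReal
    rw [inv_mul_eq_div, one_le_div (by positivity)]
    exact pow_le_pow_of_le_one hP0.le hP1.le h.le

lemma lin [IsProbabilityMeasure μ]
    (hp : ∀ j, 0 < p j) (hp1 : ∑ j, p j = 1)
    (hμ : μ = ∑ j : Fin m, ENNReal.ofReal (p j) • Measure.map (fun x => ρ * x + a j) μ)
    (hKattr : K = ⋃ j : Fin m, (fun x => ρ * x + a j) '' K)
    (hK : ∀ᵐ x ∂μ, x ∈ K) {D : ℝ} (hD : ∀ x ∈ K, ∀ y ∈ K, |x - y| ≤ D) (n : ℕ) :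
    ∀ (f g : ℝ → ℝ) (B : ℝ), 0 ≤ B → Continuous f → Continuous g →
      (∀ x ∈ K, ∀ t ∈ K, |f t - f x - g x * (t - x)| ≤ B * (t - x) ^ 2) →
      ‖∫ t, ee (f t) ∂μ‖ ≤ ∫ x, ‖FT μ (ρ ^ n * g x)‖ ∂μ + 2 * π * D ^ 2 * B * (ρ ^ 2) ^ n := by
  have hFTi : ∀ h : ℝ → ℝ, Continuous h → Integrable (fun x => ‖FT μ (h x)‖) μ := by
    intro h hh
    refine Integrable.of_bound ((FT_cont μ).comp hh).norm.aestronglyMeasurable 1 ?_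
    filter_upwards with x
    simpa using FT_le_one μ _
  induction n with
  | zero =>
    intro f g B hB hf hg hfg
    simp only [pow_zero, one_mul, mul_one]
    set I := ‖∫ t, ee (f t) ∂μ‖ with hI
    have key : ∀ x ∈ K, I ≤ ‖FT μ (g x)‖ + 2 * π * D ^ 2 * B := by
      intro x hx
      have h1 : ∫ t, ee (f x + g x * (t - x)) ∂μ = ee (f x - g x * x) * FT μ (g x) := by
        unfold FT
        rw [← integral_const_mul]
        congr 1
        ext t
        rw [← ee_add]
        ring_nf
      have h2 : ‖(∫ t, ee (f t) ∂μ) - ∫ t, ee (f x + g x * (t - x)) ∂μ‖ ≤ 2 * π * D ^ 2 * B := by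
        rw [← integral_sub (ee_integrable μ hf) (ee_integrable μ (by fun_prop))]
        have := norm_integral_le_of_norm_le_const (μ := μ)
          (f := fun t => ee (f t) - ee (f x + g x * (t - x))) (C := 2 * π * D ^ 2 * B) ?_
        · simpa using this
        filter_upwards [hK] with t ht
        refine (ee_sub_le _ _).trans ?_
        have h3 := hfg x hx t ht
        have h4 : (t - x) ^ 2 ≤ D ^ 2 := by
          rw [← sq_abs]
          have := hD t ht x hx
          gcongr
        have h5 : B * (t - x) ^ 2 ≤ B * D ^ 2 := by gcongr
        rw [← sub_sub]
        calc _ ≤ 2 * π * (B * D ^ 2) := by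
              have := h3.trans h5
              gcongr
          _ = _ := by ring
      rw [h1] at h2
      have h6 := norm_le_norm_add_norm_sub' (∫ t, ee (f t) ∂μ) (ee (f x - g x * x) * FT μ (g x))
      rw [norm_mul, ee_norm, one_mul] at h6
      linarith
    have h7 : ∫ x, I ∂μ ≤ ∫ x, (‖FT μ (g x)‖ + 2 * π * D ^ 2 * B) ∂μ := by
      refine integral_mono_ae (integrable_const _) ((hFTi g hg).add (integrable_const _)) ?_
      filter_upwards [hK] with x hx using key x hx
    rw [integral_add (hFTi g hg) (integrable_const _)] at h7
    simpa using h7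
  | succ n ih =>
    intro f g B hB hf hg hfg
    rw [ss_int hp hμ (fun t => ee (f t)) (ee_cont.comp hf).stronglyMeasurable 1
      (fun x => (ee_norm _).le)]
    rw [ss_int hp hμ (fun x => ‖FT μ (ρ ^ (n + 1) * g x)‖)
      (((FT_cont μ).comp (by fun_prop)).norm).stronglyMeasurable 1
      (fun x => by simpa using FT_le_one μ _)]
    have hc : 2 * π * D ^ 2 * B * (ρ ^ 2) ^ (n + 1)
        = ∑ j, p j • (2 * π * D ^ 2 * B * (ρ ^ 2) ^ (n + 1)) := by
      rw [← Finset.sum_smul, hp1, one_smul]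
    rw [hc, ← Finset.sum_add_distrib]
    refine (norm_sum_le _ _).trans (Finset.sum_le_sum fun j _ => ?_)
    rw [norm_smul, Real.norm_eq_abs, abs_of_pos (hp j), ← smul_add, smul_eq_mul]
    refine mul_le_mul_of_nonneg_left ?_ (hp j).le
    have := ih (fun t => f (ρ * t + a j)) (fun x => ρ * g (ρ * x + a j)) (B * ρ ^ 2)
      (by positivity) (by fun_prop) (by fun_prop) ?_
    · refine this.trans (le_of_eq ?_)
      congr 1
      · congr 1
        ext x
        rw [← mul_assoc, ← pow_succ]
      · ring
    · intro x hx t ht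
      have := hfg _ (maps_K hKattr j hx) _ (maps_K hKattr j ht)
      convert this using 1
      · ring_nf
      · ring

end SS2

lemma cover_le {ν : Measure ℝ} {l : ℝ} {κ : ENNReal} (hl : 0 < l)
    (hν : ∀ x, ν (Set.Icc x (x + l)) ≤ κ) (n : ℕ) :
    ∀ x r : ℝ, r ≤ n * l → ν (Set.Icc x (x + r)) ≤ (n + 1) * κ := by
  induction n with
  | zero =>
    intro x r hr
    simp only [Nat.cast_zero, zero_mul, zero_add, one_mul] at *
    exact (measure_mono (Set.Icc_subset_Icc le_rfl (by linarith))).trans (hν x)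
  | succ n ih =>
    intro x r hr
    have hsub : Set.Icc x (x + r) ⊆ Set.Icc x (x + l) ∪ Set.Icc (x + l) (x + l + (r - l)) := by
      intro y hy
      rcases le_total y (x + l) with h | h
      · exact Or.inl ⟨hy.1, h⟩
      · exact Or.inr ⟨h, by linarith [hy.2]⟩
    refine (measure_mono hsub).trans ((measure_union_le _ _).trans ?_)
    have h1 := ih (x + l) (r - l) (by push_cast at hr; linarith)
    refine (add_le_add (hν x) h1).trans (le_of_eq ?_)
    push_cast
    ring

lemma good_loc {d ρ : ℝ} (hρ0 : 0 < ρ) (hρ1 : ρ < 1) (hd : d ≠ 0) (x : ℝ) :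
    ∃ z : ℝ, ∀ y ∈ Set.Icc x (x + ρ / (4 * |d|) / ρ), y ∉ Set.Icc z (z + ρ / (4 * |d|)) →
      ρ / 16 ≤ |d * y - round (d * y)| := by
  have hd0 : 0 < |d| := abs_pos.2 hd
  by_cases h : ∃ y0 ∈ Set.Icc x (x + ρ / (4 * |d|) / ρ), |d * y0 - round (d * y0)| < ρ / 16
  · obtain ⟨y0, hy0, h0⟩ := h
    refine ⟨y0 - ρ / (4 * |d|) / 2, ?_⟩
    intro y hy hyn
    by_contra! hlt
    apply hyn
    have e1 : ρ / (4 * |d|) / ρ = 1 / (4 * |d|) := by field_simp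
    rw [e1] at hy hy0
    have h1 : |y - y0| ≤ 1 / (4 * |d|) := by
      rw [abs_le]; constructor <;> linarith [hy.1, hy.2, hy0.1, hy0.2]
    have h2 : |d * y - d * y0| ≤ 1 / 4 := by
      rw [← mul_sub, abs_mul]
      calc |d| * |y - y0| ≤ |d| * (1 / (4 * |d|)) := by gcongr
        _ = 1 / 4 := by field_simp
    have hr : round (d * y) = round (d * y0) := by
      have h3 : |((round (d * y) - round (d * y0) : ℤ) : ℝ)| < 1 := by
        push_cast
        rw [abs_lt] at *
        rw [abs_le] at h2
        constructor <;> linarith [h0.1, h0.2, hlt.1, hlt.2, h2.1, h2.2]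
      have h4 : |round (d * y) - round (d * y0)| < 1 := by exact_mod_cast h3
      have := Int.abs_lt_one_iff.1 h4
      omega
    rw [hr] at hlt
    have h5 : |d| * |y - y0| ≤ ρ / 8 := by
      rw [← abs_mul, mul_sub]
      rw [abs_lt] at hlt h0
      rw [abs_le]
      constructor <;> linarith [h0.1, h0.2, hlt.1, hlt.2]
    have h6 : |y - y0| ≤ ρ / (4 * |d|) / 2 := by
      rw [div_div, le_div_iff₀ (by positivity)]
      linarith
    rw [abs_le] at h6
    constructor <;> linarith [h6.1, h6.2]
  · push Not at h
    exact ⟨0, fun y hy _ => h y hy⟩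

lemma lemA {d ρ : ℝ} (hρ0 : 0 < ρ) (hρ1 : ρ < 1) (hd : d ≠ 0) {G H : ℝ → ENNReal} {η : ENNReal}
    (hGm : Measurable G) (hHm : Measurable H) (hG1 : ∀ y, G y ≤ 1) (hH1 : ∀ y, H y ≤ 1)
    (hrec : ∀ y, G y ≤ H y * G (ρ * y))
    (hbad : ∀ y, ρ / 16 ≤ |d * y - round (d * y)| → H y ≤ η)
    {n0 n1 : ℕ} (hn0 : 2 ≤ n0 * (ρ / (4 * |d|))) (hn1 : 1 ≤ n1 * ρ) (N : ℕ) :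
    ∀ (ν : Measure ℝ) (κ : ENNReal), (∀ x, ν (Set.Icc x (x + ρ / (4 * |d|))) ≤ κ) →
      ∫⁻ y in Set.Icc (-(ρ⁻¹ ^ N)) (ρ⁻¹ ^ N), G y ∂ν
        ≤ (n0 + 1) * (1 + η * (n1 + 1)) ^ N * κ := by
  have hd0 : 0 < |d| := abs_pos.2 hd
  have hl : 0 < ρ / (4 * |d|) := by positivity
  induction N with
  | zero =>
    intro ν κ hν
    calc _ ≤ ∫⁻ y in Set.Icc (-(ρ⁻¹ ^ 0)) (ρ⁻¹ ^ 0), 1 ∂ν := lintegral_mono fun y => hG1 y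
      _ = ν (Set.Icc (-1) (-1 + 2)) := by
        rw [setLIntegral_one]; norm_num
      _ ≤ _ := by
        have := cover_le hl hν n0 (-1) 2 hn0
        simpa using this
  | succ N ih =>
    intro ν κ hν
    set ν' := (ν.withDensity H).map (fun y => ρ * y) with hν'
    have hmul : Measurable (fun y : ℝ => ρ * y) := by fun_prop
    have h1 : ∀ x, ν' (Set.Icc x (x + ρ / (4 * |d|))) ≤ κ * (1 + η * (n1 + 1)) := by
      intro x
      rw [hν', Measure.map_apply hmul measurableSet_Icc]
      have hpre : (fun y => ρ * y) ⁻¹' Set.Icc x (x + ρ / (4 * |d|))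
          = Set.Icc (x / ρ) (x / ρ + ρ / (4 * |d|) / ρ) := by
        ext y
        simp only [Set.mem_preimage, Set.mem_Icc]
        rw [← add_div, div_le_iff₀ hρ0, le_div_iff₀ hρ0, mul_comm ρ y]
      rw [hpre, withDensity_apply _ measurableSet_Icc]
      obtain ⟨z, hz⟩ := good_loc hρ0 hρ1 hd (x / ρ)
      set J := Set.Icc (x / ρ) (x / ρ + ρ / (4 * |d|) / ρ) with hJ
      set I := Set.Icc z (z + ρ / (4 * |d|)) with hI
      calc ∫⁻ y in J, H y ∂ν ≤ ∫⁻ y in J, (I.indicator 1 y + η) ∂ν := by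
            refine setLIntegral_mono' measurableSet_Icc fun y hy => ?_
            by_cases hyI : y ∈ I
            · rw [Set.indicator_of_mem hyI]
              exact (hH1 y).trans le_self_add
            · exact (hbad y (hz y hy hyI)).trans le_add_self
        _ = ∫⁻ y in J, I.indicator 1 y ∂ν + η * ν J := by
            rw [lintegral_add_right _ measurable_const, setLIntegral_const]
        _ ≤ ∫⁻ y, I.indicator 1 y ∂ν + η * ((n1 + 1) * κ) := by
            gcongr
            · exact Measure.restrict_le_self
            · refine cover_le hl hν n1 _ _ ?_
              rw [div_le_iff₀ hρ0]
              nlinarith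
        _ ≤ κ + η * ((n1 + 1) * κ) := by
            rw [lintegral_indicator_one measurableSet_Icc]
            gcongr
            exact hν z
        _ = _ := by ring
    calc _ ≤ ∫⁻ y in Set.Icc (-(ρ⁻¹ ^ (N + 1))) (ρ⁻¹ ^ (N + 1)), H y * G (ρ * y) ∂ν :=
          lintegral_mono fun y => hrec y
      _ = ∫⁻ y in Set.Icc (-(ρ⁻¹ ^ N)) (ρ⁻¹ ^ N), G y ∂ν' := by
          rw [hν', setLIntegral_map measurableSet_Icc hGm hmul]
          have hpre : (fun y => ρ * y) ⁻¹' Set.Icc (-(ρ⁻¹ ^ N)) (ρ⁻¹ ^ N)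
              = Set.Icc (-(ρ⁻¹ ^ (N + 1))) (ρ⁻¹ ^ (N + 1)) := by
            ext y
            simp only [Set.mem_preimage, Set.mem_Icc, ← abs_le]
            rw [abs_mul, abs_of_pos hρ0, pow_succ, ← div_eq_mul_inv, le_div_iff₀ hρ0, mul_comm]
          rw [hpre, setLIntegral_withDensity_eq_setLIntegral_mul (g := fun y => G (ρ * y)) ν hHm (hGm.comp hmul)
            measurableSet_Icc]
          rfl
      _ ≤ (n0 + 1) * (1 + η * (n1 + 1)) ^ N * (κ * (1 + η * (n1 + 1))) := ih ν' _ h1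
      _ = _ := by ring

lemma moment {m : ℕ} {ρ : ℝ} {a p : Fin m → ℝ} {μ : Measure ℝ} [IsProbabilityMeasure μ]
    (hρ0 : 0 < ρ) (hρ1 : ρ < 1) (hp : ∀ j, 0 < p j) (hp1 : ∑ j, p j = 1)
    (hμ : μ = ∑ j : Fin m, ENNReal.ofReal (p j) • Measure.map (fun x => ρ * x + a j) μ)
    {i j : Fin m} (hij : i ≠ j) (hd : a j - a i ≠ 0) {β : ℝ} (hβ : 1 < β) :
    ∃ (Q : ℕ) (C : ℝ), 0 < C ∧ ∀ (N : ℕ) (ν : Measure ℝ) (κ : ℝ), 0 ≤ κ →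
      (∀ x, ν (Set.Icc x (x + ρ / (4 * |a j - a i|))) ≤ ENNReal.ofReal κ) →
      ∫⁻ y in Set.Icc (-(ρ⁻¹ ^ N)) (ρ⁻¹ ^ N), ENNReal.ofReal (‖FT μ y‖ ^ (Q + 1)) ∂ν
        ≤ ENNReal.ofReal (C * β ^ N * κ) := by
  set d := a j - a i with hdd
  have hd0 : 0 < |d| := abs_pos.2 hd
  obtain ⟨l, hl0, hl1, hl⟩ := Phi_bad (a := a) hp hp1 hij (c := ρ / 16) (by positivity)
  obtain ⟨n1, hn1⟩ := exists_nat_ge (1 / ρ)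
  obtain ⟨n0, hn0⟩ := exists_nat_ge (2 / (ρ / (4 * |d|)))
  rw [div_le_iff₀ (by positivity)] at hn0 hn1
  obtain ⟨Q, hQ⟩ := exists_pow_lt_of_lt_one (x := (β - 1) / ((n1 : ℝ) + 1))
    (div_pos (by linarith) (by positivity)) hl1
  rw [lt_div_iff₀ (by positivity)] at hQ
  refine ⟨Q, (n0 : ℝ) + 1, by positivity, ?_⟩
  intro N ν κ hκ hν
  have hpow : ∀ z : ℂ, ‖z‖ ≤ 1 → ENNReal.ofReal (‖z‖ ^ (Q + 1)) ≤ 1 := by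
    intro z hz
    rw [← ENNReal.ofReal_one]
    exact ENNReal.ofReal_le_ofReal (pow_le_one₀ (norm_nonneg _) hz)
  have h := lemA (d := d) (G := fun y => ENNReal.ofReal (‖FT μ y‖ ^ (Q + 1)))
    (H := fun y => ENNReal.ofReal (‖Phi a p y‖ ^ (Q + 1))) (η := ENNReal.ofReal (l ^ (Q + 1)))
    hρ0 hρ1 hd
    (ENNReal.measurable_ofReal.comp ((FT_cont μ).norm.pow _).measurable)
    (ENNReal.measurable_ofReal.comp ((Phi_cont (a := a) (p := p)).norm.pow _).measurable)
    (fun y => hpow _ (FT_le_one μ y)) (fun y => hpow _ (Phi_le_one hp hp1 y)) ?_ ?_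
    hn0 hn1 N ν _ hν
  · refine h.trans ?_
    rw [ENNReal.ofReal_mul (by positivity), ENNReal.ofReal_mul (by positivity),
      ENNReal.ofReal_pow (p := β) (by linarith)]
    gcongr
    · rw [ENNReal.ofReal_add (by positivity) (by positivity)]; simp
    · have e : (1 : ENNReal) + ENNReal.ofReal (l ^ (Q + 1)) * (n1 + 1)
          = ENNReal.ofReal (1 + l ^ (Q + 1) * (n1 + 1)) := by
        rw [ENNReal.ofReal_add (by positivity) (by positivity),
          ENNReal.ofReal_mul (by positivity), ENNReal.ofReal_add (by positivity) (by positivity)]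
        simp
      rw [e]
      apply ENNReal.ofReal_le_ofReal
      have : l ^ (Q + 1) ≤ l ^ Q := pow_le_pow_of_le_one hl0 hl1.le (by omega)
      nlinarith [Nat.cast_nonneg (α := ℝ) n1]
  · intro y
    rw [← ENNReal.ofReal_mul (by positivity), ← mul_pow, ← norm_mul, ← FT_rec hp hμ]
  · intro y hy
    apply ENNReal.ofReal_le_ofReal
    have := hl y hy
    gcongr

lemma calc_bounds {K : Set ℝ} (hKc : IsCompact K) {φ : ℝ → ℝ} (hφ : ContDiff ℝ 2 φ)
    (hφ'' : ∀ t, 0 < deriv (deriv φ) t) :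
    ∃ b B D E : ℝ, 0 < b ∧ 0 < B ∧ 0 < D ∧ 0 < E ∧
      (∀ x ∈ K, ∀ t ∈ K, |φ t - φ x - deriv φ x * (t - x)| ≤ B * (t - x) ^ 2) ∧
      (∀ x ∈ K, ∀ y ∈ K, b * |x - y| ≤ |deriv φ x - deriv φ y|) ∧
      (∀ x ∈ K, |deriv φ x| ≤ D) ∧ (∀ x ∈ K, ∀ y ∈ K, |x - y| ≤ E) := by
  have h1 : ContDiff ℝ 1 (deriv φ) := by
    have : ContDiff ℝ (1 + 1) φ := by simpa [one_add_one_eq_two] using hφ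
    exact (contDiff_succ_iff_deriv.1 this).2.2
  have hd0 : Differentiable ℝ φ := hφ.differentiable (by norm_num)
  have hd1 : Differentiable ℝ (deriv φ) := h1.differentiable (by norm_num)
  have hc2 : Continuous (deriv (deriv φ)) := h1.continuous_deriv (by norm_num)
  obtain ⟨R, hR⟩ := hKc.isBounded.subset_closedBall 0
  set J := Set.Icc (-|R| - 1) (|R| + 1) with hJ
  have hR0 := abs_nonneg R
  have hKJ : ∀ x ∈ K, x ∈ J := by
    intro x hx
    have := hR hx
    rw [mem_closedBall_zero_iff, Real.norm_eq_abs] at this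
    have h2 := abs_le.1 (this.trans (le_abs_self R))
    exact ⟨by linarith [h2.1], by linarith [h2.2]⟩
  have hJc : IsCompact J := isCompact_Icc
  have hJne : J.Nonempty := ⟨0, by constructor <;> linarith⟩
  have hJconv : Convex ℝ J := convex_Icc _ _
  obtain ⟨x0, hx0, hmin⟩ := hJc.exists_isMinOn hJne hc2.continuousOn
  obtain ⟨B, hB⟩ := hJc.exists_bound_of_continuousOn hc2.continuousOn
  obtain ⟨D, hD⟩ := hJc.exists_bound_of_continuousOn hd1.continuous.continuousOn
  have hB' : ∀ x ∈ J, ∀ y ∈ J, |deriv φ x - deriv φ y| ≤ (|B| + 1) * |x - y| := by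
    intro x hx y hy
    have := hJconv.norm_image_sub_le_of_norm_deriv_le (f := deriv φ) (C := |B| + 1)
      (fun z _ => hd1 z) (fun z hz => (hB z hz).trans (by linarith [le_abs_self B])) hy hx
    simpa using this
  refine ⟨deriv (deriv φ) x0, |B| + 1, |D| + 1, 2 * (|R| + 1), hφ'' _, by positivity, by positivity,
    by positivity, ?_, ?_, ?_, ?_⟩
  · intro x hx t ht
    have hsub : Set.uIcc x t ⊆ J := by
      have := hJconv.ordConnected
      exact this.uIcc_subset (hKJ x hx) (hKJ t ht)
    have hder : ∀ s, HasDerivAt (fun s => φ s - deriv φ x * s) (deriv φ s - deriv φ x) s := by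
      intro s
      have h := (hd0 s).hasDerivAt.sub ((hasDerivAt_id s).const_mul (deriv φ x))
      rw [mul_one] at h
      exact h
    have := (convex_uIcc x t).norm_image_sub_le_of_norm_hasDerivWithin_le
      (f := fun s => φ s - deriv φ x * s) (f' := fun s => deriv φ s - deriv φ x)
      (C := (|B| + 1) * |t - x|) (fun s _ => (hder s).hasDerivWithinAt) ?_
      Set.left_mem_uIcc Set.right_mem_uIcc
    · rw [Real.norm_eq_abs, Real.norm_eq_abs] at this
      calc _ = |φ t - deriv φ x * t - (φ x - deriv φ x * x)| := by congr 1; ring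
        _ ≤ _ := this
        _ = _ := by rw [mul_assoc, abs_mul_abs_self]; ring
    · intro s hs
      refine (hB' s (hsub hs) x (hKJ x hx)).trans ?_
      have := Set.abs_sub_left_of_mem_uIcc hs
      gcongr
  · have key : ∀ x ∈ J, ∀ y ∈ J, x ≤ y → deriv (deriv φ) x0 * (y - x) ≤ deriv φ y - deriv φ x := by
      intro x hx y hy hxy
      exact hJconv.mul_sub_le_image_sub_of_le_deriv hd1.continuous.continuousOn
        hd1.differentiableOn (fun z hz => hmin (interior_subset hz)) x hx y hy hxy
    intro x hx y hy
    rcases le_total x y with h | h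
    · rw [abs_sub_comm, abs_of_nonneg (sub_nonneg.2 h), abs_sub_comm]
      exact (key x (hKJ x hx) y (hKJ y hy) h).trans (le_abs_self _)
    · rw [abs_of_nonneg (sub_nonneg.2 h)]
      exact (key y (hKJ y hy) x (hKJ x hx) h).trans (le_abs_self _)
  · intro x hx
    have := hD x (hKJ x hx)
    rw [Real.norm_eq_abs] at this
    linarith [le_abs_self D]
  · intro x hx y hy
    have h2 := hKJ x hx
    have h3 := hKJ y hy
    rw [abs_le]
    constructor <;> linarith [h2.1, h2.2, h3.1, h3.2]

theorem stmt1
    (m : ℕ) (hm : 2 ≤ m) (ρ : ℝ) (hρ0 : 0 < ρ) (hρ1 : ρ < 1)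
    (a : Fin m → ℝ) (p : Fin m → ℝ) (hp : ∀ j, 0 < p j) (hp1 : ∑ j, p j = 1)
    (μ : Measure ℝ) [IsProbabilityMeasure μ]
    (hμ : μ = ∑ j : Fin m, ENNReal.ofReal (p j) • Measure.map (fun x => ρ * x + a j) μ)
    (K : Set ℝ) (hKc : IsCompact K) (hKne : K.Nonempty)
    (hKattr : K = ⋃ j : Fin m, (fun x => ρ * x + a j) '' K)
    (hsep : ∀ j j' : Fin m, j ≠ j' →
      Disjoint ((fun x => ρ * x + a j) '' K) ((fun x => ρ * x + a j') '' K))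
    (φ : ℝ → ℝ) (hφ : ContDiff ℝ 2 φ) (hφ'' : ∀ t, 0 < deriv (deriv φ) t) :
    ∃ γ > (0 : ℝ), ∃ C > (0 : ℝ), ∀ ξ : ℝ, 1 ≤ |ξ| →
      ‖∫ t, Complex.exp (2 * Real.pi * Complex.I * ξ * t) ∂(Measure.map φ μ)‖
        ≤ C * |ξ| ^ (-γ) := by
  have hK := supp_K hρ0 hρ1 hp hp1 hμ hKc hKne hKattr
  obtain ⟨δ, hδ, hδsep⟩ := exists_sep hKc hsep
  obtain ⟨P, hP0, hP1, hP⟩ := exists_P hm hp hp1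
  obtain ⟨b, B, D, E, hb, hB, hD, hE, hquad, hlow, hDb, hEb⟩ := calc_bounds hKc hφ hφ''
  have hφc : Continuous φ := hφ.continuous
  have hφ'c : Continuous (deriv φ) := hφ.continuous_deriv (by norm_num)
  have hntr : Nontrivial (Fin m) := Fin.nontrivial_iff_two_le.2 hm
  obtain ⟨i, j, hij⟩ := exists_pair_ne (Fin m)
  have hd : a j - a i ≠ 0 := by
    obtain ⟨x, hx⟩ := hKne
    have := hδsep j i hij.symm x hx x hx
    intro h0
    rw [show ρ * x + a j - (ρ * x + a i) = a j - a i by ring, h0, abs_zero] at this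
    linarith
  set l := ρ / (4 * |a j - a i|) with hl
  have hl0 : 0 < l := by
    have := abs_pos.2 hd
    positivity
  -- growth parameter
  set β := (1 + P) / (2 * P) with hβdef
  have hβ : 1 < β := by
    rw [hβdef, lt_div_iff₀ (by positivity)]; linarith
  have hβP : β * P < 1 := by
    have : β * P = (1 + P) / 2 := by rw [hβdef]; field_simp
    rw [this]; linarith
  obtain ⟨Q, C1, hC1, hmom⟩ := moment hρ0 hρ1 hp hp1 hμ hij hd hβ
  obtain ⟨CF, hCF, hfrost⟩ := frost hρ0 hρ1 hμ hK hδ hδsep hP0 hP1 hP (A := 2 * (l / b))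
    (by positivity)
  -- decay rate s
  obtain ⟨s, hs0, hs1, hsρ, hsQ⟩ : ∃ s : ℝ, 0 < s ∧ s < 1 ∧ ρ ≤ s ∧ β * P ≤ s ^ (Q + 1) := by
    have t1 : Filter.Tendsto (fun s : ℝ => s ^ (Q + 1)) (nhdsWithin 1 (Set.Iio 1)) (nhds 1) := by
      have : ContinuousAt (fun s : ℝ => s ^ (Q + 1)) 1 := by fun_prop
      have h2 := this.tendsto
      simp only [one_pow] at h2
      exact h2.mono_left nhdsWithin_le_nhds
    obtain ⟨s, ⟨h1, h2⟩, h3⟩ := ((t1.eventually_const_le hβP).and (Ioo_mem_nhdsLT hρ1)).exists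
      |>.imp fun s hs => (⟨⟨hs.1, hs.2.1⟩, hs.2.2⟩ : (β * P ≤ s ^ (Q + 1) ∧ ρ < s) ∧ s < 1)
    exact ⟨s, hρ0.trans h2, h3, h2.le, h1⟩
  set θ := ρ⁻¹ with hθ
  have hθ1 : 1 < θ := (one_lt_inv₀ hρ0).2 hρ1
  have hθ0 : 0 < θ := by positivity
  have hρθ : ρ * θ = 1 := mul_inv_cancel₀ hρ0.ne'
  obtain ⟨k1, hk1⟩ := pow_unbounded_of_one_lt D hθ1
  set A := C1 * β ^ (3 + k1) * CF with hA
  have hβ0 : 0 < β := by linarith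
  have hA0 : 0 < A := by positivity
  set C2 := 1 + A + 2 * π * E ^ 2 * B * θ ^ 3 with hC2
  have hC20 : 0 < C2 := by positivity
  have hL1 : 1 < θ ^ 3 := one_lt_pow₀ hθ1 (by norm_num)
  have hlogL : 0 < Real.log (θ ^ 3) := Real.log_pos hL1
  have hlogs : Real.log s < 0 := Real.log_neg hs0 hs1
  set γ := -Real.log s / Real.log (θ ^ 3) with hγ
  have hγ0 : 0 < γ := div_pos (by linarith) hlogL
  have hLγ : (θ ^ 3) ^ (-γ) = s := by
    rw [Real.rpow_def_of_pos (by positivity), hγ]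
    rw [show Real.log (θ ^ 3) * -(-Real.log s / Real.log (θ ^ 3)) = Real.log s by
      field_simp]
    exact Real.exp_log hs0
  refine ⟨γ, hγ0, C2 * s⁻¹, by positivity, ?_⟩
  intro ξ hξ
  have hξ0 : 0 < |ξ| := by linarith
  obtain ⟨k, hk, hk'⟩ := exists_nat_pow_near hξ hL1
  -- suffices bound by C2 * s^k
  suffices hmain : ‖∫ t, ee (ξ * φ t) ∂μ‖ ≤ C2 * s ^ k by
    have e1 : ∫ t, Complex.exp (2 * Real.pi * Complex.I * ξ * t) ∂(Measure.map φ μ)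
        = ∫ t, ee (ξ * φ t) ∂μ := by
      rw [integral_map hφc.aemeasurable]
      · congr 1
        ext t
        unfold ee
        congr 1
        push_cast
        ring
      · apply Continuous.aestronglyMeasurable
        fun_prop
    rw [e1]
    refine hmain.trans ?_
    have h1 : s ^ (k + 1) ≤ |ξ| ^ (-γ) := by
      calc s ^ (k + 1) = ((θ ^ 3) ^ (k + 1)) ^ (-γ) := by
            rw [← Real.rpow_natCast (θ ^ 3) (k + 1), ← Real.rpow_mul (by positivity), mul_comm,
              Real.rpow_mul (by positivity), hLγ, Real.rpow_natCast]
        _ ≤ _ := Real.rpow_le_rpow_of_nonpos hξ0 hk'.le (by linarith)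
    calc C2 * s ^ k = C2 * s⁻¹ * s ^ (k + 1) := by rw [pow_succ]; field_simp
      _ ≤ _ := by gcongr
  -- scale relations
  have hρk : ρ ^ k * θ ^ k = 1 := by rw [← mul_pow, hρθ, one_pow]
  set T := ρ ^ (2 * k) * |ξ| with hT
  have hρ2k : ρ ^ (2 * k) * θ ^ (2 * k) = 1 := by rw [← mul_pow, hρθ, one_pow]
  have hTlow : θ ^ k ≤ T := by
    calc θ ^ k = ρ ^ (2 * k) * (θ ^ 3) ^ k := by
          rw [← pow_mul, show 3 * k = 2 * k + k by ring, pow_add, ← mul_assoc, hρ2k, one_mul]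
      _ ≤ _ := by rw [hT]; gcongr
  have hTup : T ≤ θ ^ (k + 3) := by
    calc T ≤ ρ ^ (2 * k) * (θ ^ 3) ^ (k + 1) := by rw [hT]; gcongr
      _ = _ := by
        rw [← pow_mul, show 3 * (k + 1) = 2 * k + (k + 3) by ring, pow_add, ← mul_assoc, hρ2k,
          one_mul]
  have hT0 : 0 < T := by positivity
  have herr : |ξ| * (ρ ^ 2) ^ (2 * k) ≤ θ ^ 3 * s ^ k := by
    calc |ξ| * (ρ ^ 2) ^ (2 * k) = ρ ^ (2 * k) * T := by rw [hT]; ring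
      _ ≤ ρ ^ (2 * k) * θ ^ (k + 3) := by gcongr
      _ = θ ^ 3 * ρ ^ k * (ρ ^ k * θ ^ k) := by ring
      _ = θ ^ 3 * ρ ^ k := by rw [hρk, mul_one]
      _ ≤ _ := by gcongr
  have hlin := lin hp hp1 hμ hKattr hK hEb (2 * k) (fun t => ξ * φ t) (fun x => ξ * deriv φ x)
    (|ξ| * B) (by positivity) (by fun_prop) (by fun_prop) (by
      intro x hx t ht
      calc _ = |ξ * (φ t - φ x - deriv φ x * (t - x))| := by congr 1; ring
        _ ≤ _ := by
          rw [abs_mul, mul_assoc]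
          gcongr
          exact hquad x hx t ht)
  set Y : ℝ → ℝ := fun x => ρ ^ (2 * k) * (ξ * deriv φ x) with hY
  have hYc : Continuous Y := by fun_prop
  have hYdiff : ∀ x y, |Y x - Y y| = T * |deriv φ x - deriv φ y| := by
    intro x y
    rw [hY, hT]
    dsimp only
    rw [← mul_sub, ← mul_sub, abs_mul, abs_mul, abs_of_pos (pow_pos hρ0 _), mul_assoc]
  have hYabs : ∀ x ∈ K, Y x ∈ Set.Icc (-(θ ^ (k + (3 + k1)))) (θ ^ (k + (3 + k1))) := by
    intro x hx
    rw [Set.mem_Icc, ← abs_le, hY]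
    dsimp only
    rw [abs_mul, abs_mul, abs_of_pos (pow_pos hρ0 _), ← mul_assoc]
    calc T * |deriv φ x| ≤ θ ^ (k + 3) * θ ^ k1 := by
          have := (hDb x hx).trans hk1.le
          gcongr
      _ = _ := by ring
  set ν := μ.map Y with hν
  have hνI : ∀ z, ν (Set.Icc z (z + l)) ≤ ENNReal.ofReal (CF * P ^ k) := by
    intro z
    rw [hν, Measure.map_apply hYc.measurable measurableSet_Icc]
    by_cases hex : ∃ x0 ∈ K, Y x0 ∈ Set.Icc z (z + l)
    · obtain ⟨x0, hx0, hx0I⟩ := hex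
      refine le_trans ?_ (hfrost k (x0 - l / b * ρ ^ k))
      refine measure_mono_ae ?_
      filter_upwards [hK] with x hx hxI
      have h1 : |Y x - Y x0| ≤ l := by
        rw [abs_le]
        constructor <;> linarith [hxI.1, hxI.2, hx0I.1, hx0I.2]
      rw [hYdiff] at h1
      have h2 : θ ^ k * (b * |x - x0|) ≤ l := by
        refine le_trans ?_ h1
        have := hlow x hx x0 hx0
        gcongr
      have h3 : |x - x0| ≤ l / b * ρ ^ k := by
        calc |x - x0| = (ρ ^ k * θ ^ k) * (b * |x - x0|) / b := by rw [hρk]; field_simp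
          _ = ρ ^ k * (θ ^ k * (b * |x - x0|)) / b := by ring
          _ ≤ ρ ^ k * l / b := by gcongr
          _ = _ := by ring
      rw [abs_le] at h3
      change x ∈ Set.Icc _ _
      constructor <;> linarith [h3.1, h3.2]
    · push Not at hex
      have : μ (Y ⁻¹' Set.Icc z (z + l)) = 0 := by
        rw [ae_iff] at hK
        refine measure_mono_null ?_ hK
        intro x hx hxK
        exact hex x hxK hx
      rw [this]
      exact zero_le
  have hmomN := hmom (k + (3 + k1)) ν (CF * P ^ k) (by positivity) hνI
  have hAk : C1 * β ^ (k + (3 + k1)) * (CF * P ^ k) = A * (β * P) ^ k := by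
    rw [hA, mul_pow, pow_add]; ring
  rw [hAk] at hmomN
  have hGm : Measurable (fun y => ENNReal.ofReal (‖FT μ y‖ ^ (Q + 1))) :=
    ENNReal.measurable_ofReal.comp ((FT_cont μ).norm.pow _).measurable
  have hIq : ∫ x, ‖FT μ (Y x)‖ ^ (Q + 1) ∂μ ≤ A * (β * P) ^ k := by
    have hm1 : AEStronglyMeasurable (fun x => ‖FT μ (Y x)‖ ^ (Q + 1)) μ :=
      (((FT_cont μ).comp hYc).norm.pow _).aestronglyMeasurable
    rw [integral_eq_lintegral_of_nonneg_ae
      (Filter.Eventually.of_forall fun x => pow_nonneg (norm_nonneg _) _) hm1]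
    refine ENNReal.toReal_le_of_le_ofReal (by positivity) (le_trans (le_of_eq ?_) hmomN)
    rw [hν, setLIntegral_map measurableSet_Icc hGm hYc.measurable]
    rw [Measure.restrict_eq_self_of_ae_mem]
    filter_upwards [hK] with x hx using hYabs x hx
  have hIntPow : ∀ q : ℕ, Integrable (fun x => ‖FT μ (Y x)‖ ^ q) μ := by
    intro q
    refine Integrable.of_bound (((FT_cont μ).comp hYc).norm.pow _).aestronglyMeasurable 1 ?_
    filter_upwards with x
    rw [norm_pow, norm_norm]
    exact pow_le_one₀ (norm_nonneg _) (FT_le_one μ _)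
  have hI1 : ∫ x, ‖FT μ (Y x)‖ ∂μ ≤ s ^ k + A * s ^ k := by
    have hτ : 0 < s ^ k := pow_pos hs0 k
    have hpt : ∀ x, ‖FT μ (Y x)‖ ≤ s ^ k + ((s ^ k) ^ Q)⁻¹ * ‖FT μ (Y x)‖ ^ (Q + 1) := by
      intro x
      set v := ‖FT μ (Y x)‖ with hv
      have hv0 : 0 ≤ v := norm_nonneg _
      rcases le_total v (s ^ k) with h | h
      · have : 0 ≤ ((s ^ k) ^ Q)⁻¹ * v ^ (Q + 1) := by positivity
        linarith
      · have h1 : (s ^ k) ^ Q ≤ v ^ Q := by gcongr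
        have h2 : v ≤ ((s ^ k) ^ Q)⁻¹ * v ^ (Q + 1) := by
          rw [inv_mul_eq_div, le_div_iff₀ (by positivity), pow_succ, mul_comm]
          gcongr
        linarith
    have hi1 : Integrable (fun x => ‖FT μ (Y x)‖) μ := by simpa using hIntPow 1
    calc ∫ x, ‖FT μ (Y x)‖ ∂μ
        ≤ ∫ x, (s ^ k + ((s ^ k) ^ Q)⁻¹ * ‖FT μ (Y x)‖ ^ (Q + 1)) ∂μ :=
          integral_mono hi1 ((integrable_const _).add ((hIntPow _).const_mul _)) hpt
      _ = s ^ k + ((s ^ k) ^ Q)⁻¹ * ∫ x, ‖FT μ (Y x)‖ ^ (Q + 1) ∂μ := by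
          rw [integral_add (integrable_const _) ((hIntPow _).const_mul _), integral_const_mul]
          simp
      _ ≤ s ^ k + ((s ^ k) ^ Q)⁻¹ * (A * (s ^ (Q + 1)) ^ k) := by
          gcongr
          refine hIq.trans ?_
          gcongr
      _ = s ^ k + A * s ^ k := by
          congr 1
          rw [inv_mul_eq_div, div_eq_iff (by positivity)]
          ring
  calc _ ≤ _ := hlin
    _ = ∫ x, ‖FT μ (Y x)‖ ∂μ + 2 * π * E ^ 2 * B * (|ξ| * (ρ ^ 2) ^ (2 * k)) := by
        rw [hY]; ring
    _ ≤ (s ^ k + A * s ^ k) + 2 * π * E ^ 2 * B * (θ ^ 3 * s ^ k) := by gcongr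
    _ = _ := by rw [hC2]; ring
end

section
/- Let m ≥ 2, ρ ∈ (0,1), a_1,…,a_m ∈ ℝ and let p = (p_1,…,p_m) be a probability vector with every p_j > 0. Let μ_ρ be the homogeneous self-similar measure of the IFS {f_j(x) = ρx + a_j}_{j=1}^m, and assume the IFS satisfies the strong separation condition. Then for every φ ∈ C²(ℝ) with φ''(t) < 0 for all t, and every g ∈ C¹(ℝ), there exist constants γ > 0 and C > 0 such that |∫ exp(2πiξφ(t)) g(t) dμ_ρ(t)| ≤ C|ξ|^{−γ} for all ξ with |ξ| ≥ 1. -/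
open MeasureTheory Real

lemma cover_sum {ι : Type} (S : Finset ι) (T : Finset ℕ) (F : ι → ℝ) (hF : ∀ i, 0 ≤ F i)
    (q : ℕ → ι → Prop) [∀ e, DecidablePred (q e)] (hq : ∀ i ∈ S, ∃ e ∈ T, q e i) :
    ∑ i ∈ S, F i ≤ ∑ e ∈ T, ∑ i ∈ S.filter (q e), F i := by
  simp_rw [Finset.sum_filter]
  rw [Finset.sum_comm]
  refine Finset.sum_le_sum fun i hi => ?_
  obtain ⟨e, he, hqe⟩ := hq i hi
  have h0 : ∀ e ∈ T, 0 ≤ (if q e i then F i else 0) := fun e _ => by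
    split_ifs
    · exact hF i
    · exact le_rfl
  have := Finset.single_le_sum h0 he
  rwa [if_pos hqe] at this

/-- multiscale counting lemma, in weighted form -/
lemma multiscale {ι : Type} [Fintype ι] (P z : ι → ℝ) (hP : ∀ i, 0 ≤ P i) (ρ : ℝ) (hρ0 : 0 < ρ)
    (hρ1 : ρ < 1) (D : ℕ) (hD : 1 / ρ ≤ D) (h : ℝ → ℝ) (h0 : ∀ y, 0 ≤ h y) (h1 : ∀ y, h y ≤ 1)
    (r : ℝ) (hr0 : 0 ≤ r) (hr : ∀ y : ℝ, (∀ n : ℤ, ρ / 4 ≤ |y - n|) → h y ≤ r) (M : ℝ)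
    (hM : ∀ S : Finset ι, (∀ i ∈ S, ∀ i' ∈ S, |z i - z i'| ≤ 1 / 2) → ∑ i ∈ S, P i ≤ M) (N : ℕ) :
    ∀ (u : ℝ) (S : Finset ι), (∀ i ∈ S, u ≤ ρ ^ N * z i ∧ ρ ^ N * z i ≤ u + 1 / 2) →
      ∑ i ∈ S, P i * ∏ k ∈ Finset.range N, h (ρ ^ (k + 1) * z i) ≤ (1 + r * D) ^ N * M := by
  classical
  induction N with
  | zero =>
    intro u S hS
    simp only [Finset.range_zero, Finset.prod_empty, mul_one, pow_zero, one_mul] at *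
    refine hM S fun i hi i' hi' => ?_
    have := hS i hi
    have := hS i' hi'
    rw [abs_le]; constructor <;> linarith
  | succ N ih =>
    intro u S hS
    set F : ι → ℝ := fun i => P i * ∏ k ∈ Finset.range N, h (ρ ^ (k + 1) * z i) with hF
    have hF0 : ∀ i, 0 ≤ F i := fun i => mul_nonneg (hP i) (Finset.prod_nonneg fun _ _ => h0 _)
    have hstep : ∀ i, P i * ∏ k ∈ Finset.range (N + 1), h (ρ ^ (k + 1) * z i)
        = F i * h (ρ ^ (N + 1) * z i) := by
      intro i; rw [Finset.prod_range_succ, hF]; ring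
    simp_rw [hstep]
    let good : ι → Prop := fun i => ∃ n : ℤ, |ρ ^ (N + 1) * z i - n| < ρ / 4
    rw [← Finset.sum_filter_add_sum_filter_not S good]
    have hgood : ∑ i ∈ S.filter good, F i * h (ρ ^ (N + 1) * z i) ≤ (1 + r * D) ^ N * M := by
      by_cases hne : (S.filter good).Nonempty
      · obtain ⟨i0, hi0⟩ := hne
        rw [Finset.mem_filter] at hi0
        obtain ⟨hi0S, n, hn⟩ := hi0
        calc ∑ i ∈ S.filter good, F i * h (ρ ^ (N + 1) * z i)
            ≤ ∑ i ∈ S.filter good, F i := Finset.sum_le_sum fun i _ =>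
              mul_le_of_le_one_right (hF0 i) (h1 _)
          _ ≤ _ := by
            refine ih (n / ρ - 1 / 4) _ fun i hi => ?_
            rw [Finset.mem_filter] at hi
            obtain ⟨hiS, n', hn'⟩ := hi
            have e1 := hS i hiS
            have e2 := hS i0 hi0S
            have hnn : n' = n := by
              rw [abs_lt] at hn hn'
              have b1 : (n' : ℝ) - n < 1 := by linarith
              have b2 : (n : ℝ) - n' < 1 := by linarith
              have b3 : n' - n < 1 := by exact_mod_cast b1
              have b4 : n - n' < 1 := by exact_mod_cast b2
              omega
            rw [hnn, abs_lt, pow_succ] at hn'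
            have e3 : ρ * (n / ρ) = n := by field_simp
            constructor
            · by_contra hc
              push Not at hc
              have := mul_lt_mul_of_pos_left hc hρ0
              nlinarith
            · by_contra hc
              push Not at hc
              have := mul_lt_mul_of_pos_left hc hρ0
              nlinarith
      · rw [Finset.not_nonempty_iff_eq_empty] at hne
        rw [hne, Finset.sum_empty]
        have := ih 0 ∅ (by simp)
        simpa using this
    have hbad : ∑ i ∈ S.filter (fun i => ¬ good i), F i * h (ρ ^ (N + 1) * z i)
        ≤ r * (D * ((1 + r * D) ^ N * M)) := by
      calc ∑ i ∈ S.filter (fun i => ¬ good i), F i * h (ρ ^ (N + 1) * z i)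
          ≤ ∑ i ∈ S.filter (fun i => ¬ good i), r * F i := by
            refine Finset.sum_le_sum fun i hi => ?_
            rw [Finset.mem_filter] at hi
            rw [mul_comm]
            refine mul_le_mul_of_nonneg_right (hr _ fun n => ?_) (hF0 i)
            by_contra hc
            push Not at hc
            exact hi.2 ⟨n, hc⟩
        _ = r * ∑ i ∈ S.filter (fun i => ¬ good i), F i := by rw [Finset.mul_sum]
        _ ≤ r * ∑ e ∈ Finset.range D, ∑ i ∈ S.filter (fun i => u / ρ + e / 2 ≤ ρ ^ N * z i ∧
              ρ ^ N * z i ≤ u / ρ + e / 2 + 1 / 2), F i := by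
            refine mul_le_mul_of_nonneg_left ?_ hr0
            refine le_trans (Finset.sum_le_sum_of_subset_of_nonneg (Finset.filter_subset _ S)
              fun i _ _ => hF0 i) ?_
            refine cover_sum S (Finset.range D) F hF0 _ fun i hi => ?_
            have e1 := hS i hi
            rw [pow_succ] at e1
            set y := ρ ^ N * z i with hy
            have ey : ρ ^ N * ρ * z i = ρ * y := by rw [hy]; ring
            rw [ey] at e1
            have e3 : ρ * (u / ρ) = u := by field_simp
            have e4 : u / ρ ≤ y := by
              rw [div_le_iff₀ hρ0]; linarith
            have e5 : y ≤ u / ρ + D / 2 := by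
              have : ρ * (1 / ρ) = 1 := by field_simp
              have h6 : (1:ℝ) ≤ ρ * D := by
                rw [← this]; exact mul_le_mul_of_nonneg_left hD hρ0.le
              by_contra hc
              push Not at hc
              have := mul_lt_mul_of_pos_left hc hρ0
              nlinarith
            have hDpos : 0 < D := by
              have : (0:ℝ) < D := lt_of_lt_of_le (by positivity) hD
              exact_mod_cast this
            simp only [Finset.mem_range]
            have hnn : 0 ≤ 2 * (y - u / ρ) := by linarith
            by_cases hcase : ⌊2 * (y - u / ρ)⌋₊ < D
            · refine ⟨⌊2 * (y - u / ρ)⌋₊, hcase, ?_, ?_⟩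
              · have := Nat.floor_le hnn; linarith
              · have := Nat.lt_floor_add_one (2 * (y - u / ρ)); linarith
            · push Not at hcase
              have c1 : (D : ℝ) ≤ 2 * (y - u / ρ) := (Nat.le_floor_iff hnn).1 hcase
              refine ⟨D - 1, by omega, ?_, ?_⟩
              · rw [Nat.cast_sub hDpos]; push_cast; linarith
              · rw [Nat.cast_sub hDpos]; push_cast; linarith
        _ ≤ r * ∑ e ∈ Finset.range D, ((1 + r * D) ^ N * M) := by
            refine mul_le_mul_of_nonneg_left (Finset.sum_le_sum fun e _ => ?_) hr0
            refine ih (u / ρ + e / 2) _ fun i hi => ?_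
            exact (Finset.mem_filter.1 hi).2
        _ = _ := by rw [Finset.sum_const, Finset.card_range, nsmul_eq_mul]
    calc _ ≤ (1 + r * D) ^ N * M + r * (D * ((1 + r * D) ^ N * M)) := add_le_add hgood hbad
      _ = _ := by ring

lemma supp_aux
    (m : ℕ) (ρ : ℝ) (hρ0 : 0 < ρ) (hρ1 : ρ < 1)
    (a : Fin m → ℝ) (p : Fin m → ℝ) (hp : ∀ j, 0 < p j) (hp1 : ∑ j, p j = 1)
    (μ : Measure ℝ) [IsProbabilityMeasure μ]
    (hμ : μ = ∑ j : Fin m, ENNReal.ofReal (p j) • Measure.map (fun x => ρ * x + a j) μ)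
    (R0 : ℝ) (hR0 : ∀ j, |a j| ≤ (1 - ρ) * R0) : μ {x | R0 + 1 < |x|} = 0 := by
  have step : ∀ u : ℝ, μ {x | R0 + u < |x|} ≤ μ {x | R0 + u / ρ < |x|} := by
    intro u
    have hmeas : MeasurableSet {x : ℝ | R0 + u < |x|} :=
      measurableSet_lt measurable_const measurable_norm
    calc μ {x | R0 + u < |x|}
        = ∑ j : Fin m, ENNReal.ofReal (p j) * μ (Set.preimage (fun x => ρ * x + a j) {x | R0 + u < |x|}) := by
          conv_lhs => rw [hμ]
          rw [Measure.finsetSum_apply]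
          refine Finset.sum_congr rfl fun j _ => ?_
          rw [Measure.smul_apply, Measure.map_apply (by fun_prop) hmeas, smul_eq_mul]
      _ ≤ ∑ j : Fin m, ENNReal.ofReal (p j) * μ {x | R0 + u / ρ < |x|} := by
          refine Finset.sum_le_sum fun j _ => ?_
          gcongr
          intro x hx
          simp only [Set.mem_preimage, Set.mem_ofPred_eq] at hx ⊢
          have h1 : |ρ * x + a j| ≤ ρ * |x| + |a j| := by
            refine (abs_add_le _ _).trans ?_
            rw [abs_mul, abs_of_pos hρ0]
          have h2 := hR0 j
          have h3 : ρ * (u / ρ) = u := by field_simp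
          by_contra hc
          push Not at hc
          have := mul_le_mul_of_nonneg_left hc hρ0.le
          nlinarith
      _ = μ {x | R0 + u / ρ < |x|} := by
          rw [← Finset.sum_mul, ← ENNReal.ofReal_sum_of_nonneg fun j _ => (hp j).le, hp1]
          simp
  have iter : ∀ n : ℕ, μ {x | R0 + 1 < |x|} ≤ μ {x | R0 + (1 / ρ) ^ n < |x|} := by
    intro n
    induction n with
    | zero => simp
    | succ n ih =>
      refine ih.trans ((step _).trans (le_of_eq ?_))
      rw [pow_succ, mul_one_div]
  have hgt : 1 < 1 / ρ := by rw [lt_div_iff₀ hρ0]; linarith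
  have hlim : Filter.Tendsto (fun n : ℕ => μ {x | R0 + (1 / ρ) ^ n < |x|}) Filter.atTop
      (nhds (μ (⋂ n : ℕ, {x | R0 + (1 / ρ) ^ n < |x|}))) := by
    refine tendsto_measure_iInter_atTop (fun n => ?_) ?_ ⟨0, measure_ne_top _ _⟩
    · exact (measurableSet_lt measurable_const measurable_norm).nullMeasurableSet
    · intro n n' hn x hx
      simp only [Set.mem_ofPred_eq] at hx ⊢
      have : (1 / ρ) ^ n ≤ (1 / ρ) ^ n' := pow_le_pow_right₀ hgt.le hn
      linarith
  have hemp : (⋂ n : ℕ, {x : ℝ | R0 + (1 / ρ) ^ n < |x|}) = ∅ := by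
    rw [Set.eq_empty_iff_forall_notMem]
    intro x hx
    rw [Set.mem_iInter] at hx
    obtain ⟨n, hn⟩ := pow_unbounded_of_one_lt (|x| - R0) hgt
    have := hx n
    simp only [Set.mem_ofPred_eq] at this
    linarith
  rw [hemp, measure_empty] at hlim
  exact le_antisymm (ge_of_tendsto' hlim iter) bot_le

lemma int_cont (μ : Measure ℝ) [IsProbabilityMeasure μ] (R : ℝ) (hR : ∀ᵐ x ∂μ, |x| ≤ R)
    (f : ℝ → ℂ) (hf : Continuous f) : Integrable f μ := by
  obtain ⟨C, hC⟩ := (isCompact_Icc (a := -R) (b := R)).exists_bound_of_continuousOn hf.continuousOn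
  refine Integrable.of_bound hf.aestronglyMeasurable C ?_
  filter_upwards [hR] with x hx
  exact hC x (abs_le.1 hx)

lemma selfsim
    (m : ℕ) (ρ : ℝ) 
    (a : Fin m → ℝ) (p : Fin m → ℝ) (hp : ∀ j, 0 < p j) 
    (μ : Measure ℝ) [IsProbabilityMeasure μ]
    (hμ : μ = ∑ j : Fin m, ENNReal.ofReal (p j) • Measure.map (fun x => ρ * x + a j) μ)
    (R : ℝ) (hR : ∀ᵐ x ∂μ, |x| ≤ R) 
    (f : ℝ → ℂ) (hf : Continuous f) :
    ∫ x, f x ∂μ = ∑ j, (p j : ℂ) * ∫ x, f (ρ * x + a j) ∂μ := by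
  have hm : ∀ j, AEMeasurable (fun x => ρ * x + a j) μ := fun j => by fun_prop
  conv_lhs => rw [hμ]
  rw [integral_finsetSum_measure]
  · refine Finset.sum_congr rfl fun j _ => ?_
    rw [integral_smul_measure, integral_map (hm j) hf.aestronglyMeasurable,
      ENNReal.toReal_ofReal (hp j).le, Complex.real_smul]
  · intro j _
    refine Integrable.smul_measure ?_ ENNReal.ofReal_ne_top
    rw [integrable_map_measure hf.aestronglyMeasurable (hm j)]
    exact int_cont μ R hR _ (by fun_prop)

lemma words
    (m : ℕ) (ρ : ℝ) (hρ0 : 0 < ρ) (hρ1 : ρ < 1)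
    (a : Fin m → ℝ) (p : Fin m → ℝ) (hp : ∀ j, 0 < p j) (hp1 : ∑ j, p j = 1)
    (μ : Measure ℝ) [IsProbabilityMeasure μ]
    (hμ : μ = ∑ j : Fin m, ENNReal.ofReal (p j) • Measure.map (fun x => ρ * x + a j) μ)
    (K : Set ℝ) (R : ℝ) (hR : ∀ᵐ x ∂μ, |x| ≤ R) (hKf : ∀ j, ∀ x ∈ K, ρ * x + a j ∈ K)
    (hRf : ∀ j x, |x| ≤ R → |ρ * x + a j| ≤ R) (x0 : ℝ) (hx0 : x0 ∈ K) (d : ℝ) (hd : 0 < d)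
    (hsep : ∀ j j', j ≠ j' → ∀ x ∈ K, ∀ y ∈ K, d < |(ρ * x + a j) - (ρ * y + a j')|)
    (Q : ℝ) (hQ0 : 0 ≤ Q) (hQ : ∀ j, p j ≤ Q) (n : ℕ) :
    ∃ (ι : Type) (_ : Fintype ι) (P A : ι → ℝ), (∀ i, 0 ≤ P i) ∧ ∑ i, P i = 1 ∧
      (∀ i, ρ ^ n * x0 + A i ∈ K) ∧ (∀ i x, |x| ≤ R → |ρ ^ n * x + A i| ≤ R) ∧
      (∀ f : ℝ → ℂ, Continuous f → ∫ x, f x ∂μ = ∑ i, (P i : ℂ) * ∫ x, f (ρ ^ n * x + A i) ∂μ) ∧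
      (∀ k ≤ n, ∀ S : Finset ι, (∀ i ∈ S, ∀ i' ∈ S, |A i - A i'| ≤ d * ρ ^ k) →
        ∑ i ∈ S, P i ≤ Q ^ k) := by
  classical
  induction n with
  | zero =>
    refine ⟨Unit, inferInstance, fun _ => 1, fun _ => 0, by simp, by simp, by simpa using hx0,
      by simp, by simp, ?_⟩
    intro k hk S _
    obtain rfl : k = 0 := by omega
    calc ∑ i ∈ S, (1:ℝ) ≤ ∑ i : Unit, (1:ℝ) :=
          Finset.sum_le_sum_of_subset_of_nonneg (Finset.subset_univ _) (by simp)
      _ = _ := by simp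
  | succ n ih =>
    obtain ⟨ι, _, P, A, hP0, hP1, hAK, hAR, hinteg, hfro⟩ := ih
    have hsum1 : ∑ i : Fin m × ι, p i.1 * P i.2 = 1 := by
      rw [Fintype.sum_prod_type]
      simp_rw [← Finset.mul_sum, hP1, mul_one, hp1]
    refine ⟨Fin m × ι, inferInstance, fun i => p i.1 * P i.2, fun i => ρ * A i.2 + a i.1,
      fun i => mul_nonneg (hp _).le (hP0 _), hsum1, ?_, ?_, ?_, ?_⟩
    · intro i
      have := hKf i.1 _ (hAK i.2)
      convert this using 1
      ring
    · intro i x hx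
      have := hRf i.1 _ (hAR i.2 x hx)
      convert this using 2
      ring
    · intro f hf
      rw [selfsim m ρ a p hp μ hμ R hR f hf, Fintype.sum_prod_type]
      refine Finset.sum_congr rfl fun j _ => ?_
      rw [hinteg (fun x => f (ρ * x + a j)) (by fun_prop), Finset.mul_sum]
      refine Finset.sum_congr rfl fun i _ => ?_
      rw [← mul_assoc]
      push_cast
      congr 2
      ext x
      congr 1
      ring
    · intro k hk S hS
      rcases k with _ | k
      · rw [pow_zero, ← hsum1]
        exact Finset.sum_le_sum_of_subset_of_nonneg (Finset.subset_univ _)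
          fun i _ _ => mul_nonneg (hp _).le (hP0 _)
      · rcases S.eq_empty_or_nonempty with rfl | ⟨i0, hi0⟩
        · simp only [Finset.sum_empty]; positivity
        · have hj : ∀ i ∈ S, i.1 = i0.1 := by
            intro i hi
            by_contra hne
            have h1 := hsep _ _ hne _ (hAK i.2) _ (hAK i0.2)
            have h2 := hS i hi i0 hi0
            have h3 : (ρ * (ρ ^ n * x0 + A i.2) + a i.1) - (ρ * (ρ ^ n * x0 + A i0.2) + a i0.1)
              = (ρ * A i.2 + a i.1) - (ρ * A i0.2 + a i0.1) := by ring
            rw [h3] at h1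
            have h4 : d * ρ ^ (k + 1) ≤ d :=
              mul_le_of_le_one_right hd.le (pow_le_one₀ hρ0.le hρ1.le)
            linarith
          have hinj : Set.InjOn Prod.snd (S : Set (Fin m × ι)) := by
            intro i hi i' hi' h
            exact Prod.ext ((hj i hi).trans (hj i' hi').symm) h
          calc ∑ i ∈ S, p i.1 * P i.2 = ∑ i ∈ S, p i0.1 * P i.2 :=
                Finset.sum_congr rfl fun i hi => by rw [hj i hi]
            _ = p i0.1 * ∑ i ∈ S.image Prod.snd, P i := by
                rw [Finset.sum_image hinj, Finset.mul_sum]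
            _ ≤ Q * Q ^ k := by
                refine mul_le_mul (hQ _) ?_ (Finset.sum_nonneg fun i _ => hP0 i) hQ0
                refine hfro k (by omega) _ ?_
                intro i hi i' hi'
                obtain ⟨w, hw, rfl⟩ := Finset.mem_image.1 hi
                obtain ⟨w', hw', rfl⟩ := Finset.mem_image.1 hi'
                have h2 := hS w hw w' hw'
                beta_reduce at h2
                rw [hj w hw, hj w' hw'] at h2
                have h3 : (ρ * A w.2 + a i0.1) - (ρ * A w'.2 + a i0.1) = ρ * (A w.2 - A w'.2) := by
                  ring
                rw [h3, abs_mul, abs_of_pos hρ0, pow_succ] at h2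
                refine le_of_mul_le_mul_left ?_ hρ0
                linarith
            _ = Q ^ (k + 1) := by ring

lemma key_sum {ι : Type} [Fintype ι] (P z : ι → ℝ) (hP : ∀ i, 0 ≤ P i) (hP1 : ∑ i, P i = 1)
    (ρ : ℝ) (hρ0 : 0 < ρ)
    (hρ1 : ρ < 1) (D : ℕ) (hD : 1 / ρ ≤ D) (h : ℝ → ℝ) (h0 : ∀ y, 0 ≤ h y) (h1 : ∀ y, h y ≤ 1)
    (β : ℝ) (hβ0 : 0 ≤ β) (hβ : ∀ y : ℝ, (∀ n : ℤ, ρ / 4 ≤ |y - n|) → h y ≤ β) (M : ℝ)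
    (hM : ∀ S : Finset ι, (∀ i ∈ S, ∀ i' ∈ S, |z i - z i'| ≤ 1 / 2) → ∑ i ∈ S, P i ≤ M) (N q : ℕ)
    (Z : ℝ) (hZ : ∀ i, |ρ ^ N * z i| ≤ Z) (L : ℕ) (hL : 4 * Z < L) :
    (∑ i, P i * ∏ k ∈ Finset.range N, h (ρ ^ (k + 1) * z i)) ^ q
      ≤ L * ((1 + β ^ q * D) ^ N * M) := by
  classical
  refine (Real.pow_arith_mean_le_arith_mean_pow Finset.univ P _ (fun i _ => hP i) hP1
    (fun i _ => Finset.prod_nonneg fun _ _ => h0 _) q).trans ?_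
  simp_rw [← Finset.prod_pow]
  have hms := multiscale P z hP ρ hρ0 hρ1 D hD (fun y => h y ^ q) (fun y => pow_nonneg (h0 y) q)
    (fun y => pow_le_one₀ (h0 y) (h1 y)) (β ^ q) (pow_nonneg hβ0 q)
    (fun y hy => pow_le_pow_left₀ (h0 y) (hβ y hy) q) M hM N
  refine (cover_sum Finset.univ (Finset.range L) _
    (fun i => mul_nonneg (hP i) (Finset.prod_nonneg fun _ _ => pow_nonneg (h0 _) q))
    (fun e i => -Z + e / 2 ≤ ρ ^ N * z i ∧ ρ ^ N * z i ≤ -Z + e / 2 + 1 / 2) ?_).trans ?_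
  · intro i _
    have hi := abs_le.1 (hZ i)
    set y := ρ ^ N * z i
    have hnn : 0 ≤ 2 * (y + Z) := by linarith
    refine ⟨⌊2 * (y + Z)⌋₊, ?_, ?_, ?_⟩
    · rw [Finset.mem_range]
      have c1 := Nat.floor_le hnn
      have : ((⌊2 * (y + Z)⌋₊ : ℕ) : ℝ) < L := by linarith
      exact_mod_cast this
    · have := Nat.floor_le hnn; linarith
    · have := Nat.lt_floor_add_one (2 * (y + Z)); linarith
  · calc _ ≤ ∑ e ∈ Finset.range L, ((1 + β ^ q * D) ^ N * M) := by
          refine Finset.sum_le_sum fun e _ => ?_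
          exact hms (-Z + e / 2) _ fun i hi => (Finset.mem_filter.1 hi).2
      _ = _ := by rw [Finset.sum_const, Finset.card_range, nsmul_eq_mul]

/-- the norm of the generating trigonometric polynomial -/
noncomputable def Hc {m : ℕ} (p a : Fin m → ℝ) (y : ℝ) : ℝ := ‖∑ j, (p j : ℂ) * ee (y * a j)‖

lemma Hc_nonneg {m : ℕ} (p a : Fin m → ℝ) (y : ℝ) : 0 ≤ Hc p a y := norm_nonneg _

lemma Hc_le_one {m : ℕ} (p a : Fin m → ℝ) (hp : ∀ j, 0 < p j) (hp1 : ∑ j, p j = 1) (y : ℝ) :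
    Hc p a y ≤ 1 := by
  unfold Hc
  refine (norm_sum_le _ _).trans (le_of_eq ?_)
  rw [← hp1]
  refine Finset.sum_congr rfl fun j _ => ?_
  rw [norm_mul, ee_norm, mul_one, Complex.norm_real, Real.norm_eq_abs, abs_of_pos (hp j)]

lemma two_norm (s t x : ℝ) : ‖(s : ℂ) + t * ee x‖ ^ 2 = s ^ 2 + t ^ 2 + 2 * s * t * cos (2 * π * x) := by
  rw [← Complex.normSq_eq_norm_sq, Complex.normSq_apply]
  unfold ee
  rw [Complex.exp_mul_I, ← Complex.ofReal_cos, ← Complex.ofReal_sin]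
  have := Real.sin_sq_add_cos_sq (2 * π * x)
  generalize cos (2 * π * x) = u at *
  generalize sin (2 * π * x) = w at *
  simp
  linear_combination t ^ 2 * this

lemma cos_bound (κ : ℝ) (hκ0 : 0 < κ) (x : ℝ) (hx : ∀ n : ℤ, κ ≤ |x - n|) :
    cos (2 * π * x) ≤ cos (2 * π * κ) := by
  have h1 : cos (2 * π * x) = cos (2 * π * |x - round x|) := by
    have : 2 * π * |x - round x| = |2 * π * (x - round x)| := by
      rw [abs_mul, abs_of_pos (by positivity : (0:ℝ) < 2 * π)]
    rw [this, Real.cos_abs]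
    have : 2 * π * (x - round x) = 2 * π * x - (round x : ℤ) * (2 * π) := by ring
    rw [this, Real.cos_sub_int_mul_two_pi]
  rw [h1]
  have h2 := abs_sub_round x
  have h3 := hx (round x)
  have hpi := Real.pi_pos
  apply Real.cos_le_cos_of_nonneg_of_le_pi
  · positivity
  · nlinarith
  · gcongr

lemma Hc_bound {m : ℕ} (p a : Fin m → ℝ) (hp : ∀ j, 0 < p j) (hp1 : ∑ j, p j = 1)
    (j0 j1 : Fin m) (hj : j0 ≠ j1) (κ : ℝ) (hκ0 : 0 < κ) (hκ1 : κ < 1 / 2) :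
    ∃ β : ℝ, 0 ≤ β ∧ β < 1 ∧ ∀ y : ℝ, (∀ n : ℤ, κ ≤ |y * (a j1 - a j0) - n|) → Hc p a y ≤ β := by
  classical
  set s := p j0
  set t := p j1
  have hs : 0 < s := hp j0
  have ht : 0 < t := hp j1
  have hpi := Real.pi_pos
  have hcos : cos (2 * π * κ) < 1 := by
    rw [← Real.cos_zero]
    apply Real.cos_lt_cos_of_nonneg_of_le_pi le_rfl
    · nlinarith
    · positivity
  have hrest : ∑ j ∈ (Finset.univ.erase j0).erase j1, p j = 1 - s - t := by
    have e1 := Finset.add_sum_erase Finset.univ p (Finset.mem_univ j0)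
    have e2 := Finset.add_sum_erase (Finset.univ.erase j0) p (a := j1)
      (Finset.mem_erase.2 ⟨hj.symm, Finset.mem_univ _⟩)
    linarith
  have hrest0 : 0 ≤ 1 - s - t := by
    rw [← hrest]; exact Finset.sum_nonneg fun j _ => (hp j).le
  refine ⟨(1 - s - t) + √(s ^ 2 + t ^ 2 + 2 * s * t * cos (2 * π * κ)), by positivity, ?_, ?_⟩
  · have : √(s ^ 2 + t ^ 2 + 2 * s * t * cos (2 * π * κ)) < s + t := by
      rw [Real.sqrt_lt' (by positivity)]
      have : 0 < s * t := by positivity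
      nlinarith
    linarith
  · intro y hy
    unfold Hc
    rw [← Finset.add_sum_erase Finset.univ _ (Finset.mem_univ j0),
      ← Finset.add_sum_erase (Finset.univ.erase j0) _ (a := j1)
      (Finset.mem_erase.2 ⟨hj.symm, Finset.mem_univ _⟩), ← add_assoc]
    refine (norm_add_le _ _).trans ?_
    rw [add_comm]
    refine add_le_add ?_ ?_
    · rw [← hrest]
      refine (norm_sum_le _ _).trans (le_of_eq ?_)
      refine Finset.sum_congr rfl fun j _ => ?_
      rw [norm_mul, ee_norm, mul_one, Complex.norm_real, Real.norm_eq_abs, abs_of_pos (hp j)]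
    · have e1 : ee (y * a j1) = ee (y * a j0) * ee (y * (a j1 - a j0)) := by
        rw [← ee_add]; congr 1; ring
      have e2 : (p j0 : ℂ) * ee (y * a j0) + (p j1 : ℂ) * ee (y * a j1)
          = ee (y * a j0) * ((s : ℂ) + t * ee (y * (a j1 - a j0))) := by
        rw [e1]; ring
      rw [e2, norm_mul, ee_norm, one_mul]
      apply Real.le_sqrt_of_sq_le
      rw [two_norm]
      have := cos_bound κ hκ0 _ hy
      have : 0 < s * t := by positivity
      nlinarith

lemma muhat_bound
    (m : ℕ) (ρ : ℝ)
    (a : Fin m → ℝ) (p : Fin m → ℝ) (hp : ∀ j, 0 < p j) (hp1 : ∑ j, p j = 1)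
    (μ : Measure ℝ) [IsProbabilityMeasure μ]
    (hμ : μ = ∑ j : Fin m, ENNReal.ofReal (p j) • Measure.map (fun x => ρ * x + a j) μ)
    (R : ℝ) (hR : ∀ᵐ x ∂μ, |x| ≤ R) (y : ℝ) (N : ℕ) :
    ‖∫ x, ee (y * x) ∂μ‖ ≤ ∏ k ∈ Finset.range N, Hc p a (ρ ^ (k + 1) * y) := by
  have hstep : ∀ y, ‖∫ x, ee (y * x) ∂μ‖ = Hc p a y * ‖∫ x, ee (ρ * y * x) ∂μ‖ := by
    intro y
    have hc : Continuous fun x => ee (y * x) := ee_cont.comp (by fun_prop)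
    rw [selfsim m ρ a p hp μ hμ R hR _ hc]
    unfold Hc
    rw [← norm_mul, Finset.sum_mul]
    congr 1
    refine Finset.sum_congr rfl fun j _ => ?_
    have hfun : (fun x => ee (y * (ρ * x + a j))) = fun x => ee (y * a j) * ee (ρ * y * x) := by
      funext x
      rw [← ee_add]
      congr 1
      ring
    rw [mul_assoc, hfun, integral_const_mul]
  have hle1 : ∀ y, ‖∫ x, ee (y * x) ∂μ‖ ≤ 1 := by
    intro y
    have := norm_integral_le_of_norm_le_const (μ := μ) (f := fun x => ee (y * x)) (C := 1)
      (Filter.Eventually.of_forall fun x => (ee_norm _).le)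
    simpa using this
  have hN : ‖∫ x, ee (y * x) ∂μ‖ ≤
      (∏ k ∈ Finset.range N, Hc p a (ρ ^ (k + 1) * y)) * ‖∫ x, ee (ρ ^ (N + 1) * y * x) ∂μ‖ := by
    induction N with
    | zero =>
      rw [hstep y]
      simp only [Finset.range_zero, Finset.prod_empty, one_mul, zero_add, pow_one]
      exact mul_le_of_le_one_left (norm_nonneg _) (Hc_le_one p a hp hp1 y)
    | succ N ih =>
      refine ih.trans (le_of_eq ?_)
      rw [hstep (ρ ^ (N + 1) * y), Finset.prod_range_succ, mul_assoc, ← mul_assoc ρ, ← pow_succ']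
  exact hN.trans (mul_le_of_le_one_right (Finset.prod_nonneg fun _ _ => Hc_nonneg _ _ _) (hle1 _))

lemma mvt (F : ℝ → ℝ) (hF : Differentiable ℝ F) (s t : ℝ) :
    ∃ e ∈ Set.uIcc s t, F t - F s = deriv F e * (t - s) := by
  rcases lt_trichotomy s t with h | h | h
  · obtain ⟨e, he, h2⟩ := exists_deriv_eq_slope F h hF.continuous.continuousOn hF.differentiableOn
    refine ⟨e, Set.uIcc_of_le h.le ▸ Set.Ioo_subset_Icc_self he, ?_⟩
    have : t - s ≠ 0 := by linarith
    rw [h2]; field_simp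
  · subst h
    exact ⟨s, by simp, by simp⟩
  · obtain ⟨e, he, h2⟩ := exists_deriv_eq_slope F h hF.continuous.continuousOn hF.differentiableOn
    refine ⟨e, Set.uIcc_of_ge h.le ▸ Set.Ioo_subset_Icc_self he, ?_⟩
    have : s - t ≠ 0 := by linarith
    rw [h2]; field_simp; ring

lemma phase (φ : ℝ → ℝ) (hφ : ContDiff ℝ 2 φ) (hφ'' : ∀ t, deriv (deriv φ) t < 0)
    (g : ℝ → ℝ) (hg : ContDiff ℝ 1 g) (R : ℝ) :
    ∃ c B : ℝ, 0 < c ∧ 0 < B ∧ (∀ t, |t| ≤ R → |deriv φ t| ≤ B) ∧ (∀ t, |t| ≤ R → |g t| ≤ B) ∧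
      (∀ s t, |s| ≤ R → |t| ≤ R → c * |t - s| ≤ |deriv φ t - deriv φ s|) ∧
      (∀ s t, |s| ≤ R → |t| ≤ R → |φ t - φ s - deriv φ s * (t - s)| ≤ B * |t - s| ^ 2) ∧
      (∀ s t, |s| ≤ R → |t| ≤ R → |g t - g s| ≤ B * |t - s|) := by
  have hd1 : ContDiff ℝ 1 (deriv φ) := by
    have : ContDiff ℝ (1 + 1) φ := by simpa [one_add_one_eq_two] using hφ
    exact (contDiff_succ_iff_deriv.1 this).2.2
  have hφd : Differentiable ℝ φ := hφ.differentiable (by norm_num)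
  have hφ'd : Differentiable ℝ (deriv φ) := hd1.differentiable (by norm_num)
  have hgd : Differentiable ℝ g := hg.differentiable (by norm_num)
  have hc2 : Continuous (deriv (deriv φ)) := hd1.continuous_deriv le_rfl
  have hcg : Continuous (deriv g) := hg.continuous_deriv le_rfl
  have hbd : ∀ F : ℝ → ℝ, Continuous F → ∃ C, ∀ t, |t| ≤ R → |F t| ≤ C := by
    intro F hF
    obtain ⟨C, hC⟩ := (isCompact_Icc (a := -R) (b := R)).exists_bound_of_continuousOn hF.continuousOn
    exact ⟨C, fun t ht => hC t (abs_le.1 ht)⟩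
  obtain ⟨B1, hB1⟩ := hbd _ hd1.continuous
  obtain ⟨B2, hB2⟩ := hbd _ hg.continuous
  obtain ⟨B3, hB3⟩ := hbd _ hc2
  obtain ⟨B4, hB4⟩ := hbd _ hcg
  obtain ⟨C5, hC5⟩ := hbd (fun t => (deriv (deriv φ) t)⁻¹) (hc2.inv₀ fun t => (hφ'' t).ne)
  have hin : ∀ s t e, |s| ≤ R → |t| ≤ R → e ∈ Set.uIcc s t → |e| ≤ R ∧ |e - s| ≤ |t - s| := by
    intro s t e hs ht he
    constructor
    · rw [abs_le] at *
      rw [Set.mem_uIcc] at he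
      rcases he with he | he <;> constructor <;> linarith
    · exact Set.abs_sub_left_of_mem_uIcc he
  set B := |B1| + |B2| + |B3| + |B4| + 1 with hB
  have p1 := abs_nonneg B1
  have p2 := abs_nonneg B2
  have p3 := abs_nonneg B3
  have p4 := abs_nonneg B4
  have q1 := le_abs_self B1
  have q2 := le_abs_self B2
  have q3 := le_abs_self B3
  have q4 := le_abs_self B4
  refine ⟨(|C5| + 1)⁻¹, B, by positivity, by positivity, fun t ht => (hB1 t ht).trans (by linarith),
    fun t ht => (hB2 t ht).trans (by linarith), ?_, ?_, ?_⟩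
  · intro s t hs ht
    obtain ⟨e, he, h⟩ := mvt _ hφ'd s t
    rw [h, abs_mul]
    gcongr
    have h5 := hC5 e (hin s t e hs ht he).1
    have hpos : 0 < |deriv (deriv φ) e| := abs_pos.2 (hφ'' e).ne
    rw [abs_inv] at h5
    apply inv_le_of_inv_le₀ hpos
    linarith [le_abs_self C5]
  · intro s t hs ht
    obtain ⟨e, he, h⟩ := mvt _ hφd s t
    have h6 := hin s t e hs ht he
    obtain ⟨e', he', h'⟩ := mvt _ hφ'd s e
    have h7 := hin s e e' hs h6.1 he'
    have : φ t - φ s - deriv φ s * (t - s) = deriv (deriv φ) e' * (e - s) * (t - s) := by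
      rw [h, ← h']; ring
    rw [this, abs_mul, abs_mul, pow_two, ← mul_assoc]
    have h8 : |deriv (deriv φ) e'| ≤ B := (hB3 e' h7.1).trans (by linarith)
    exact mul_le_mul_of_nonneg_right
      (mul_le_mul h8 h6.2 (abs_nonneg _) (by positivity)) (abs_nonneg _)
  · intro s t hs ht
    obtain ⟨e, he, h⟩ := mvt _ hgd s t
    rw [h, abs_mul]
    have := hB4 e (hin s t e hs ht he).1
    gcongr
    linarith

lemma piece (μ : Measure ℝ) [IsProbabilityMeasure μ] (R : ℝ) (hR : ∀ᵐ x ∂μ, |x| ≤ R)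
    (φ g : ℝ → ℝ) (hφ : Continuous φ) (hg : Continuous g) (B : ℝ) (hB : 0 < B)
    (hgB : ∀ t, |t| ≤ R → |g t| ≤ B)
    (htay : ∀ s t, |s| ≤ R → |t| ≤ R → |φ t - φ s - deriv φ s * (t - s)| ≤ B * |t - s| ^ 2)
    (hglip : ∀ s t, |s| ≤ R → |t| ≤ R → |g t - g s| ≤ B * |t - s|)
    (σ A x0 ξ : ℝ) (hσ : 0 ≤ σ) (hx0 : |x0| ≤ R) (hA : ∀ x, |x| ≤ R → |σ * x + A| ≤ R) :
    ‖∫ x, ee (ξ * φ (σ * x + A)) * (g (σ * x + A) : ℂ) ∂μ‖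
      ≤ B * (2 * R) * σ + 2 * π * B * B * (2 * R) ^ 2 * (|ξ| * σ ^ 2)
        + B * ‖∫ x, ee (ξ * σ * deriv φ (σ * x0 + A) * x) ∂μ‖ := by
  set t0 := σ * x0 + A with ht0
  have ht0R : |t0| ≤ R := hA x0 hx0
  set w : ℂ := ee (ξ * (φ t0 - deriv φ t0 * (σ * x0))) * (g t0 : ℂ) with hw
  have hwn : ‖w‖ ≤ B := by
    rw [hw, norm_mul, ee_norm, one_mul, Complex.norm_real]
    exact hgB t0 ht0R
  have hi1 : Integrable (fun x => ee (ξ * φ (σ * x + A)) * (g (σ * x + A) : ℂ)) μ := by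
    apply int_cont μ R hR
    refine (ee_cont.comp (by fun_prop)).mul (Complex.continuous_ofReal.comp (by fun_prop))
  have hi2 : Integrable (fun x => w * ee (ξ * σ * deriv φ t0 * x)) μ := by
    apply int_cont μ R hR
    exact continuous_const.mul (ee_cont.comp (by fun_prop))
  have hdiff : ‖∫ x, (ee (ξ * φ (σ * x + A)) * (g (σ * x + A) : ℂ)
      - w * ee (ξ * σ * deriv φ t0 * x)) ∂μ‖
      ≤ B * (2 * R) * σ + 2 * π * B * B * (2 * R) ^ 2 * (|ξ| * σ ^ 2) := by
    have := norm_integral_le_of_norm_le_const (μ := μ)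
      (f := fun x => ee (ξ * φ (σ * x + A)) * (g (σ * x + A) : ℂ) - w * ee (ξ * σ * deriv φ t0 * x))
      (C := B * (2 * R) * σ + 2 * π * B * B * (2 * R) ^ 2 * (|ξ| * σ ^ 2)) ?_
    · simpa using this
    filter_upwards [hR] with x hx
    set t := σ * x + A with ht
    have htR : |t| ≤ R := hA x hx
    have htt : |t - t0| ≤ σ * (2 * R) := by
      have : t - t0 = σ * (x - x0) := by rw [ht, ht0]; ring
      rw [this, abs_mul, abs_of_nonneg hσ]
      gcongr
      exact (abs_sub _ _).trans (by linarith)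
    have e1 : w * ee (ξ * σ * deriv φ t0 * x)
        = ee (ξ * (φ t0 + deriv φ t0 * (t - t0))) * (g t0 : ℂ) := by
      rw [hw, mul_right_comm, ← ee_add]
      congr 2
      rw [ht, ht0]
      ring
    have e2 : ee (ξ * φ t) * (g t : ℂ) - w * ee (ξ * σ * deriv φ t0 * x)
        = ee (ξ * φ t) * ((g t - g t0 : ℝ) : ℂ)
          + (ee (ξ * φ t) - ee (ξ * (φ t0 + deriv φ t0 * (t - t0)))) * (g t0 : ℂ) := by
      rw [e1]; push_cast; ring
    rw [e2]
    refine (norm_add_le _ _).trans ?_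
    rw [norm_mul, norm_mul, ee_norm, one_mul, Complex.norm_real, Complex.norm_real,
      Real.norm_eq_abs, Real.norm_eq_abs]
    have e3 : |ξ * φ t - ξ * (φ t0 + deriv φ t0 * (t - t0))| ≤ |ξ| * (B * (σ * (2 * R)) ^ 2) := by
      have : ξ * φ t - ξ * (φ t0 + deriv φ t0 * (t - t0))
        = ξ * (φ t - φ t0 - deriv φ t0 * (t - t0)) := by ring
      rw [this, abs_mul]
      gcongr
      exact (htay t0 t ht0R htR).trans (by gcongr)
    have e4 := ee_sub_le (ξ * φ t) (ξ * (φ t0 + deriv φ t0 * (t - t0)))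
    have hpi := Real.pi_pos
    refine add_le_add ?_ ?_
    · refine (hglip t0 t ht0R htR).trans ?_
      calc B * |t - t0| ≤ B * (σ * (2 * R)) := by gcongr
        _ = _ := by ring
    · calc _ ≤ (2 * π * (|ξ| * (B * (σ * (2 * R)) ^ 2))) * B := by
            refine mul_le_mul (e4.trans ?_) (hgB t0 ht0R) (abs_nonneg _) (by positivity)
            gcongr
        _ = _ := by ring
  rw [integral_sub hi1 hi2, integral_const_mul] at hdiff
  have h3 := norm_le_insert' (∫ x, ee (ξ * φ (σ * x + A)) * (g (σ * x + A) : ℂ) ∂μ)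
    (w * ∫ x, ee (ξ * σ * deriv φ t0 * x) ∂μ)
  have h4 : ‖w * ∫ x, ee (ξ * σ * deriv φ t0 * x) ∂μ‖ ≤ B * ‖∫ x, ee (ξ * σ * deriv φ t0 * x) ∂μ‖ := by
    rw [norm_mul]; gcongr
  linarith

set_option maxHeartbeats 1000000 in
lemma scale_bound
    (m : ℕ) (hm : 2 ≤ m) (ρ : ℝ) (hρ0 : 0 < ρ) (hρ1 : ρ < 1)
    (a : Fin m → ℝ) (p : Fin m → ℝ) (hp : ∀ j, 0 < p j) (hp1 : ∑ j, p j = 1)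
    (μ : Measure ℝ) [IsProbabilityMeasure μ]
    (hμ : μ = ∑ j : Fin m, ENNReal.ofReal (p j) • Measure.map (fun x => ρ * x + a j) μ)
    (K : Set ℝ) (hKc : IsCompact K) (hKne : K.Nonempty)
    (hKattr : K = ⋃ j : Fin m, (fun x => ρ * x + a j) '' K)
    (hsep : ∀ j j' : Fin m, j ≠ j' →
      Disjoint ((fun x => ρ * x + a j) '' K) ((fun x => ρ * x + a j') '' K))
    (φ : ℝ → ℝ) (hφ : ContDiff ℝ 2 φ) (hφ'' : ∀ t, deriv (deriv φ) t < 0)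
    (g : ℝ → ℝ) (hg : ContDiff ℝ 1 g) :
    ∃ C τ : ℝ, 0 < C ∧ 0 < τ ∧ τ < 1 ∧ ∀ (ξ : ℝ) (v : ℕ), 1 ≤ |ξ| * ρ ^ (3 * v) →
      |ξ| * ρ ^ (3 * v) ≤ (ρ ^ 3)⁻¹ →
      ‖∫ t, ee (ξ * φ t) * (g t : ℂ) ∂μ‖ ≤ C * τ ^ v := by
  obtain ⟨x0, hx0⟩ := hKne
  have hKf : ∀ j, ∀ x ∈ K, ρ * x + a j ∈ K := by
    intro j x hx
    rw [hKattr]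
    exact Set.mem_iUnion.2 ⟨j, x, hx, rfl⟩
  -- radius
  obtain ⟨RK, hRK⟩ := hKc.isBounded.exists_norm_le
  set R0 : ℝ := |RK| + ∑ j, |a j| / (1 - ρ) with hR0
  have h1ρ : 0 < 1 - ρ := by linarith
  have hR0a : ∀ j, |a j| ≤ (1 - ρ) * R0 := by
    intro j
    have h1 : |a j| / (1 - ρ) ≤ ∑ j, |a j| / (1 - ρ) :=
      Finset.single_le_sum (f := fun j => |a j| / (1 - ρ)) (fun i _ => by positivity)
        (Finset.mem_univ j)
    have h2 : |a j| / (1 - ρ) ≤ R0 := by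
      have := abs_nonneg RK
      linarith
    rw [div_le_iff₀ h1ρ] at h2
    linarith
  have hR00 : 0 ≤ R0 := by positivity
  set R := R0 + 1 with hRdef
  have hR : ∀ᵐ x ∂μ, |x| ≤ R := by
    have := supp_aux m ρ hρ0 hρ1 a p hp hp1 μ hμ R0 hR0a
    rw [ae_iff]
    simpa using this
  have hRf : ∀ j x, |x| ≤ R → |ρ * x + a j| ≤ R := by
    intro j x hx
    refine (abs_add_le _ _).trans ?_
    rw [abs_mul, abs_of_pos hρ0]
    have := hR0a j
    nlinarith
  have hKR : ∀ x ∈ K, |x| ≤ R := by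
    intro x hx
    have h1 : |x| ≤ RK := hRK x hx
    have h2 : 0 ≤ ∑ j, |a j| / (1 - ρ) := Finset.sum_nonneg fun j _ => by positivity
    have h3 := le_abs_self RK
    linarith
  -- gap
  obtain ⟨d, hd, hsepd⟩ : ∃ d : ℝ, 0 < d ∧ ∀ j j', j ≠ j' → ∀ x ∈ K, ∀ y ∈ K,
      d < |(ρ * x + a j) - (ρ * y + a j')| := by
    have hev : ∀ j j' : Fin m, ∀ᶠ d : ℝ in nhdsWithin 0 (Set.Ioi 0), j ≠ j' → ∀ x ∈ K, ∀ y ∈ K,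
        d < |(ρ * x + a j) - (ρ * y + a j')| := by
      intro j j'
      by_cases hjj : j = j'
      · exact Filter.Eventually.of_forall fun d h => absurd hjj h
      obtain ⟨z, hz, hzmin⟩ := (hKc.prod hKc).exists_isMinOn ⟨(x0, x0), hx0, hx0⟩
        (f := fun z : ℝ × ℝ => |(ρ * z.1 + a j) - (ρ * z.2 + a j')|)
        (by fun_prop)
      have hpos : 0 < |(ρ * z.1 + a j) - (ρ * z.2 + a j')| := by
        rw [abs_pos, sub_ne_zero]
        intro heq
        exact Set.disjoint_left.1 (hsep j j' hjj) ⟨z.1, hz.1, rfl⟩ ⟨z.2, hz.2, heq.symm⟩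
      filter_upwards [Ioo_mem_nhdsGT hpos] with d hd _ x hx y hy
      exact lt_of_lt_of_le hd.2 (hzmin (Set.mk_mem_prod hx hy))
    have hall := Filter.eventually_all.2 fun j => Filter.eventually_all.2 fun j' => hev j j'
    obtain ⟨d, h1, h2⟩ := (hall.and self_mem_nhdsWithin).exists
    exact ⟨d, h2, h1⟩
  -- distinct indices
  set j0 : Fin m := ⟨0, by omega⟩ with hj0
  set j1 : Fin m := ⟨1, by omega⟩ with hj1
  have hj01 : j0 ≠ j1 := by
    intro h
    have := congrArg Fin.val h
    simp [hj0, hj1] at this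
  set b := a j1 - a j0 with hb
  have hb0 : b ≠ 0 := by
    intro h
    have h1 := hsepd j1 j0 hj01.symm x0 hx0 x0 hx0
    have : ρ * x0 + a j1 - (ρ * x0 + a j0) = b := by rw [hb]; ring
    rw [this, h, abs_zero] at h1
    linarith
  have hbpos : 0 < |b| := abs_pos.2 hb0
  -- max weight
  obtain ⟨Q, hQ0, hQ1, hQ⟩ : ∃ Q : ℝ, 0 < Q ∧ Q < 1 ∧ ∀ j, p j ≤ Q := by
    obtain ⟨jm, _, hjm⟩ := Finset.exists_max_image Finset.univ p ⟨j0, Finset.mem_univ _⟩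
    refine ⟨p jm, hp jm, ?_, fun j => hjm j (Finset.mem_univ j)⟩
    obtain ⟨j2, hj2⟩ : ∃ j2, j2 ≠ jm := by
      by_cases h : j0 = jm
      · exact ⟨j1, fun h' => hj01 (h.trans h'.symm)⟩
      · exact ⟨j0, h⟩
    have h1 := Finset.add_sum_erase Finset.univ p (Finset.mem_univ jm)
    have h2 : p j2 ≤ ∑ j ∈ Finset.univ.erase jm, p j :=
      Finset.single_le_sum (fun j _ => (hp j).le) (Finset.mem_erase.2 ⟨hj2, Finset.mem_univ _⟩)
    have := hp j2
    linarith
  obtain ⟨β, hβ0, hβ1, hβ⟩ := Hc_bound p a hp hp1 j0 j1 hj01 (ρ / 4) (by positivity) (by linarith)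
  obtain ⟨c, B, hc, hB, hB1, hgB, hlow, htay, hglip⟩ := phase φ hφ hφ'' g hg R
  obtain ⟨D, hD⟩ := exists_nat_ge (1 / ρ)
  have hDpos : (0:ℝ) < D := lt_of_lt_of_le (by positivity) hD
  -- exponent
  obtain ⟨q, hq⟩ : ∃ q : ℕ, β ^ q < (1 - Q) / (2 * D) :=
    exists_pow_lt_of_lt_one (div_pos (by linarith) (by positivity)) hβ1
  have hq' : ∃ q : ℕ, q ≠ 0 ∧ β ^ q < (1 - Q) / (2 * D) := by
    refine ⟨q + 1, by omega, lt_of_le_of_lt ?_ hq⟩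
    exact pow_le_pow_of_le_one hβ0 hβ1.le (by omega)
  clear hq q
  obtain ⟨q, hq0, hq⟩ := hq'
  set τ0 := (1 + β ^ q * D) * Q with hτ0
  have hτ0pos : 0 < τ0 := by positivity
  have hτ01 : τ0 < 1 := by
    rw [lt_div_iff₀ (by positivity)] at hq
    have : β ^ q * D < (1 - Q) / 2 := by linarith
    have : (1 + β ^ q * D) * Q < (1 + (1 - Q) / 2) * Q := by gcongr
    nlinarith
  obtain ⟨c0, hc0⟩ : ∃ c0 : ℕ, ρ ^ c0 < 2 * |b| * c * d :=
    exists_pow_lt_of_lt_one (by positivity) hρ1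
  set E := (ρ ^ 3)⁻¹ with hE
  have hEpos : 0 < E := by positivity
  set Z := |b| * E * B with hZ
  obtain ⟨L, hL⟩ := exists_nat_gt (4 * Z)
  have hLpos : (0:ℝ) < L := lt_of_le_of_lt (by positivity) hL
  set C2 := L / Q ^ c0 with hC2
  have hC2pos : 0 < C2 := by positivity
  set τ1 := τ0 ^ ((q:ℝ)⁻¹) with hτ1
  have hτ1pos : 0 < τ1 := by positivity
  have hτ11 : τ1 < 1 := by
    refine Real.rpow_lt_one hτ0pos.le hτ01 ?_
    have : 0 < q := Nat.pos_of_ne_zero hq0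
    positivity
  set C3 := C2 ^ ((q:ℝ)⁻¹) with hC3
  have hC3pos : 0 < C3 := by positivity
  set τ := max ρ τ1 with hτ
  have hpi := Real.pi_pos
  refine ⟨B * (2 * R) + 2 * π * B * B * (2 * R) ^ 2 * E + B * C3, τ, by positivity,
    lt_max_of_lt_left hρ0, max_lt hρ1 hτ11, ?_⟩
  intro ξ v hξ1 hξ2
  obtain ⟨ι, _, P, A, hP0, hP1, hAK, hAR, hinteg, hfro⟩ := words m ρ hρ0 hρ1 a p hp hp1 μ hμ K R hR
    hKf hRf x0 hx0 d hd hsepd Q hQ0.le hQ (2 * v)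
  set σ := ρ ^ (2 * v) with hσ
  have hσpos : 0 < σ := by positivity
  set y : ι → ℝ := fun i => ξ * σ * deriv φ (σ * x0 + A i) with hy
  have hcont : Continuous fun t => ee (ξ * φ t) * (g t : ℂ) :=
    (ee_cont.comp (continuous_const.mul hφ.continuous)).mul
      (Complex.continuous_ofReal.comp hg.continuous)
  -- the averaged sum
  set X := ∑ i, P i * ∏ k ∈ Finset.range v, Hc p a (ρ ^ (k + 1) * y i) with hX
  have hX0 : 0 ≤ X := Finset.sum_nonneg fun i _ =>
    mul_nonneg (hP0 i) (Finset.prod_nonneg fun _ _ => Hc_nonneg _ _ _)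
  have hξσ : |ξ| * ρ ^ (3 * v) = |ξ| * σ * ρ ^ v := by
    rw [hσ, mul_assoc, ← pow_add]; congr 2; ring
  have hXq : X ^ q ≤ C2 * τ0 ^ v := by
    have hks := key_sum P (fun i => b * y i) hP0 hP1 ρ hρ0 hρ1 D hD (fun y => Hc p a (y / b))
      (fun y => Hc_nonneg _ _ _) (fun y => Hc_le_one p a hp hp1 _) β hβ0
      (fun y hy => hβ (y / b) fun n => by
        have : y / b * (a j1 - a j0) = y := by rw [← hb]; field_simp
        rw [this]; exact hy n)
      (Q ^ v / Q ^ c0) ?_ v q Z ?_ L hL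
    · have e1 : ∀ i k, Hc p a (ρ ^ (k + 1) * (b * y i) / b) = Hc p a (ρ ^ (k + 1) * y i) := by
        intro i k
        congr 1
        field_simp
      simp_rw [e1] at hks
      refine hks.trans (le_of_eq ?_)
      rw [hC2, hτ0, mul_pow]
      ring
    · intro S hS
      by_cases hv : c0 ≤ v
      · have e1 : Q ^ v / Q ^ c0 = Q ^ (v - c0) := by
          rw [div_eq_iff (by positivity), ← pow_add]
          congr 1; omega
        rw [e1]
        refine hfro (v - c0) (by omega) S fun i hi i' hi' => ?_
        have h1 := hS i hi i' hi'
        have h2 : b * y i - b * y i' = b * (ξ * σ) * (deriv φ (σ * x0 + A i) - deriv φ (σ * x0 + A i')) := by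
          rw [hy]; ring
        rw [h2, abs_mul, abs_mul, abs_mul, abs_of_pos hσpos] at h1
        have h3 := hlow _ _ (hKR _ (hAK i')) (hKR _ (hAK i))
        have h4 : σ * x0 + A i - (σ * x0 + A i') = A i - A i' := by ring
        rw [h4] at h3
        have hρv : ρ ^ v = ρ ^ (v - c0) * ρ ^ c0 := by rw [← pow_add]; congr 1; omega
        have h5 : |b| * (|ξ| * σ) * (c * |A i - A i'|) ≤ 1 / 2 :=
          le_trans (by gcongr) h1
        have h6 : |b| * c * |A i - A i'| ≤ 1 / 2 * ρ ^ v := by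
          calc |b| * c * |A i - A i'| = |b| * c * |A i - A i'| * 1 := by ring
            _ ≤ |b| * c * |A i - A i'| * (|ξ| * σ * ρ ^ v) := by
                rw [← hξσ]; gcongr
            _ = |b| * (|ξ| * σ) * (c * |A i - A i'|) * ρ ^ v := by ring
            _ ≤ 1 / 2 * ρ ^ v := by gcongr
        have h7 : ρ ^ v ≤ ρ ^ (v - c0) * (2 * |b| * c * d) := by
          rw [hρv]; gcongr
        have h8 : (|b| * c) * |A i - A i'| ≤ (|b| * c) * (d * ρ ^ (v - c0)) := by
          linarith only [h6, h7]
        exact le_of_mul_le_mul_left h8 (by positivity)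
      · push Not at hv
        calc ∑ i ∈ S, P i ≤ ∑ i, P i :=
              Finset.sum_le_sum_of_subset_of_nonneg (Finset.subset_univ _) fun i _ _ => hP0 i
          _ = 1 := hP1
          _ ≤ _ := by
            rw [one_le_div (by positivity)]
            exact pow_le_pow_of_le_one hQ0.le hQ1.le hv.le
    · intro i
      have h1 : ρ ^ v * (b * y i) = b * (ξ * σ * ρ ^ v) * deriv φ (σ * x0 + A i) := by
        rw [hy]; ring
      rw [h1, abs_mul, abs_mul, abs_mul, abs_mul, abs_of_pos hσpos,
        abs_of_pos (pow_pos hρ0 v), ← hξσ, hZ]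
      have := hB1 _ (hKR _ (hAK i))
      gcongr
  have hXle : X ≤ C3 * τ1 ^ v := by
    rw [← pow_le_pow_iff_left₀ hX0 (by positivity) hq0]
    refine hXq.trans (le_of_eq ?_)
    have e1 : C3 ^ q = C2 := Real.rpow_inv_natCast_pow hC2pos.le hq0
    have e2 : τ1 ^ q = τ0 := Real.rpow_inv_natCast_pow hτ0pos.le hq0
    have e3 : (C3 * τ1 ^ v) ^ q = C3 ^ q * (τ1 ^ q) ^ v := by ring
    rw [e3, e1, e2]
  have herr : B * (2 * R) * σ + 2 * π * B * B * (2 * R) ^ 2 * (|ξ| * σ ^ 2)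
      ≤ (B * (2 * R) + 2 * π * B * B * (2 * R) ^ 2 * E) * ρ ^ v := by
    have h1 : σ ≤ ρ ^ v := pow_le_pow_of_le_one hρ0.le hρ1.le (by omega)
    have h2 : |ξ| * σ ^ 2 ≤ E * ρ ^ v := by
      have : |ξ| * σ ^ 2 = |ξ| * ρ ^ (3 * v) * ρ ^ v := by
        rw [mul_assoc |ξ|, ← pow_add, hσ, ← pow_mul]; congr 2; ring
      rw [this]
      gcongr
    have h3 : B * (2 * R) * σ ≤ B * (2 * R) * ρ ^ v := by gcongr
    have h4 : 2 * π * B * B * (2 * R) ^ 2 * (|ξ| * σ ^ 2)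
      ≤ 2 * π * B * B * (2 * R) ^ 2 * (E * ρ ^ v) := by gcongr
    linarith
  have hτρ : ρ ^ v ≤ τ ^ v := pow_le_pow_left₀ hρ0.le (le_max_left _ _) v
  have hττ : τ1 ^ v ≤ τ ^ v := pow_le_pow_left₀ hτ1pos.le (le_max_right _ _) v
  set e := (B * (2 * R) + 2 * π * B * B * (2 * R) ^ 2 * E) * ρ ^ v with he
  rw [hinteg _ hcont]
  calc ‖∑ i, (P i : ℂ) * ∫ x, ee (ξ * φ (σ * x + A i)) * (g (σ * x + A i) : ℂ) ∂μ‖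
      ≤ ∑ i, P i * (e + B * ∏ k ∈ Finset.range v, Hc p a (ρ ^ (k + 1) * y i)) := by
        refine (norm_sum_le _ _).trans (Finset.sum_le_sum fun i _ => ?_)
        rw [norm_mul, Complex.norm_real, Real.norm_eq_abs, abs_of_nonneg (hP0 i)]
        refine mul_le_mul_of_nonneg_left ?_ (hP0 i)
        refine (piece μ R hR φ g hφ.continuous hg.continuous B hB hgB htay hglip σ (A i) x0 ξ
          hσpos.le (hKR x0 hx0) (hAR i)).trans ?_
        refine add_le_add herr (mul_le_mul_of_nonneg_left ?_ hB.le)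
        exact muhat_bound m ρ a p hp hp1 μ hμ R hR (y i) v
    _ = e + B * X := by
        rw [hX, Finset.mul_sum]
        simp_rw [mul_add]
        rw [Finset.sum_add_distrib, ← Finset.sum_mul, hP1, one_mul]
        congr 1
        refine Finset.sum_congr rfl fun i _ => by ring
    _ ≤ e + B * (C3 * τ1 ^ v) := by gcongr
    _ ≤ (B * (2 * R) + 2 * π * B * B * (2 * R) ^ 2 * E) * τ ^ v + B * (C3 * τ ^ v) := by
        rw [he]; gcongr
    _ = _ := by ring

/-- power Fourier decay of oscillatory integrals against the homogeneous
self-similar measure, for a `C²` phase with negative second derivative and a `C¹` amplitude. -/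
theorem stmt2
    (m : ℕ) (hm : 2 ≤ m) (ρ : ℝ) (hρ0 : 0 < ρ) (hρ1 : ρ < 1)
    (a : Fin m → ℝ) (p : Fin m → ℝ) (hp : ∀ j, 0 < p j) (hp1 : ∑ j, p j = 1)
    (μ : Measure ℝ) [IsProbabilityMeasure μ]
    (hμ : μ = ∑ j : Fin m, ENNReal.ofReal (p j) • Measure.map (fun x => ρ * x + a j) μ)
    (K : Set ℝ) (hKc : IsCompact K) (hKne : K.Nonempty)
    (hKattr : K = ⋃ j : Fin m, (fun x => ρ * x + a j) '' K)
    (hsep : ∀ j j' : Fin m, j ≠ j' →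
      Disjoint ((fun x => ρ * x + a j) '' K) ((fun x => ρ * x + a j') '' K))
    (φ : ℝ → ℝ) (hφ : ContDiff ℝ 2 φ) (hφ'' : ∀ t, deriv (deriv φ) t < 0)
    (g : ℝ → ℝ) (hg : ContDiff ℝ 1 g) :
    ∃ γ > (0 : ℝ), ∃ C > (0 : ℝ), ∀ ξ : ℝ, 1 ≤ |ξ| →
      ‖∫ t, Complex.exp (2 * Real.pi * Complex.I * ξ * φ t) * (g t : ℂ) ∂μ‖
        ≤ C * |ξ| ^ (-γ) := by
  obtain ⟨C, τ, hC, hτ0, hτ1, hmain⟩ := scale_bound m hm ρ hρ0 hρ1 a p hp hp1 μ hμ K hKc hKne hKattr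
    hsep φ hφ hφ'' g hg
  have hlτ : Real.log τ < 0 := Real.log_neg hτ0 hτ1
  have hlρ : Real.log ρ < 0 := Real.log_neg hρ0 hρ1
  set γ := Real.log τ / (3 * Real.log ρ) with hγ
  have hγ0 : 0 < γ := div_pos_of_neg_of_neg hlτ (by linarith)
  refine ⟨γ, hγ0, C / τ, by positivity, fun ξ hξ => ?_⟩
  have hρ3 : 1 < (ρ ^ 3)⁻¹ := (one_lt_inv₀ (by positivity)).2 (pow_lt_one₀ hρ0.le hρ1 (by norm_num))
  obtain ⟨v, hv1, hv2⟩ := exists_nat_pow_near hξ hρ3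
  have hξ0 : 0 < |ξ| := by linarith
  have hpv : 0 < ρ ^ (3 * v) := by positivity
  have e0 : ((ρ ^ 3)⁻¹) ^ v = (ρ ^ (3 * v))⁻¹ := by rw [inv_pow, pow_mul]
  have h1 : 1 ≤ |ξ| * ρ ^ (3 * v) := by
    rw [e0] at hv1
    rwa [inv_le_iff_one_le_mul₀ hpv] at hv1
  have h2 : |ξ| * ρ ^ (3 * v) ≤ (ρ ^ 3)⁻¹ := by
    rw [pow_succ, e0] at hv2
    calc |ξ| * ρ ^ (3 * v) ≤ ((ρ ^ (3 * v))⁻¹ * (ρ ^ 3)⁻¹) * ρ ^ (3 * v) := by gcongr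
      _ = _ := by field_simp
  have h3 := hmain ξ v h1 h2
  have e1 : ∀ t, Complex.exp (2 * Real.pi * Complex.I * ξ * φ t) = ee (ξ * φ t) := by
    intro t
    unfold ee
    congr 1
    push_cast
    ring
  simp_rw [e1]
  refine h3.trans ?_
  have h4 : τ ^ (v + 1) ≤ |ξ| ^ (-γ) := by
    rw [← Real.log_le_log_iff (by positivity) (by positivity), Real.log_pow, Real.log_rpow hξ0]
    have h5 : Real.log |ξ| ≤ Real.log (((ρ ^ 3)⁻¹) ^ (v + 1)) := Real.log_le_log hξ0 hv2.le
    rw [Real.log_pow, Real.log_inv, Real.log_pow] at h5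
    have h6 : γ * (3 * Real.log ρ) = Real.log τ := by
      exact div_mul_cancel₀ _ (mul_ne_zero three_ne_zero hlρ.ne)
    have h7 := mul_le_mul_of_nonneg_left h5 hγ0.le
    push_cast at h7 ⊢
    nlinarith
  calc C * τ ^ v = C / τ * τ ^ (v + 1) := by rw [pow_succ]; field_simp
    _ ≤ _ := by gcongr
end

section
/- Let μ be a Borel probability measure on ℝ and let (s_n)_{n≥1} be a sequence of positive integers. If for every nonzero integer h the series Σ_{N=1}^∞ N^{−3} Σ_{m,n=1}^{N} μ̂(h(s_n − s_m)) converges, then for μ-almost every x the sequence (s_n x)_{n≥1} is equidistributed modulo 1. -/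
open MeasureTheory Real Filter

/-- A sequence `(x n)_{n ≥ 1}` of real numbers is equidistributed modulo 1: for every
subinterval `[a, b] ⊆ [0, 1]`, the proportion of indices `1 ≤ n ≤ N` whose fractional
part lies in `[a, b]` tends to `b - a`. -/
def EquidistributedMod1 (x : ℕ → ℝ) : Prop :=
  ∀ a b : ℝ, 0 ≤ a → a ≤ b → b ≤ 1 →
    Tendsto (fun N : ℕ =>
        (((Finset.Icc 1 N).filter fun n => Int.fract (x n) ∈ Set.Icc a b).card : ℝ) / N)
      atTop (nhds (b - a))

lemma det_lemma (b : ℕ → ℝ) (hb0 : ∀ n, 0 ≤ b n)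
    (hstep : ∀ n j, b n ≤ b (n + j) + j) (hle : ∀ n, b n ≤ n)
    (hS : Summable (fun N : ℕ => b N ^ 2 / (N : ℝ) ^ 3)) :
    Tendsto (fun N : ℕ => b N / N) atTop (nhds 0) := by
  set f := fun N : ℕ => b N ^ 2 / (N : ℝ) ^ 3 with hf
  have hf0 : ∀ N, 0 ≤ f N := fun N => by simp only [hf]; positivity
  rw [tendsto_order]
  refine ⟨fun a ha => Eventually.of_forall fun N => lt_of_lt_of_le ha
    (div_nonneg (hb0 N) (Nat.cast_nonneg N)), fun ε hε => ?_⟩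
  have ht := tendsto_sum_nat_add f
  have h1 := (tendsto_order.1 ht).2 (ε ^ 3 / 64) (by positivity)
  filter_upwards [h1, eventually_gt_atTop 0] with N hN hN0
  by_contra hcon
  push Not at hcon
  have hNr : (0 : ℝ) < N := by exact_mod_cast hN0
  rw [le_div_iff₀ hNr] at hcon
  have hε1 : ε ≤ 1 := by
    have := hcon.trans (hle N)
    by_contra h; push Not at h; nlinarith
  set K := ⌊ε * N / 2⌋₊ + 1 with hK
  have hKlt : ε * N / 2 < K := by rw [hK]; push_cast; exact Nat.lt_floor_add_one _
  have hsN : Summable (fun k => f (k + N)) := (summable_nat_add_iff N).2 hS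
  have hle2 : ∑ k ∈ Finset.range K, f (k + N) ≤ ∑' k, f (k + N) :=
    hsN.sum_le_tsum _ (fun i _ => hf0 _)
  have hterm : ∀ k ∈ Finset.range K, ε ^ 2 / (32 * N) ≤ f (k + N) := by
    intro k hk
    have hk1 : k ≤ ⌊ε * N / 2⌋₊ := by
      have := Finset.mem_range.1 hk; omega
    have hk2 : (k : ℝ) ≤ ε * N / 2 :=
      (Nat.cast_le.2 hk1).trans (Nat.floor_le (by positivity))
    have hs := hstep N k
    rw [add_comm N k] at hs
    have hb : ε * N / 2 ≤ b (k + N) := by linarith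
    have hk3 : ((k + N : ℕ) : ℝ) ≤ 2 * N := by push_cast; nlinarith
    calc ε ^ 2 / (32 * N) = (ε * N / 2) ^ 2 / (2 * N) ^ 3 := by field_simp; norm_num
      _ ≤ f (k + N) := by
        simp only [hf]
        have : (0 : ℝ) < ((k + N : ℕ) : ℝ) := by push_cast; positivity
        gcongr
  have := Finset.card_nsmul_le_sum _ _ _ hterm
  rw [Finset.card_range, nsmul_eq_mul] at this
  have h3 : ε ^ 3 / 64 ≤ K * (ε ^ 2 / (32 * N)) := by
    calc ε ^ 3 / 64 = (ε * N / 2) * (ε ^ 2 / (32 * N)) := by field_simp; norm_num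
      _ ≤ _ := by gcongr
  linarith

lemma weyl_tendsto (P : ℕ → ProbabilityMeasure UnitAddCircle) (P0 : ProbabilityMeasure UnitAddCircle)
    (h : ∀ k : ℤ, Tendsto (fun n => ∫ x, (fourier k : C(UnitAddCircle, ℂ)) x ∂(P n : Measure UnitAddCircle)) atTop
      (nhds (∫ x, (fourier k : C(UnitAddCircle, ℂ)) x ∂(P0 : Measure UnitAddCircle)))) :
    Tendsto P atTop (nhds P0) := by
  have hgi : ∀ (Q : ProbabilityMeasure UnitAddCircle) (g : C(UnitAddCircle, ℂ)),
      Integrable g (Q : Measure UnitAddCircle) := fun Q g =>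
    g.continuous.integrable_of_hasCompactSupport (HasCompactSupport.of_compactSpace _)
  have hspan : ∀ g ∈ Submodule.span ℂ (Set.range (@fourier 1)),
      Tendsto (fun n => ∫ x, g x ∂(P n : Measure UnitAddCircle)) atTop
        (nhds (∫ x, g x ∂(P0 : Measure UnitAddCircle))) := by
    intro g hg
    induction hg using Submodule.span_induction with
    | mem x hx => obtain ⟨k, rfl⟩ := hx; exact h k
    | zero => simp
    | add x y _ _ hx hy =>
      simp only [ContinuousMap.add_apply]
      simp_rw [fun Q => integral_add (hgi Q x) (hgi Q y)]
      exact hx.add hy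
    | smul a x _ hx =>
      simp only [ContinuousMap.smul_apply, integral_smul]
      exact hx.const_smul a
  rw [ProbabilityMeasure.tendsto_iff_forall_integral_rclike_tendsto ℂ]
  intro f
  have hf : f.toContinuousMap ∈ (Submodule.span ℂ (Set.range (@fourier 1))).topologicalClosure := by
    rw [span_fourier_closure_eq_top]; trivial
  have hf' := Metric.mem_closure_iff.1 hf
  rw [Metric.tendsto_atTop]
  intro ε hε
  obtain ⟨g, hg, hfg⟩ := hf' (ε / 3) (by positivity)
  obtain ⟨N, hN⟩ := Metric.tendsto_atTop.1 (hspan g hg) (ε / 3) (by positivity)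
  have key : ∀ Q : ProbabilityMeasure UnitAddCircle,
      dist (∫ x, f x ∂(Q : Measure UnitAddCircle)) (∫ x, g x ∂(Q : Measure UnitAddCircle)) ≤ ε / 3 := by
    intro Q
    rw [dist_eq_norm]
    have hi := integral_sub (hgi Q f.toContinuousMap) (hgi Q g)
    change ∫ x, (f x - g x) ∂(Q : Measure UnitAddCircle) = ∫ x, f x ∂(Q : Measure UnitAddCircle) - _ at hi
    rw [← hi]
    refine (norm_integral_le_of_norm_le_const (C := ε / 3) (Eventually.of_forall fun x => ?_)).trans ?_
    · have := ContinuousMap.dist_apply_le_dist (f := f.toContinuousMap) (g := g) x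
      rw [dist_eq_norm] at this
      exact this.trans hfg.le
    · simp
  refine ⟨N, fun n hn => ?_⟩
  have h1 := key (P n)
  have h2 := key P0
  have h3 := hN n hn
  rw [dist_comm] at h2
  have := dist_triangle4 (∫ x, f x ∂(P n : Measure UnitAddCircle)) (∫ x, g x ∂(P n : Measure UnitAddCircle))
    (∫ x, g x ∂(P0 : Measure UnitAddCircle)) (∫ x, f x ∂(P0 : Measure UnitAddCircle))
  linarith

lemma integral_fourier_unit (k : ℤ) (hk : k ≠ 0) :
    ∫ x : UnitAddCircle, (fourier k : C(UnitAddCircle, ℂ)) x = 0 :=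
  integral_eq_zero_of_add_right_eq_neg (fun x => fourier_add_half_inv_index hk one_pos x)

lemma exists_empirical (x : ℕ → UnitAddCircle) (N : ℕ) :
    ∃ P : ProbabilityMeasure UnitAddCircle,
      (∀ g : C(UnitAddCircle, ℂ), ∫ y, g y ∂(P : Measure UnitAddCircle) =
        (∑ n ∈ Finset.Icc 1 (N + 1), g (x n)) / ((N + 1 : ℕ) : ℂ)) ∧
      (∀ (S : Set UnitAddCircle) [DecidablePred (fun n => x n ∈ S)], MeasurableSet S →
        (P : Measure UnitAddCircle) S = ENNReal.ofReal
        ((((Finset.Icc 1 (N + 1)).filter fun n => x n ∈ S).card : ℝ) / ((N + 1 : ℕ) : ℝ))) := by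
  classical
  set m : Measure UnitAddCircle :=
    ((N + 1 : ℕ) : ENNReal)⁻¹ • ∑ n ∈ Finset.Icc 1 (N + 1), Measure.dirac (x n) with hm
  have hS : ∀ S : Set UnitAddCircle, MeasurableSet S → m S = ENNReal.ofReal
        ((((Finset.Icc 1 (N + 1)).filter fun n => x n ∈ S).card : ℝ) / ((N + 1 : ℕ) : ℝ)) := by
    intro S hS
    rw [ENNReal.ofReal_div_of_pos (by positivity), ENNReal.ofReal_natCast, ENNReal.ofReal_natCast]
    simp only [hm, Measure.smul_apply, Measure.finsetSum_apply, Measure.dirac_apply' _ hS, smul_eq_mul,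
      Set.indicator_apply, Pi.one_apply, Finset.sum_boole]
    rw [ENNReal.div_eq_inv_mul]
  have hp : IsProbabilityMeasure m := ⟨by
    rw [hS _ MeasurableSet.univ]
    simp only [Set.mem_univ, Finset.filter_true, Nat.card_Icc, Nat.add_sub_cancel]
    rw [div_self (by positivity)]; simp⟩
  refine ⟨⟨m, hp⟩, fun g => ?_, fun S _ hS' => by
    change m S = _
    rw [hS S hS']
    congr!⟩
  change ∫ y, g y ∂m = _
  rw [hm, integral_smul_measure, integral_finsetSum_measure]
  · simp only [integral_dirac]
    rw [ENNReal.toReal_inv, ENNReal.toReal_natCast, Complex.real_smul, div_eq_inv_mul]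
    push_cast; rfl
  · intro i _
    exact g.continuous.integrable_of_hasCompactSupport (HasCompactSupport.of_compactSpace _)

lemma equi_of_exp (x : ℕ → ℝ)
    (h : ∀ k : ℤ, k ≠ 0 → Tendsto (fun N : ℕ =>
      (∑ n ∈ Finset.Icc 1 N, (fourier k : C(UnitAddCircle, ℂ)) (x n : UnitAddCircle)) / (N : ℂ)) atTop (nhds 0)) :
    EquidistributedMod1 x := by
  classical
  choose P hPi hPS using exists_empirical (fun n => (x n : UnitAddCircle))
  let P0 : ProbabilityMeasure UnitAddCircle := ⟨volume, ⟨by simp⟩⟩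
  have hP : Tendsto P atTop (nhds P0) := by
    apply weyl_tendsto
    intro k
    simp_rw [hPi]
    rcases eq_or_ne k 0 with rfl | hk
    · have : ∀ N : ℕ, ((N : ℂ) + 1) ≠ 0 := fun N => by exact_mod_cast Nat.succ_ne_zero N
      simp [this]
    · change Tendsto _ _ (nhds (∫ y : UnitAddCircle, _))
      rw [integral_fourier_unit k hk]
      exact (tendsto_add_atTop_iff_nat 1).2 (h k hk)
  intro a b ha hab hb
  rw [← tendsto_add_atTop_iff_nat 1]
  set E : Set UnitAddCircle := (fun y : ℝ => (y : UnitAddCircle)) '' Set.Icc a b with hE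
  set U : Set UnitAddCircle := (fun y : ℝ => (y : UnitAddCircle)) '' Set.Ioo a b with hU
  have hEc : IsClosed E := (isCompact_Icc.image (AddCircle.continuous_mk' 1)).isClosed
  have hUo : IsOpen U := QuotientAddGroup.isOpenMap_coe _ isOpen_Ioo
  have hvE : volume E ≤ ENNReal.ofReal (b - a) := by
    rw [AddCircle.add_projection_respects_measure 1 0 hEc.measurableSet]
    calc _ ≤ volume (Set.Icc a b ∪ {1}) := by
          apply measure_mono
          rintro y ⟨⟨z, hz, hzy⟩, hy⟩
          have hzy' : (z : UnitAddCircle) = (y : UnitAddCircle) := hzy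
          rw [← sub_eq_zero, ← AddCircle.coe_sub, AddCircle.coe_eq_zero_iff] at hzy'
          obtain ⟨j, hj⟩ := hzy'
          simp only [zsmul_eq_mul, mul_one] at hj
          simp only [zero_add] at hy
          have h1 : (j : ℝ) < 1 + 1 := by linarith [hy.1, hz.2]
          by_cases h2 : y = 1
          · right; exact h2
          left
          have h3 : y < 1 := lt_of_le_of_ne hy.2 h2
          have h4 : (-1 : ℝ) < j := by linarith [hz.1]
          have h5 : (j : ℝ) < 1 := by linarith [hy.1, hz.2]
          have h6 : j = 0 := by
            have : (-1 : ℤ) < j := by exact_mod_cast h4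
            have : j < 1 := by exact_mod_cast h5
            omega
          subst h6
          have : y = z := by push_cast at hj; linarith
          rw [this]; exact hz
      _ ≤ _ := (measure_union_le _ _).trans (by simp)
  have hvU : ENNReal.ofReal (b - a) ≤ volume U := by
    rw [AddCircle.add_projection_respects_measure 1 0 hUo.measurableSet, ← Real.volume_Ioo]
    apply measure_mono
    intro y hy
    exact ⟨⟨y, hy, rfl⟩, by constructor <;> linarith [hy.1, hy.2]⟩
  have hcoe : ∀ y : ℝ, ((Int.fract y : ℝ) : UnitAddCircle) = (y : UnitAddCircle) := by
    intro y
    rw [← sub_eq_zero, ← AddCircle.coe_sub, AddCircle.coe_eq_zero_iff]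
    exact ⟨-⌊y⌋, by
      have := Int.self_sub_floor y
      simp only [zsmul_eq_mul, mul_one]
      push_cast
      linarith⟩
  have hmE : ∀ y : ℝ, Int.fract y ∈ Set.Icc a b → (y : UnitAddCircle) ∈ E := fun y hy =>
    ⟨Int.fract y, hy, hcoe y⟩
  have hmU : ∀ y : ℝ, (y : UnitAddCircle) ∈ U → Int.fract y ∈ Set.Icc a b := by
    rintro y ⟨z, hz, hzy⟩
    have hzy' : (z : UnitAddCircle) = (y : UnitAddCircle) := hzy
    rw [← sub_eq_zero, ← AddCircle.coe_sub, AddCircle.coe_eq_zero_iff] at hzy'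
    obtain ⟨j, hj⟩ := hzy'
    simp only [zsmul_eq_mul, mul_one] at hj
    have : y = z - j := by linarith
    rw [this, Int.fract_sub_intCast, Int.fract_eq_self.2 ⟨by linarith [hz.1], by linarith [hz.2]⟩]
    exact Set.Ioo_subset_Icc_self hz
  rw [tendsto_order]
  constructor
  · intro c hc
    rcases lt_or_ge c 0 with hc0 | hc0
    · exact Eventually.of_forall fun N => lt_of_lt_of_le hc0 (by positivity)
    have hl := ProbabilityMeasure.le_liminf_measure_open_of_tendsto hP hUo
    have hlt : ENNReal.ofReal c < liminf (fun i => (P i : Measure UnitAddCircle) U) atTop :=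
      lt_of_lt_of_le ((ENNReal.ofReal_lt_ofReal_iff (by linarith)).2 hc) (hvU.trans hl)
    filter_upwards [eventually_lt_of_lt_liminf hlt] with N hN
    rw [hPS N U hUo.measurableSet, ENNReal.ofReal_lt_ofReal_iff_of_nonneg hc0] at hN
    refine hN.trans_le ?_
    gcongr with n hn
    exact hmU (x n)
  · intro c hc
    have hl := ProbabilityMeasure.limsup_measure_closed_le_of_tendsto hP hEc
    have hlt : limsup (fun i => (P i : Measure UnitAddCircle) E) atTop < ENNReal.ofReal c :=
      lt_of_le_of_lt (hl.trans hvE) ((ENNReal.ofReal_lt_ofReal_iff (by linarith)).2 hc)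
    filter_upwards [eventually_lt_of_limsup_lt hlt] with N hN
    rw [hPS N E hEc.measurableSet, ENNReal.ofReal_lt_ofReal_iff (by linarith)] at hN
    refine lt_of_le_of_lt ?_ hN
    gcongr with n hn
    exact hmE (x n)

lemma ae_exp (μ : Measure ℝ) [IsProbabilityMeasure μ] (s : ℕ → ℕ) (h : ℤ)
    (hsum : Summable (fun N : ℕ =>
        (1 / (N : ℂ) ^ 3) * ∑ n ∈ Finset.Icc 1 N, ∑ m ∈ Finset.Icc 1 N,
          ∫ t, Complex.exp (2 * Real.pi * Complex.I *
            ((h * ((s n : ℤ) - (s m : ℤ)) : ℤ) : ℝ) * t) ∂μ)) :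
    ∀ᵐ x ∂μ, Tendsto (fun N : ℕ =>
      (∑ n ∈ Finset.Icc 1 N, (fourier h : C(UnitAddCircle, ℂ)) (((s n : ℝ) * x : ℝ) : UnitAddCircle)) / (N : ℂ)) atTop (nhds 0) := by
  set A : ℕ → ℝ → ℂ := fun N x =>
    ∑ n ∈ Finset.Icc 1 N, (fourier h : C(UnitAddCircle, ℂ)) (((s n : ℝ) * x : ℝ) : UnitAddCircle) with hA
  have hAc : ∀ N, Continuous (A N) := by
    intro N
    refine continuous_finsetSum _ fun n _ => ?_
    exact (fourier h).continuous.comp ((AddCircle.continuous_mk' 1).comp (by fun_prop))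
  have hnorm1 : ∀ y : UnitAddCircle, ‖(fourier h : C(UnitAddCircle, ℂ)) y‖ = 1 := fun y => Circle.norm_coe _
  have hAle : ∀ N x, ‖A N x‖ ≤ N := by
    intro N x
    refine (norm_sum_le _ _).trans ?_
    simp only [hnorm1]
    simp
  have hAstep : ∀ x n j, ‖A n x‖ ≤ ‖A (n + j) x‖ + j := by
    intro x n j
    induction j with
    | zero => simp
    | succ j ih =>
      have : A (n + (j + 1)) x = A (n + j) x + (fourier h : C(UnitAddCircle, ℂ)) (((s (n + j + 1) : ℝ) * x : ℝ) : UnitAddCircle) := by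
        simp only [hA]
        rw [← add_assoc, Finset.sum_Icc_succ_top (by omega)]
      have h2 : A (n + j) x = A (n + (j + 1)) x - (fourier h : C(UnitAddCircle, ℂ)) (((s (n + j + 1) : ℝ) * x : ℝ) : UnitAddCircle) := by
        rw [this]; ring
      have h3 := norm_sub_le (A (n + (j + 1)) x) ((fourier h : C(UnitAddCircle, ℂ)) (((s (n + j + 1) : ℝ) * x : ℝ) : UnitAddCircle))
      rw [← h2, hnorm1] at h3
      push_cast
      linarith
  set F : ℕ → ℝ → ℝ := fun N x => ‖A N x‖ ^ 2 / (N : ℝ) ^ 3 with hF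
  have hFc : ∀ N, Continuous (F N) := fun N => (((hAc N).norm.pow 2).div_const _)
  have hF0 : ∀ N x, 0 ≤ F N x := fun N x => by simp only [hF]; positivity
  have hFi : ∀ N, Integrable (F N) μ := by
    intro N
    refine Integrable.of_bound (hFc N).aestronglyMeasurable ((N : ℝ) ^ 2 / (N : ℝ) ^ 3)
      (Eventually.of_forall fun x => ?_)
    rw [Real.norm_of_nonneg (hF0 N x)]
    simp only [hF]
    have := hAle N x
    gcongr
  have hEq : ∀ N : ℕ, (1 / (N : ℂ) ^ 3) * ∑ n ∈ Finset.Icc 1 N, ∑ m ∈ Finset.Icc 1 N,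
          ∫ t, Complex.exp (2 * Real.pi * Complex.I *
            ((h * ((s n : ℤ) - (s m : ℤ)) : ℤ) : ℝ) * t) ∂μ = ((∫ x, F N x ∂μ : ℝ) : ℂ) := by
    intro N
    have hi : ∀ n m : ℕ, Integrable (fun t : ℝ => Complex.exp (2 * Real.pi * Complex.I *
            ((h * ((s n : ℤ) - (s m : ℤ)) : ℤ) : ℝ) * t)) μ := by
      intro n m
      refine Integrable.of_bound (by fun_prop) 1 (Eventually.of_forall fun x => ?_)
      have : (2 * Real.pi * Complex.I * ((h * ((s n : ℤ) - (s m : ℤ)) : ℤ) : ℝ) * x : ℂ) =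
        ((2 * Real.pi * ((h * ((s n : ℤ) - (s m : ℤ)) : ℤ) : ℝ) * x : ℝ) : ℂ) * Complex.I := by
        push_cast; ring
      rw [this, Complex.norm_exp_ofReal_mul_I]
    simp_rw [← integral_finsetSum _ (fun m _ => hi _ m)]
    rw [← integral_finsetSum _ (fun n _ => integrable_finsetSum _ (fun m _ => hi n m)),
      ← integral_const_mul, ← integral_complex_ofReal]
    congr 1
    ext x
    simp only [hF]
    push_cast
    rw [← Complex.mul_conj', one_div, div_eq_inv_mul]
    congr 1
    simp only [hA, map_sum, Finset.sum_mul_sum]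
    refine Finset.sum_congr rfl fun n _ => Finset.sum_congr rfl fun m _ => ?_
    rw [← fourier_neg, fourier_coe_apply, fourier_coe_apply, ← Complex.exp_add]
    congr 1
    push_cast
    ring
  simp_rw [hEq] at hsum
  have hsum' : Summable (fun N => ∫ x, F N x ∂μ) := by exact_mod_cast hsum
  have hlin : ∫⁻ x, ∑' N, ENNReal.ofReal (F N x) ∂μ ≠ ⊤ := by
    rw [lintegral_tsum (fun N => (hFc N).measurable.ennreal_ofReal.aemeasurable)]
    simp_rw [fun N => (ofReal_integral_eq_lintegral_ofReal (hFi N) (Eventually.of_forall (hF0 N))).symm]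
    exact hsum'.tsum_ofReal_ne_top
  have hae := ae_lt_top' (AEMeasurable.tsum fun N => (hFc N).measurable.ennreal_ofReal.aemeasurable) hlin
  filter_upwards [hae] with x hx
  have hsx : Summable (fun N => F N x) := by
    have := ENNReal.summable_toReal hx.ne
    simpa only [ENNReal.toReal_ofReal (hF0 _ x)] using this
  have := det_lemma (fun N => ‖A N x‖) (fun _ => norm_nonneg _) (hAstep x) (fun N => hAle N x) hsx
  rw [tendsto_zero_iff_norm_tendsto_zero]
  simpa only [norm_div, Complex.norm_natCast] using this

/-- the Davenport–Erdős–LeVeque criterion. -/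
theorem stmt3
    (μ : Measure ℝ) [IsProbabilityMeasure μ]
    (s : ℕ → ℕ) (hs : ∀ n, 0 < s n)
    (hsum : ∀ h : ℤ, h ≠ 0 →
      Summable (fun N : ℕ =>
        (1 / (N : ℂ) ^ 3) * ∑ n ∈ Finset.Icc 1 N, ∑ m ∈ Finset.Icc 1 N,
          ∫ t, Complex.exp (2 * Real.pi * Complex.I *
            ((h * ((s n : ℤ) - (s m : ℤ)) : ℤ) : ℝ) * t) ∂μ)) :
    ∀ᵐ x ∂μ, EquidistributedMod1 (fun n => (s n : ℝ) * x) := by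
  have key : ∀ᵐ x ∂μ, ∀ k : ℤ, k ≠ 0 → Tendsto (fun N : ℕ =>
      (∑ n ∈ Finset.Icc 1 N, (fourier k : C(UnitAddCircle, ℂ))
        (((s n : ℝ) * x : ℝ) : UnitAddCircle)) / (N : ℂ)) atTop (nhds 0) := by
    rw [ae_all_iff]
    intro k
    by_cases hk : k = 0
    · exact Eventually.of_forall fun x hx => absurd hk hx
    · filter_upwards [ae_exp μ s k (hsum k hk)] with x hx _
      exact hx
  filter_upwards [key] with x hx
  exact equi_of_exp _ hx
end
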